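/- arXiv:math/0012187 — 3 statements merged into one kernel-verified Lean document; each statement's English description precedes it below -/
import Mathlib

section
/- Let D be a bounded domain in ℂ and let w ∈ ∂D be a regular boundary point. Then the Azukawa metric blows up at w: A_D(p; 1) → ∞ as D ∋ p → w. -/
open MeasureTheory Filter Topology Metric Set
open scoped ENNReal NNReal

/-- Truncated circle average of an `EReal`-valued function: the average over the circle of
center `c` and radius `R` of the function truncated below at `-n`. -/
noncomputable def circleAvgTrunc (u : ℂ → EReal) (c : ℂ) (R : ℝ) (n : ℕ) : ℝ :=
  (2 * Real.pi)⁻¹ * ∫ θ in (0:ℝ)..(2 * Real.pi),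
    (max (u (c + R * Complex.exp (θ * Complex.I))) (-(n : ℝ) : EReal)).toReal

/-- `u` is subharmonic on `Ω ⊆ ℂ`: values in `[-∞, ∞)`, upper semicontinuous on `Ω`, and for
every closed disc contained in `Ω` the value at the center is at most the mean over the
boundary circle (in the extended sense, via decreasing truncations). -/
def SubharmonicOn (u : ℂ → EReal) (Ω : Set ℂ) : Prop :=
  UpperSemicontinuousOn u Ω ∧ (∀ z ∈ Ω, u z < ⊤) ∧
    ∀ c ∈ Ω, ∀ R : ℝ, 0 < R → Metric.closedBall c R ⊆ Ω →
      u c ≤ ⨅ n : ℕ, (circleAvgTrunc u c R n : EReal)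

/-- `u` is plurisubharmonic on `Ω`: values in `[-∞, ∞)`, upper semicontinuous on `Ω`, and its
restriction to every complex line is subharmonic. -/
def PlurisubharmonicOn {E : Type*} [NormedAddCommGroup E] [NormedSpace ℂ E]
    (u : E → EReal) (Ω : Set E) : Prop :=
  UpperSemicontinuousOn u Ω ∧ (∀ z ∈ Ω, u z < ⊤) ∧
    ∀ a b : E, SubharmonicOn (fun lam : ℂ => u (a + lam • b)) {lam : ℂ | a + lam • b ∈ Ω}

/-- A set `P ⊆ ℂ` is polar. -/
def PolarSet (P : Set ℂ) : Prop :=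
  ∀ z ∈ P, ∃ U : Set ℂ, IsOpen U ∧ IsConnected U ∧ z ∈ U ∧
    ∃ u : ℂ → EReal, SubharmonicOn u U ∧ (∃ x ∈ U, u x ≠ ⊥) ∧ ∀ x ∈ P ∩ U, u x = ⊥

/-- A set `P ⊆ ℂⁿ` is pluripolar. -/
def PluripolarSet {E : Type*} [NormedAddCommGroup E] [NormedSpace ℂ E] (P : Set E) : Prop :=
  ∀ z ∈ P, ∃ U : Set E, IsOpen U ∧ IsConnected U ∧ z ∈ U ∧
    ∃ u : E → EReal, PlurisubharmonicOn u U ∧ (∃ x ∈ U, u x ≠ ⊥) ∧ ∀ x ∈ P ∩ U, u x = ⊥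

/-- A domain `D` is pseudoconvex if `z ↦ -log dist(z, ∂D)` is plurisubharmonic on `D`. -/
def IsPseudoconvex {E : Type*} [NormedAddCommGroup E] [NormedSpace ℂ E] (D : Set E) : Prop :=
  PlurisubharmonicOn (fun z => ((- Real.log (Metric.infDist z Dᶜ) : ℝ) : EReal)) D

/-- The square-integrable holomorphic functions on an open set `Ω`. -/
def L2h {E : Type*} [NormedAddCommGroup E] [NormedSpace ℂ E] [MeasureSpace E]
    (Ω : Set E) : Set (E → ℂ) :=
  {f | DifferentiableOn ℂ f Ω ∧ (∫⁻ z in Ω, (‖f z‖₊ : ℝ≥0∞) ^ 2) < ⊤}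

/-- The Bergman kernel of `Ω` on the diagonal,
`K_Ω(z) = sup { |f(z)|²/‖f‖²_{L²(Ω)} : f ∈ L²ₕ(Ω), f ≢ 0 }`. -/
noncomputable def bergmanKernel {E : Type*} [NormedAddCommGroup E] [NormedSpace ℂ E]
    [MeasureSpace E] (Ω : Set E) (z : E) : ℝ≥0∞ :=
  ⨆ (f : E → ℂ) (_ : f ∈ L2h Ω) (_ : ∃ w ∈ Ω, f w ≠ 0),
    (‖f z‖₊ : ℝ≥0∞) ^ 2 / ∫⁻ w in Ω, (‖f w‖₊ : ℝ≥0∞) ^ 2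

/-- `D` is an `L²ₕ`-domain of holomorphy: there are no domains `D₀, D₁` with
`∅ ≠ D₀ ⊆ D₁ ∩ D`, `D₁ ⊄ D`, such that every `f ∈ L²ₕ(D)` extends holomorphically to `D₁`
(agreeing with `f` on `D₀`). -/
def IsL2hDomainOfHolomorphy {E : Type*} [NormedAddCommGroup E] [NormedSpace ℂ E]
    [MeasureSpace E] (D : Set E) : Prop :=
  ¬ ∃ D0 D1 : Set E, IsOpen D0 ∧ IsConnected D0 ∧ IsOpen D1 ∧ IsConnected D1 ∧
      D0 ⊆ D1 ∩ D ∧ ¬ (D1 ⊆ D) ∧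
      ∀ f ∈ L2h D, ∃ F : E → ℂ, DifferentiableOn ℂ F D1 ∧ Set.EqOn F f D0

/-- `w` is a regular boundary point of the domain `D ⊆ ℂ`. -/
def RegularBoundaryPt (D : Set ℂ) (w : ℂ) : Prop :=
  ∃ U : Set ℂ, IsOpen U ∧ w ∈ U ∧ ∃ u : ℂ → EReal, SubharmonicOn u (U ∩ D) ∧
    (∀ z ∈ U ∩ D, u z < 0) ∧ Tendsto u (𝓝[U ∩ D] w) (𝓝 (0 : EReal))

/-- The (pluricomplex) Green function of a domain `D ⊆ ℂ` with logarithmic pole at `p`. -/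
noncomputable def greenFn (D : Set ℂ) (p z : ℂ) : EReal :=
  sSup {v : EReal | ∃ u : ℂ → EReal, SubharmonicOn u D ∧ (∀ x ∈ D, u x < 0) ∧
    (∃ C : ℝ, ∀ᶠ x in 𝓝 p, u x ≤ ((Real.log ‖x - p‖ + C : ℝ) : EReal)) ∧ v = u z}

/-- A polydisc in `ℂⁿ` with centre `c` and multiradius `r`. -/
def polydisc {n : ℕ} (c : Fin n → ℂ) (r : Fin n → ℝ) : Set (Fin n → ℂ) :=
  {z | ∀ i, ‖z i - c i‖ < r i}

/-- The Azukawa metric of a domain `D ⊆ ℂ` at the vector `X = 1`: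
`A_D(p;1) = limsup_{λ→0} exp(g_D(p, p+λ)) / |λ|`. -/
noncomputable def azukawaOne (D : Set ℂ) (p : ℂ) : ℝ≥0∞ :=
  Filter.limsup
    (fun lam : ℂ => EReal.exp (greenFn D p (p + lam)) / ENNReal.ofReal ‖lam‖)
    (𝓝[≠] (0 : ℂ))


lemma az_circInt {h : ℂ → ℝ} {c : ℂ} {R B : ℝ}
    (hu : UpperSemicontinuousOn h (sphere c |R|)) (hB : ∀ z ∈ sphere c |R|, B ≤ h z) :
    CircleIntegrable h c R := by
  have hm : ∀ θ, circleMap c R θ ∈ sphere c |R| := fun θ => circleMap_mem_sphere' c R θ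
  have h1 : UpperSemicontinuous (fun θ : ℝ => h (circleMap c R θ)) := by
    rw [← upperSemicontinuousOn_univ_iff]
    exact hu.comp (continuous_circleMap c R).continuousOn (fun θ _ => hm θ)
  obtain ⟨M, hM⟩ := hu.bddAbove_of_isCompact (isCompact_sphere c |R|)
  have h2 : ∀ θ, ‖h (circleMap c R θ)‖ ≤ |M| + |B| := by
    intro θ
    have a1 : h (circleMap c R θ) ≤ M := hM ⟨_, hm θ, rfl⟩
    have a2 := hB _ (hm θ)
    rw [Real.norm_eq_abs, abs_le]
    constructor
    · have := neg_abs_le B; have := abs_nonneg M; linarith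
    · have := le_abs_self M; have := abs_nonneg B; linarith
  unfold CircleIntegrable
  rw [intervalIntegrable_iff]
  exact Measure.integrableOn_of_bounded (M := |M| + |B|) (by simp [ENNReal.mul_eq_top]) h1.measurable.aestronglyMeasurable
    (Eventually.of_forall h2)

lemma az_max {k : ℂ → ℝ} {c : ℂ} {R : ℝ}
    (hu : UpperSemicontinuousOn k (closedBall c R))
    (hs : ∀ z ∈ ball c R, ∃ r0 > 0, ∀ r, 0 < r → r < r0 →
      CircleIntegrable k z r ∧ k z ≤ Real.circleAverage k z r)
    (hb : ∀ z ∈ sphere c R, k z ≤ 0) : ∀ z ∈ closedBall c R, k z ≤ 0 := by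
  intro z hz
  have key : ∀ η > 0, k z + η * (‖z - c‖ ^ 2 - R ^ 2) ≤ 0 := by
    intro η hη
    set q : ℂ → ℝ := fun z => η * (‖z - c‖ ^ 2 - R ^ 2) with hq
    have hqc : Continuous q := by fun_prop
    obtain ⟨z0, hz0, hmax⟩ := UpperSemicontinuousOn.exists_isMaxOn ⟨z, hz⟩ (isCompact_closedBall c R)
      (hu.add (hqc.continuousOn.upperSemicontinuousOn))
    have hle : k z + q z ≤ k z0 + q z0 := hmax hz
    refine hle.trans ?_
    by_cases h0 : ‖z0 - c‖ = R
    · have := hb z0 (by simpa [dist_eq_norm] using h0)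
      simp only [hq, h0]; linarith
    · exfalso
      have hz0' : z0 ∈ ball c R := by
        simp only [mem_closedBall, mem_ball, dist_eq_norm] at hz0 ⊢
        exact lt_of_le_of_ne hz0 h0
      obtain ⟨r0, hr0, hr⟩ := hs z0 hz0'
      obtain ⟨e, he, hbe⟩ := Metric.isOpen_iff.1 isOpen_ball z0 hz0'
      obtain ⟨r, hrp, hrl⟩ := exists_between (lt_min hr0 he)
      obtain ⟨hi, hav⟩ := hr r hrp (hrl.trans_le (min_le_left _ _))
      have hqi : CircleIntegrable q z0 r := hqc.continuousOn.circleIntegrable'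
      have hsph : ∀ x ∈ sphere z0 |r|, q x = η * (‖z0 - c‖ ^ 2 - R ^ 2 + r ^ 2) +
          (2 * η) * ((starRingEnd ℂ (z0 - c)) * (x - z0)).re := by
        intro x hx
        have hx' : ‖x - z0‖ ^ 2 = r ^ 2 := by
          rw [mem_sphere, dist_eq_norm] at hx
          rw [hx, sq_abs]
        have : ‖x - c‖ ^ 2 = ‖z0 - c‖ ^ 2 + ‖x - z0‖ ^ 2
            + 2 * ((starRingEnd ℂ (z0 - c)) * (x - z0)).re := by
          simp only [← Complex.normSq_eq_norm_sq, Complex.normSq_apply]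
          simp; ring
        simp only [hq, this, hx']; ring
      have hlin : Real.circleAverage (fun x => ((starRingEnd ℂ (z0 - c)) * (x - z0)).re) z0 r = 0 := by
        have hh : InnerProductSpace.HarmonicOnNhd
            (fun x => ((starRingEnd ℂ (z0 - c)) * (x - z0)).re) (closedBall z0 |r|) := by
          intro x _
          have : AnalyticAt ℂ (fun x => (starRingEnd ℂ (z0 - c)) * (x - z0)) x := by fun_prop
          exact this.harmonicAt_re
        rw [InnerProductSpace.HarmonicOnNhd.circleAverage_eq hh]; simp
      have hqa : Real.circleAverage q z0 r = q z0 + η * r ^ 2 := by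
        rw [Real.circleAverage_congr_sphere (f₂ := fun x => η * (‖z0 - c‖ ^ 2 - R ^ 2 + r ^ 2) +
          (2 * η) • ((starRingEnd ℂ (z0 - c)) * (x - z0)).re) hsph]
        rw [Real.circleAverage_fun_add (circleIntegrable_const _ _ _)
          (ContinuousOn.circleIntegrable' (by fun_prop)), Real.circleAverage_const,
          Real.circleAverage_fun_smul, hlin]
        simp only [hq]; simp; ring
      have hsum := Real.circleAverage_add hi hqi
      have hub : Real.circleAverage (k + q) z0 r ≤ k z0 + q z0 := by
        apply Real.circleAverage_mono_on_of_le_circle (hi.add hqi)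
        intro x hx
        have : x ∈ closedBall c R := by
          apply ball_subset_closedBall
          apply hbe
          rw [mem_sphere, abs_of_pos hrp] at hx
          rw [mem_ball, hx]; exact hrl.trans_le (min_le_right _ _)
        exact hmax this
      have : 0 < η * r ^ 2 := by positivity
      linarith
  by_contra hcon
  push Not at hcon
  have hn : ‖z - c‖ ^ 2 - R ^ 2 ≤ 0 := by
    simp only [mem_closedBall, dist_eq_norm] at hz
    nlinarith [norm_nonneg (z - c)]
  have h1 := key (k z / (2 * (R ^ 2 - ‖z - c‖ ^ 2 + 1))) (by
    apply div_pos hcon; linarith)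
  have hpos : 0 < R ^ 2 - ‖z - c‖ ^ 2 + 1 := by linarith
  have : k z / (2 * (R ^ 2 - ‖z - c‖ ^ 2 + 1)) * (‖z - c‖ ^ 2 - R ^ 2) ≥ - (k z / 2) := by
    rw [ge_iff_le, neg_le_iff_add_nonneg, div_mul_eq_mul_div, div_add_div _ _ (by positivity) (by positivity)]
    apply div_nonneg _ (by positivity)
    nlinarith
  linarith

noncomputable def azP (g : ℂ → ℝ) (R : ℝ) (z : ℂ) : ℝ :=
  Real.circleAverage (poissonKernel 0 z • g) 0 R

noncomputable def azH (g : ℂ → ℝ) (R : ℝ) (z : ℂ) : ℂ :=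
  Real.circleAverage (fun ζ ↦ herglotzRieszKernel 0 z ζ • (g ζ : ℂ)) 0 R

lemma azH_re {g : ℂ → ℝ} {R : ℝ} (hg : CircleIntegrable g 0 R) {z : ℂ} (hz : z ∈ ball (0 : ℂ) R) :
    (azH g R z).re = azP g R z := by
  rw [azH, azP, re_circleAverage_herglotzRieszKernel_smul hg hz, poissonKernel_eq_re_herglotzRieszKernel]

lemma azH_an {g : ℂ → ℝ} {R : ℝ} (hg : CircleIntegrable g 0 R) : AnalyticOnNhd ℂ (azH g R) (ball 0 R) := by
  apply analyticOnNhd_circleAverage_herglotzRieszKernel_smul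
  simp only [CircleIntegrable, intervalIntegrable_iff] at hg ⊢
  exact Complex.ofRealCLM.integrable_comp hg

lemma azP_cont {g : ℂ → ℝ} {R : ℝ} (hg : CircleIntegrable g 0 R) : ContinuousOn (azP g R) (ball 0 R) := by
  have : ContinuousOn (fun z => (azH g R z).re) (ball 0 R) :=
    Complex.continuous_re.comp_continuousOn (azH_an hg).continuousOn
  exact this.congr (fun z hz => (azH_re hg hz).symm)

lemma azP_mean {g : ℂ → ℝ} {R : ℝ} (hg : CircleIntegrable g 0 R) {z : ℂ} {r : ℝ}
    (hz : closedBall z |r| ⊆ ball (0 : ℂ) R) : Real.circleAverage (azP g R) z r = azP g R z := by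
  have hz0 : z ∈ ball (0 : ℂ) R := hz (mem_closedBall_self (abs_nonneg r))
  have hh : InnerProductSpace.HarmonicOnNhd (fun z => (azH g R z).re) (closedBall z |r|) :=
    fun x hx => (azH_an hg x (hz hx)).harmonicAt_re
  rw [← azH_re hg hz0, ← InnerProductSpace.HarmonicOnNhd.circleAverage_eq hh]
  apply Real.circleAverage_congr_sphere
  intro x hx
  exact (azH_re hg (hz (sphere_subset_closedBall hx))).symm

lemma az_pk_cont {R : ℝ} {z : ℂ} (hz : z ∈ ball (0 : ℂ) R) :
    ContinuousOn (poissonKernel 0 z) (sphere 0 |R|) := by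
  rw [poissonKernel_eq_re_herglotzRieszKernel]
  exact Complex.continuous_re.comp_continuousOn (continuousOn_herglotzRieszKernel_sphere hz)

lemma az_pk_one {R : ℝ} {z : ℂ} (hz : z ∈ ball (0 : ℂ) R) :
    Real.circleAverage (poissonKernel 0 z) 0 R = 1 := by
  have := InnerProductSpace.HarmonicOnNhd.circleAverage_poissonKernel_smul (f := fun _ => (1:ℝ)) (c := 0) (R := R) (w := z)
    (fun x _ => InnerProductSpace.harmonicAt_const 1) hz
  rw [← this]
  congr 1
  ext x; simp

lemma azP_zero {g : ℂ → ℝ} {R : ℝ} (hR : 0 < R) : azP g R 0 = Real.circleAverage g 0 R := by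
  apply Real.circleAverage_congr_sphere
  intro x hx
  have : ‖x‖ = R := by simpa [abs_of_pos hR] using hx
  simp [poissonKernel_def, this, hR.ne']

lemma az_smul_int {g k : ℂ → ℝ} {R : ℝ} (hg : CircleIntegrable g 0 R)
    (hk : ContinuousOn k (sphere 0 |R|)) : CircleIntegrable (k • g) 0 R := by
  unfold CircleIntegrable at *
  have : ContinuousOn (fun θ => k (circleMap 0 R θ)) (uIcc 0 (2 * Real.pi)) :=
    hk.comp (continuous_circleMap 0 R).continuousOn (fun θ _ => circleMap_mem_sphere' 0 R θ)
  exact hg.continuousOn_mul this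

lemma az_bdry {g : ℂ → ℝ} {R B t t' δ : ℝ} {ζ : ℂ} (hR : 0 < R) (hg : CircleIntegrable g 0 R)
    (hB : ∀ x ∈ sphere (0 : ℂ) R, B ≤ g x) (hζ : ζ ∈ sphere (0 : ℂ) R) (hδ : 0 < δ)
    (ht : ∀ x ∈ sphere (0 : ℂ) R, dist x ζ < δ → t ≤ g x) (htt : t' < t) :
    ∀ᶠ z in 𝓝[ball 0 R] ζ, t' < azP g R z := by
  have hRR : |R| = R := abs_of_pos hR
  have h1 : ∀ z ∈ ball (0 : ℂ) R, dist z ζ < δ / 2 →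
      t - (|B| + |t|) * (R ^ 2 - ‖z‖ ^ 2) / (δ / 2) ^ 2 ≤ azP g R z := by
    intro z hz hzζ
    have hz' : ‖z‖ < R := by simpa using hz
    set A := (|B| + |t|) * (R ^ 2 - ‖z‖ ^ 2) / (δ / 2) ^ 2 with hA
    have hA0 : 0 ≤ R ^ 2 - ‖z‖ ^ 2 := by nlinarith [norm_nonneg z]
    have hkc := az_pk_cont hz
    have i1 : CircleIntegrable (poissonKernel 0 z) 0 R := hkc.circleIntegrable'
    have i2 := az_smul_int hg hkc
    have i3 : CircleIntegrable (fun x => t • poissonKernel 0 z x) 0 R :=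
      ContinuousOn.circleIntegrable' (hkc.const_smul t)
    have e1 : Real.circleAverage (fun x => t • poissonKernel 0 z x - A) 0 R = t - A := by
      rw [Real.circleAverage_fun_sub i3 (circleIntegrable_const _ _ _), Real.circleAverage_fun_smul,
        az_pk_one hz, Real.circleAverage_const]
      simp
    rw [← e1]
    apply Real.circleAverage_mono (i3.sub (circleIntegrable_const _ _ _)) i2
    intro x hx
    rw [hRR] at hx
    have hx' : ‖x‖ = R := by simpa using hx
    change t * poissonKernel 0 z x - A ≤ poissonKernel 0 z x * g x
    have hk0 : 0 ≤ poissonKernel 0 z x := by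
      rw [poissonKernel_def]; simp only [sub_zero, hx']; positivity
    have hA1 : 0 ≤ A := by rw [hA]; positivity
    by_cases hxd : dist x ζ < δ
    · have := ht x hx hxd
      nlinarith
    · have hd : δ / 2 ≤ ‖x - z‖ := by
        have := dist_triangle x z ζ
        rw [← dist_eq_norm]; linarith
      have hk1 : poissonKernel 0 z x ≤ (R ^ 2 - ‖z‖ ^ 2) / (δ / 2) ^ 2 := by
        rw [poissonKernel_def]; simp only [sub_zero, hx']
        gcongr
      have hgt : -(|B| + |t|) ≤ g x - t := by
        have := hB x hx; have := neg_abs_le B; have := le_abs_self t; linarith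
      have hAe : A = (|B| + |t|) * ((R ^ 2 - ‖z‖ ^ 2) / (δ / 2) ^ 2) := by rw [hA]; ring
      have hC : 0 ≤ |B| + |t| := by positivity
      nlinarith [mul_le_mul_of_nonneg_left hgt hk0, mul_le_mul_of_nonneg_left hk1 hC]
  have h2 : Tendsto (fun z : ℂ => t - (|B| + |t|) * (R ^ 2 - ‖z‖ ^ 2) / (δ / 2) ^ 2) (𝓝[ball 0 R] ζ) (𝓝 t) := by
    have : Continuous (fun z : ℂ => t - (|B| + |t|) * (R ^ 2 - ‖z‖ ^ 2) / (δ / 2) ^ 2) := by fun_prop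
    have h3 := this.tendsto ζ
    have hn : ‖ζ‖ = R := by simpa using hζ
    simp only [hn, sub_self, mul_zero, zero_div, sub_zero] at h3
    exact h3.mono_left nhdsWithin_le_nhds
  filter_upwards [h2.eventually_const_lt htt, self_mem_nhdsWithin,
    mem_nhdsWithin_of_mem_nhds (ball_mem_nhds ζ (half_pos hδ))] with z hz1 hz2 hz3
  exact hz1.trans_le (h1 z hz2 hz3)

lemma az_vitali {f : ℂ → ℝ} {R B ε : ℝ} (hR : 0 < R) (hf : UpperSemicontinuousOn f (sphere 0 R))
    (hB : ∀ x ∈ sphere (0 : ℂ) R, B ≤ f x) (hε : 0 < ε) :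
    ∃ g : ℂ → ℝ, LowerSemicontinuous g ∧ CircleIntegrable g 0 R ∧
      (∀ x ∈ sphere (0 : ℂ) R, f x < g x) ∧
      Real.circleAverage g 0 R ≤ Real.circleAverage f 0 R + ε := by
  classical
  have hRR : |R| = R := abs_of_pos hR
  obtain ⟨M0, hM0⟩ := hf.bddAbove_of_isCompact (isCompact_sphere 0 R)
  set M := max M0 B with hM
  set F : ℂ → ℝ := fun z => if z ∈ sphere (0 : ℂ) R then f z else B with hF
  have hFM : ∀ z, F z ≤ M := by
    intro z
    simp only [hF]; split_ifs with h
    · exact (hM0 ⟨z, h, rfl⟩).trans (le_max_left _ _)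
    · exact le_max_right _ _
  have hFB : ∀ z, B ≤ F z := by
    intro z
    simp only [hF]; split_ifs with h
    · exact hB z h
    · exact le_rfl
  have hFu : UpperSemicontinuous F := by
    intro z y hy
    by_cases h : z ∈ sphere (0 : ℂ) R
    · have h1 : f z < y := by simpa only [hF, if_pos h] using hy
      have h2 := hf z h y h1
      rw [eventually_nhdsWithin_iff] at h2
      filter_upwards [h2] with x hx
      simp only [hF]; split_ifs with h'
      · exact hx h'
      · exact (hB z h).trans_lt h1
    · filter_upwards [isClosed_sphere.isOpen_compl.mem_nhds h] with x hx
      have : F x = F z := by simp only [hF]; rw [if_neg h, if_neg hx]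
      rw [this]; exact hy
  set μ : Measure ℂ := Measure.map (circleMap 0 R) (volume.restrict (Ioc 0 (2 * Real.pi))) with hμ
  have hcm : AEMeasurable (circleMap 0 R) (volume.restrict (Ioc 0 (2 * Real.pi))) :=
    (continuous_circleMap 0 R).measurable.aemeasurable
  have : IsFiniteMeasure μ := by
    have : IsFiniteMeasure ((volume : Measure ℝ).restrict (Ioc 0 (2 * Real.pi))) :=
      ⟨by simp [ENNReal.mul_lt_top_iff]⟩
    exact Measure.isFiniteMeasure_map _ _
  have hint : ∀ φ : ℂ → ℝ, Measurable φ → ∫ x, φ x ∂μ = (2 * Real.pi) * Real.circleAverage φ 0 R := by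
    intro φ hφ
    rw [hμ, integral_map hcm hφ.aestronglyMeasurable, Real.circleAverage,
      intervalIntegral.integral_of_le Real.two_pi_pos.le, smul_eq_mul, ← mul_assoc,
      mul_inv_cancel₀ Real.two_pi_pos.ne', one_mul]
  have hinte : ∀ (φ : ℂ → ℝ) (C : ℝ), Measurable φ → (∀ x, |φ x| ≤ C) → Integrable φ μ := by
    intro φ C hφ hC
    exact Integrable.of_bound hφ.aestronglyMeasurable C (Eventually.of_forall hC)
  have hFi : Integrable F μ := by
    apply hinte F (|M| + |B|) hFu.measurable
    intro x
    have := hFM x; have := hFB x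
    rw [abs_le]
    have := neg_abs_le B; have := abs_nonneg M; have := le_abs_self M; have := abs_nonneg B
    constructor <;> linarith
  obtain ⟨g, hfg, hgl, hgi, hgt, hgI⟩ := exists_lt_lowerSemicontinuous_integral_lt F hFi
    (ε := 2 * Real.pi * ε) (by have := Real.pi_pos; positivity)
  set g' : ℂ → ℝ := fun z => (min (g z) ((M + 1 : ℝ) : EReal)).toReal with hg'
  have hco : ∀ z, ((g' z : ℝ) : EReal) = min (g z) ((M + 1 : ℝ) : EReal) := by
    intro z
    apply EReal.coe_toReal
    · exact ((min_le_right _ _).trans_lt (EReal.coe_lt_top _)).ne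
    · exact (lt_min ((EReal.bot_lt_coe _).trans (hfg z)) (EReal.bot_lt_coe _)).ne'
  have hFg : ∀ z, F z < g' z := by
    intro z
    rw [← EReal.coe_lt_coe_iff, hco]
    refine lt_min (hfg z) ?_
    rw [EReal.coe_lt_coe_iff]; linarith [hFM z]
  have hgM : ∀ z, g' z ≤ M + 1 := by
    intro z
    rw [← EReal.coe_le_coe_iff, hco]; exact min_le_right _ _
  have hg'l : LowerSemicontinuous g' := by
    intro z y hy
    rw [gt_iff_lt, ← EReal.coe_lt_coe_iff, hco, lt_min_iff] at hy
    filter_upwards [hgl z _ hy.1] with x hx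
    rw [gt_iff_lt, ← EReal.coe_lt_coe_iff, hco]
    exact lt_min hx hy.2
  have hg'm := hg'l.measurable
  have hg'b : ∀ x, |g' x| ≤ |M + 1| + |B| := by
    intro x
    have := hgM x; have := hFB x; have := hFg x
    rw [abs_le]
    have := neg_abs_le B; have := abs_nonneg (M + 1); have := le_abs_self (M + 1); have := abs_nonneg B
    constructor <;> linarith
  refine ⟨g', hg'l, ?_, ?_, ?_⟩
  · unfold CircleIntegrable
    rw [intervalIntegrable_iff]
    exact Measure.integrableOn_of_bounded (M := |M + 1| + |B|) (by simp [ENNReal.mul_eq_top])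
      (hg'm.comp (continuous_circleMap 0 R).measurable).aestronglyMeasurable
      (Eventually.of_forall fun θ => hg'b _)
  · intro x hx
    have := hFg x
    simp only [hF, if_pos hx] at this
    exact this
  · have h1 : ∫ x, g' x ∂μ ≤ ∫ x, (g x).toReal ∂μ := by
      apply integral_mono_ae (hinte g' _ hg'm hg'b) hgi
      filter_upwards [hgt] with x hx
      have hxb : g x ≠ ⊥ := ((EReal.bot_lt_coe _).trans (hfg x)).ne'
      rw [← EReal.coe_le_coe_iff, hco, EReal.coe_toReal hx.ne hxb]
      exact min_le_left _ _
    have h2 : ∫ x, g' x ∂μ ≤ ∫ x, F x ∂μ + 2 * Real.pi * ε := by linarith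
    rw [hint g' hg'm, hint F hFu.measurable] at h2
    have h3 : Real.circleAverage F 0 R = Real.circleAverage f 0 R := by
      apply Real.circleAverage_congr_sphere
      intro x hx
      rw [hRR] at hx
      simp only [hF, if_pos hx]
    rw [h3] at h2
    have := Real.two_pi_pos
    by_contra hcon
    push Not at hcon
    nlinarith

lemma az_glob0 {h : ℂ → ℝ} {R B : ℝ} (hR : 0 < R) (hu : UpperSemicontinuousOn h (closedBall 0 R))
    (hB : ∀ x ∈ closedBall (0 : ℂ) R, B ≤ h x)
    (hs : ∀ z ∈ ball (0 : ℂ) R, ∃ r0 > 0, ∀ r, 0 < r → r < r0 → h z ≤ Real.circleAverage h z r) :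
    h 0 ≤ Real.circleAverage h 0 R := by
  classical
  apply le_of_forall_pos_le_add
  intro ε hε
  obtain ⟨g, hgl, hgi, hfg, hgI⟩ := az_vitali hR (hu.mono sphere_subset_closedBall)
    (fun x hx => hB x (sphere_subset_closedBall hx)) hε
  set k : ℂ → ℝ := fun z => if z ∈ ball (0 : ℂ) R then h z - azP g R z else 0 with hk
  have hPc := azP_cont hgi
  have h0 : (0 : ℂ) ∈ ball (0 : ℂ) R := by simpa using hR
  have hres := az_max (k := k) (c := 0) (R := R) ?_ ?_ ?_ 0 (ball_subset_closedBall h0)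
  · simp only [hk, if_pos h0] at hres
    rw [azP_zero hR] at hres
    linarith
  · intro z hz y hy
    by_cases hzb : z ∈ ball (0 : ℂ) R
    · simp only [hk, if_pos hzb] at hy
      have hc : ContinuousAt (azP g R) z := hPc.continuousAt (isOpen_ball.mem_nhds hzb)
      obtain ⟨e, he, he2⟩ : ∃ e > 0, h z - azP g R z + 2 * e < y := ⟨(y - (h z - azP g R z)) / 3, by linarith, by linarith⟩
      filter_upwards [hu z hz (h z + e) (by linarith), mem_nhdsWithin_of_mem_nhds (isOpen_ball.mem_nhds hzb),
        mem_nhdsWithin_of_mem_nhds (hc.eventually_const_lt (show azP g R z - e < azP g R z by linarith))]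
        with x h1 h2 h3
      simp only [hk, if_pos h2]
      linarith
    · have hzs : z ∈ sphere (0 : ℂ) R := by
        simp only [mem_closedBall, mem_ball, mem_sphere] at *
        exact le_antisymm hz (not_lt.1 hzb)
      simp only [hk, if_neg hzb] at hy
      obtain ⟨t, ht1, ht2⟩ := exists_between (hfg z hzs)
      obtain ⟨t', ht3, ht4⟩ := exists_between ht1
      obtain ⟨δ, hδ, hball⟩ := Metric.eventually_nhds_iff.1 (hgl z t ht2)
      have hb := az_bdry (B := B) hR hgi (fun x hx => (hB x (sphere_subset_closedBall hx)).trans (hfg x hx).le) hzs hδ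
        (fun x _ hx => (hball hx).le) ht4
      rw [eventually_nhdsWithin_iff] at hb
      filter_upwards [hu z hz t' ht3, mem_nhdsWithin_of_mem_nhds hb] with x h1 h2
      simp only [hk]; split_ifs with h
      · have := h2 h; linarith
      · exact hy
  · intro z hz
    obtain ⟨r0, hr0, hr⟩ := hs z hz
    obtain ⟨e, he, hbe⟩ := Metric.isOpen_iff.1 isOpen_ball z hz
    refine ⟨min r0 e, lt_min hr0 he, fun r hrp hrl => ?_⟩
    have hcb : closedBall z |r| ⊆ ball (0 : ℂ) R := by
      rw [abs_of_pos hrp]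
      exact (closedBall_subset_ball (hrl.trans_le (min_le_right _ _))).trans hbe
    have i1 : CircleIntegrable h z r := az_circInt (B := B)
      (hu.mono (sphere_subset_closedBall.trans (hcb.trans ball_subset_closedBall)))
      (fun x hx => hB x (ball_subset_closedBall (hcb (sphere_subset_closedBall hx))))
    have i2 : CircleIntegrable (azP g R) z r :=
      ContinuousOn.circleIntegrable' (hPc.mono (sphere_subset_closedBall.trans hcb))
    have heq : EqOn (fun x => h x - azP g R x) k (sphere z |r|) := by
      intro x hx
      simp only [hk, if_pos (hcb (sphere_subset_closedBall hx))]
    have i3 : CircleIntegrable (fun x => h x - azP g R x) z r := i1.sub i2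
    refine ⟨?_, ?_⟩
    · refine (IntervalIntegrable.congr (fun θ _ => ?_)) i3
      exact heq (circleMap_mem_sphere' z r θ)
    · rw [← Real.circleAverage_congr_sphere heq, Real.circleAverage_fun_sub i1 i2, azP_mean hgi hcb]
      simp only [hk, if_pos hz]
      linarith [hr r hrp (hrl.trans_le (min_le_left _ _))]
  · intro z hz
    have : z ∉ ball (0 : ℂ) R := by
      simp only [mem_sphere, mem_ball] at *; linarith
    simp only [hk, if_neg this]; exact le_rfl

lemma az_glob {h : ℂ → ℝ} {c : ℂ} {R B : ℝ} (hR : 0 < R) (hu : UpperSemicontinuousOn h (closedBall c R))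
    (hB : ∀ x ∈ closedBall c R, B ≤ h x)
    (hs : ∀ z ∈ ball c R, ∃ r0 > 0, ∀ r, 0 < r → r < r0 → h z ≤ Real.circleAverage h z r) :
    h c ≤ Real.circleAverage h c R := by
  have hm : ∀ x : ℂ, ∀ r : ℝ, x ∈ closedBall (0 : ℂ) r ↔ x + c ∈ closedBall c r := by
    intro x r; simp [dist_eq_norm]
  have := az_glob0 (h := fun z => h (z + c)) (B := B) hR
    (hu.comp (g := fun z => z + c) (by fun_prop) (fun x hx => (hm x R).1 hx))
    (fun x hx => hB _ ((hm x R).1 hx)) ?_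
  · rw [Real.circleAverage_map_add_const] at this
    simpa using this
  · intro z hz
    obtain ⟨r0, hr0, hr⟩ := hs (z + c) (by simpa [dist_eq_norm] using hz)
    refine ⟨r0, hr0, fun r h1 h2 => (hr r h1 h2).trans_eq ?_⟩
    simp only [Real.circleAverage, circleMap]
    congr 2
    ext θ
    congr 1; ring

lemma az_trunc_coe {u : ℂ → EReal} {z : ℂ} (a : ℝ) (h : u z < ⊤) :
    (((max (u z) (a : EReal)).toReal : ℝ) : EReal) = max (u z) (a : EReal) := by
  apply EReal.coe_toReal
  · exact (max_lt h (EReal.coe_lt_top _)).ne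
  · exact ((EReal.bot_lt_coe a).trans_le (le_max_right _ _)).ne'

lemma az_trunc_usc {u : ℂ → EReal} {S : Set ℂ} (a : ℝ) (hu : UpperSemicontinuousOn u S)
    (h : ∀ z ∈ S, u z < ⊤) :
    UpperSemicontinuousOn (fun z => (max (u z) (a : EReal)).toReal) S := by
  intro z hz y hy
  have hy' : (max (u z) (a : EReal)).toReal < y := hy
  rw [← EReal.coe_lt_coe_iff, az_trunc_coe a (h z hz), max_lt_iff] at hy'
  filter_upwards [hu z hz _ hy'.1, self_mem_nhdsWithin] with x hx hxS
  change (max (u x) (a : EReal)).toReal < y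
  rw [← EReal.coe_lt_coe_iff, az_trunc_coe a (h x hxS)]
  exact max_lt hx hy'.2

lemma az_trunc_le {u : ℂ → EReal} {z : ℂ} (a : ℝ) (h : u z < ⊤) :
    a ≤ (max (u z) (a : EReal)).toReal := by
  rw [← EReal.coe_le_coe_iff, az_trunc_coe a h]; exact le_max_right _ _

lemma az_reg {D : Set ℂ} {w : ℂ} (hreg : RegularBoundaryPt D w) :
    ∃ U : Set ℂ, IsOpen U ∧ w ∈ U ∧ ∃ β : ℂ → ℝ, UpperSemicontinuousOn β (U ∩ D) ∧
      (∀ z ∈ U ∩ D, -1 ≤ β z) ∧ (∀ z ∈ U ∩ D, β z < 0) ∧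
      (∀ c R, 0 < R → closedBall c R ⊆ U ∩ D → β c ≤ Real.circleAverage β c R) ∧
      Tendsto β (𝓝[U ∩ D] w) (𝓝 0) := by
  obtain ⟨U, hU, hwU, u, ⟨hus, hut, hum⟩, hneg, hlim⟩ := hreg
  refine ⟨U, hU, hwU, fun z => (max (u z) ((-1 : ℝ) : EReal)).toReal, az_trunc_usc _ hus hut,
    fun z hz => az_trunc_le _ (hut z hz), ?_, ?_, ?_⟩
  · intro z hz
    rw [← EReal.coe_lt_coe_iff, az_trunc_coe _ (hut z hz)]
    refine max_lt (by simpa using hneg z hz) ?_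
    rw [EReal.coe_lt_coe_iff]; norm_num
  · intro c R hR hcR
    have hc : c ∈ U ∩ D := hcR (mem_closedBall_self hR.le)
    have hsp : sphere c |R| ⊆ U ∩ D := by
      rw [abs_of_pos hR]; exact sphere_subset_closedBall.trans hcR
    have h1 := (hum c hc R hR hcR).trans (iInf_le _ 1)
    have h2 : circleAvgTrunc u c R 1 =
        Real.circleAverage (fun z => (max (u z) ((-1 : ℝ) : EReal)).toReal) c R := by
      simp [circleAvgTrunc, Real.circleAverage, circleMap]
    rw [h2] at h1
    rw [← EReal.coe_le_coe_iff, az_trunc_coe _ (hut c hc)]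
    refine max_le h1 ?_
    rw [EReal.coe_le_coe_iff]
    have := Real.circleAverage_mono (circleIntegrable_const (-1 : ℝ) c R)
      (az_circInt (B := -1) ((az_trunc_usc (-1) hus hut).mono hsp)
        (fun z hz => az_trunc_le _ (hut z (hsp hz))))
      (fun z hz => az_trunc_le (-1) (hut z (hsp hz)))
    rwa [Real.circleAverage_const] at this
  · have h1 : Tendsto (fun z => max (u z) ((-1 : ℝ) : EReal)) (𝓝[U ∩ D] w) (𝓝 (max 0 ((-1 : ℝ) : EReal))) :=
      hlim.max tendsto_const_nhds
    have h2 : max (0 : EReal) ((-1 : ℝ) : EReal) = 0 := by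
      apply max_eq_left
      rw [← EReal.coe_zero, EReal.coe_le_coe_iff]; norm_num
    rw [h2] at h1
    have := (EReal.tendsto_toReal (a := 0) (by simp) (by simp)).comp h1
    rw [EReal.toReal_zero] at this; exact this

lemma az_ca_sub (f : ℂ → ℝ) (w z : ℂ) (r : ℝ) :
    Real.circleAverage (fun x => f (x - w)) z r = Real.circleAverage f (z - w) r := by
  simp only [Real.circleAverage, circleMap]
  congr 2
  ext θ
  congr 1; ring

lemma az_boul {D U : Set ℂ} {w : ℂ} (hD : IsOpen D) (hU : IsOpen U) (hw : w ∈ U) {β : ℂ → ℝ}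
    (hβu : UpperSemicontinuousOn β (U ∩ D)) (hβ1 : ∀ z ∈ U ∩ D, -1 ≤ β z) (hβ0 : ∀ z ∈ U ∩ D, β z < 0)
    (hβm : ∀ c R, 0 < R → closedBall c R ⊆ U ∩ D → β c ≤ Real.circleAverage β c R)
    (hβl : Tendsto β (𝓝[U ∩ D] w) (𝓝 0)) {r : ℝ} (hr : 0 < r) :
    ∃ v : ℂ → ℝ, UpperSemicontinuousOn v D ∧ (∀ z ∈ D, -1 ≤ v z) ∧ (∀ z ∈ D, v z ≤ 0) ∧
      (∀ z, z ∉ ball w r → v z = -1) ∧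
      (∀ z ∈ D, ∃ r0 > 0, ∀ s, 0 < s → s < r0 → v z ≤ Real.circleAverage v z s) ∧
      ∀ᶠ z in 𝓝[D] w, -1 / 2 < v z := by
  classical
  obtain ⟨e, he, heU⟩ := Metric.isOpen_iff.1 hU w hw
  obtain ⟨ρ, hρ, hρl⟩ := exists_between (lt_min hr he)
  have hρU : closedBall w ρ ⊆ U := (closedBall_subset_ball (hρl.trans_le (min_le_right _ _))).trans heU
  have hρr : ball w ρ ⊆ ball w r := ball_subset_ball (hρl.trans_le (min_le_left _ _)).le
  have hcm := continuous_circleMap w ρ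
  set E : Set ℝ := Icc 0 (2 * Real.pi) ∩ circleMap w ρ ⁻¹' D with hE
  have hEm : MeasurableSet E := measurableSet_Icc.inter (hD.preimage hcm).measurableSet
  have hEf : volume E ≠ ∞ := ((measure_mono inter_subset_left).trans_lt (by simp [ENNReal.mul_lt_top_iff])).ne
  obtain ⟨K, hKE, hKc, hKv⟩ := hEm.exists_isCompact_sdiff_lt hEf (ε := 1) (by simp)
  set F : Set ℂ := circleMap w ρ '' K with hF
  have hFc : IsCompact F := hKc.image hcm
  have hFD : F ⊆ U ∩ D := by
    rintro _ ⟨θ, hθ, rfl⟩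
    exact ⟨hρU (circleMap_mem_closedBall w hρ.le θ), (hKE hθ).2⟩
  obtain ⟨m, hm, hmF⟩ : ∃ m > 0, ∀ x ∈ F, β x ≤ -m := by
    rcases F.eq_empty_or_nonempty with h | h
    · exact ⟨1, one_pos, by simp [h]⟩
    · obtain ⟨a, ha, hmax⟩ := UpperSemicontinuousOn.exists_isMaxOn h hFc (hβu.mono hFD)
      exact ⟨-β a, by linarith [hβ0 a (hFD ha)], fun x hx => by simpa using hmax hx⟩
  set L : Set ℂ := (fun x => x + w) ⁻¹' (D \ F) with hL
  have hLo : IsOpen L := (hD.sdiff hFc.isClosed).preimage (by fun_prop)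
  set g : ℂ → ℝ := L.indicator 1 with hg
  have hgm : Measurable g := measurable_one.indicator hLo.measurableSet
  have hg0 : ∀ x, 0 ≤ g x := fun x => indicator_nonneg (fun _ _ => zero_le_one) x
  have hg1 : ∀ x, g x ≤ 1 := fun x => indicator_le_self' (fun _ _ => zero_le_one) x
  have hgi : CircleIntegrable g 0 ρ := by
    unfold CircleIntegrable
    rw [intervalIntegrable_iff]
    exact Measure.integrableOn_of_bounded (M := 1) (by simp [ENNReal.mul_eq_top])
      (hgm.comp (continuous_circleMap 0 ρ).measurable).aestronglyMeasurable
      (Eventually.of_forall fun θ => by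
        rw [Real.norm_eq_abs, abs_of_nonneg (hg0 _)]; exact hg1 _)
  have hgca : Real.circleAverage g 0 ρ < 1 / 4 := by
    have h1 : ∫ θ in (0:ℝ)..(2 * Real.pi), g (circleMap 0 ρ θ) ≤
        ∫ θ in (0:ℝ)..(2 * Real.pi), (E \ K).indicator (1 : ℝ → ℝ) θ := by
      apply intervalIntegral.integral_mono_on Real.two_pi_pos.le hgi
      · rw [intervalIntegrable_iff]
        exact (integrableOn_const (by simp [ENNReal.mul_eq_top])).indicator (hEm.diff hKc.measurableSet)
      · intro θ hθ
        by_cases h : circleMap 0 ρ θ ∈ L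
        · have h2 : circleMap w ρ θ ∈ D \ F := by
            have : circleMap 0 ρ θ + w ∈ D \ F := h
            rwa [show circleMap 0 ρ θ + w = circleMap w ρ θ by simp [circleMap]; ring] at this
          have h3 : θ ∈ E \ K := ⟨⟨hθ, h2.1⟩, fun hk => h2.2 ⟨θ, hk, rfl⟩⟩
          rw [indicator_of_mem h3]; exact hg1 _
        · rw [hg, indicator_of_notMem h]
          exact indicator_nonneg (fun _ _ => zero_le_one) _
    have h2 : ∫ θ in (0:ℝ)..(2 * Real.pi), (E \ K).indicator (1 : ℝ → ℝ) θ ≤ 1 := by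
      rw [intervalIntegral.integral_of_le Real.two_pi_pos.le, integral_indicator_one (hEm.diff hKc.measurableSet)]
      apply ENNReal.toReal_le_of_le_ofReal zero_le_one
      rw [ENNReal.ofReal_one]
      exact (Measure.restrict_apply_le _ _).trans hKv.le
    rw [Real.circleAverage, smul_eq_mul, inv_mul_lt_iff₀ Real.two_pi_pos]
    have := Real.pi_gt_three
    linarith
  set P : ℂ → ℝ := fun z => azP g ρ (z - w) with hP
  have hmem : ∀ z, z ∈ ball w ρ → z - w ∈ ball (0 : ℂ) ρ := by
    intro z hz; simpa [dist_eq_norm] using hz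
  have hPc : ContinuousOn P (ball w ρ) := (azP_cont hgi).comp (by fun_prop) (fun z hz => hmem z hz)
  have hP0 : ∀ z ∈ ball w ρ, 0 ≤ P z := by
    intro z hz
    apply Real.circleAverage_nonneg_of_nonneg
    intro x hx
    have hx' : ‖x‖ = ρ := by simpa [abs_of_pos hρ] using hx
    have hz' : ‖z - w‖ < ρ := by simpa using hmem z hz
    refine mul_nonneg ?_ (hg0 x)
    rw [poissonKernel_def]; simp only [sub_zero, hx']
    apply div_nonneg _ (by positivity)
    nlinarith [norm_nonneg (z - w)]
  have hPm : ∀ z s, 0 < s → closedBall z s ⊆ ball w ρ → Real.circleAverage P z s = P z := by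
    intro z s hs hzs
    rw [hP, az_ca_sub]
    apply azP_mean hgi
    intro x hx
    rw [abs_of_pos hs] at hx
    have : x + w ∈ ball w ρ := hzs (by
      rw [mem_closedBall, dist_eq_norm] at hx ⊢
      rwa [show x + w - z = x - (z - w) by ring])
    simpa using hmem _ this
  have hPw : P w < 1 / 4 := by
    simp only [hP, sub_self]
    rw [azP_zero hρ]; exact hgca
  have hPb : ∀ ζ ∈ sphere w ρ, ζ ∈ D \ F → ∀ t' < 1, ∀ᶠ z in 𝓝[ball w ρ] ζ, t' < P z := by
    intro ζ hζ hζD t' ht'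
    have hζL : ζ - w ∈ L := by simpa [hL] using hζD
    obtain ⟨δ, hδ, hδL⟩ := Metric.isOpen_iff.1 hLo _ hζL
    have := az_bdry (B := 0) (t := 1) (ζ := ζ - w) hρ hgi (fun x _ => hg0 x)
      (by simpa [dist_eq_norm] using hζ) hδ
      (fun x _ hx => by rw [hg, indicator_of_mem (hδL hx)]; rfl) ht'
    have hten : Tendsto (fun z => z - w) (𝓝[ball w ρ] ζ) (𝓝[ball 0 ρ] (ζ - w)) := by
      apply ContinuousWithinAt.tendsto_nhdsWithin (by fun_prop)
      exact fun z hz => hmem z hz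
    exact hten.eventually this
  set v : ℂ → ℝ := fun z => if z ∈ ball w ρ then max (β z / m - P z) (-1) else -1 with hv
  have hv1 : ∀ z, -1 ≤ v z := by
    intro z; simp only [hv]; split_ifs
    · exact le_max_right _ _
    · exact le_rfl
  have hin : ∀ z ∈ ball w ρ, v z = max (β z / m - P z) (-1) := fun z hz => by simp only [hv, if_pos hz]
  have hout : ∀ z, z ∉ ball w ρ → v z = -1 := fun z hz => by simp only [hv, if_neg hz]
  have hbU : ball w ρ ⊆ U := ball_subset_closedBall.trans hρU
  have hvu : UpperSemicontinuousOn v D := by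
    intro z hzD y hy
    by_cases hzb : z ∈ ball w ρ
    · have hy' : max (β z / m - P z) (-1) < y := by rw [← hin z hzb]; exact hy
      rw [max_lt_iff] at hy'
      have hc : ContinuousAt P z := hPc.continuousAt (isOpen_ball.mem_nhds hzb)
      obtain ⟨e, he, he2⟩ : ∃ e > 0, β z / m - P z + 2 * e < y :=
        ⟨(y - (β z / m - P z)) / 3, by linarith [hy'.1], by linarith [hy'.1]⟩
      have hb := hβu z ⟨hbU hzb, hzD⟩ (β z + e * m) (by have := mul_pos he hm; linarith)
      have hb' : ∀ᶠ x in 𝓝 z, β x < β z + e * m := by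
        rwa [(hU.inter hD).nhdsWithin_eq ⟨hbU hzb, hzD⟩] at hb
      filter_upwards [mem_nhdsWithin_of_mem_nhds hb', mem_nhdsWithin_of_mem_nhds (isOpen_ball.mem_nhds hzb),
        mem_nhdsWithin_of_mem_nhds (hc.eventually_const_lt (show P z - e < P z by linarith))]
        with x h1 h2 h3
      rw [hin x h2]
      refine max_lt ?_ hy'.2
      have h1' : β x < β z + e * m := h1
      have h3' : P z - e < P x := h3
      have : β x / m < β z / m + e := by
        rw [div_lt_iff₀ hm, add_mul, div_mul_cancel₀ _ hm.ne']; exact h1'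
      linarith
    · have hy' : -1 < y := by rw [← hout z hzb]; exact hy
      suffices hs : ∀ᶠ x in 𝓝[D] z, x ∈ ball w ρ → β x / m - P x < y by
        filter_upwards [hs] with x hx
        by_cases hxb : x ∈ ball w ρ
        · rw [hin x hxb]; exact max_lt (hx hxb) hy'
        · rw [hout x hxb]; exact hy'
      by_cases hzs : z ∈ sphere w ρ
      · by_cases hzF : z ∈ F
        · have hzU := hFD hzF
          obtain ⟨e, he1, he2⟩ := exists_between hy'
          have hb := hβu z hzU (e * m) (by have := hmF z hzF; nlinarith)
          have hb' : ∀ᶠ x in 𝓝 z, β x < e * m := by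
            rwa [(hU.inter hD).nhdsWithin_eq hzU] at hb
          filter_upwards [mem_nhdsWithin_of_mem_nhds hb'] with x hx hxb
          have hx' : β x < e * m := hx
          have : β x / m < e := by rwa [div_lt_iff₀ hm]
          linarith [hP0 x hxb]
        · have h1 := hPb z hzs ⟨hzD, hzF⟩ (-y) (by linarith)
          rw [eventually_nhdsWithin_iff] at h1
          filter_upwards [mem_nhdsWithin_of_mem_nhds h1, self_mem_nhdsWithin] with x hx hxD hxb
          have h2 : -y < P x := hx hxb
          have : β x / m < 0 := div_neg_of_neg_of_pos (hβ0 x ⟨hbU hxb, hxD⟩) hm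
          linarith
      · have : z ∈ (closedBall w ρ)ᶜ := by
          intro h
          simp only [mem_closedBall, mem_ball, mem_sphere] at *
          exact hzs (le_antisymm h (not_lt.1 hzb))
        filter_upwards [mem_nhdsWithin_of_mem_nhds (isClosed_closedBall.isOpen_compl.mem_nhds this)] with x hx hxb
        exact absurd (ball_subset_closedBall hxb) hx
  have hvi : ∀ z s, 0 < s → closedBall z s ⊆ D → CircleIntegrable v z s := by
    intro z s hs hzs
    apply az_circInt (B := -1) (hvu.mono _) (fun x _ => hv1 x)
    rw [abs_of_pos hs]; exact sphere_subset_closedBall.trans hzs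
  refine ⟨v, hvu, fun z _ => hv1 z, ?_, fun z hz => hout z (fun h => hz (hρr h)), ?_, ?_⟩
  · intro z hz
    by_cases h : z ∈ ball w ρ
    · rw [hin z h]
      refine max_le ?_ (by norm_num)
      have : β z / m < 0 := div_neg_of_neg_of_pos (hβ0 z ⟨hbU h, hz⟩) hm
      linarith [hP0 z h]
    · rw [hout z h]; norm_num
  · intro z hz
    have hge : ∀ s, 0 < s → closedBall z s ⊆ D → -1 ≤ Real.circleAverage v z s := by
      intro s hs hzs
      have := Real.circleAverage_mono (circleIntegrable_const (-1 : ℝ) z s) (hvi z s hs hzs) (fun x _ => hv1 x)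
      rwa [Real.circleAverage_const] at this
    by_cases h : z ∈ ball w ρ
    · obtain ⟨r0, hr0, hsub⟩ := Metric.isOpen_iff.1 (hD.inter isOpen_ball) z ⟨hz, h⟩
      refine ⟨r0, hr0, fun s hs hsr => ?_⟩
      have hcb : closedBall z s ⊆ D ∩ ball w ρ := (closedBall_subset_ball hsr).trans hsub
      have hcD := hcb.trans inter_subset_left
      have hcB := hcb.trans inter_subset_right
      have hcU : closedBall z s ⊆ U ∩ D := subset_inter (hcB.trans hbU) hcD
      have hsp : sphere z |s| ⊆ closedBall z s := by rw [abs_of_pos hs]; exact sphere_subset_closedBall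
      rw [hin z h]
      refine max_le ?_ (hge s hs hcD)
      have i1 : CircleIntegrable β z s := az_circInt (B := -1) (hβu.mono (hsp.trans hcU))
        (fun x hx => hβ1 x (hcU (hsp hx)))
      have i1' : CircleIntegrable (fun x => m⁻¹ • β x) z s := i1.const_smul
      have i2 : CircleIntegrable P z s := ContinuousOn.circleIntegrable' (hPc.mono (hsp.trans hcB))
      have h3 := Real.circleAverage_mono (f₁ := fun x => m⁻¹ • β x - P x) (i1'.sub i2) (hvi z s hs hcD) (fun x hx => by
        rw [hin x (hcB (hsp hx))]
        refine le_trans (le_of_eq ?_) (le_max_left _ _)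
        simp [div_eq_inv_mul])
      rw [Real.circleAverage_fun_sub i1' i2, Real.circleAverage_fun_smul, hPm z s hs hcB] at h3
      refine le_trans ?_ h3
      rw [div_eq_inv_mul, smul_eq_mul]
      have := mul_le_mul_of_nonneg_left (hβm z s hs hcU) (inv_pos.2 hm).le
      linarith
    · obtain ⟨r0, hr0, hsub⟩ := Metric.isOpen_iff.1 hD z hz
      refine ⟨r0, hr0, fun s hs hsr => ?_⟩
      rw [hout z h]
      exact hge s hs ((closedBall_subset_ball hsr).trans hsub)
  · have hww : w ∈ ball w ρ := mem_ball_self hρ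
    have h1 : ∀ᶠ z in 𝓝 w, P z < 1 / 4 :=
      (hPc.continuousAt (isOpen_ball.mem_nhds hww)).eventually_lt_const hPw
    have h2 : ∀ᶠ z in 𝓝[U ∩ D] w, -(m / 4) < β z := hβl.eventually_const_lt (by linarith)
    rw [eventually_nhdsWithin_iff] at h2
    filter_upwards [mem_nhdsWithin_of_mem_nhds h1, mem_nhdsWithin_of_mem_nhds h2,
      mem_nhdsWithin_of_mem_nhds (isOpen_ball.mem_nhds hww), self_mem_nhdsWithin] with z a1 a2 a3 a4
    rw [hin z a3]
    refine lt_of_lt_of_le ?_ (le_max_left _ _)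
    have b1 : P z < 1 / 4 := a1
    have b2 : -(m / 4) < β z := a2 ⟨hbU a3, a4⟩
    have : -(1 / 4) < β z / m := by rw [lt_div_iff₀ hm]; linarith
    linarith

lemma az_comp {D : Set ℂ} {v : ℂ → ℝ} {p : ℂ} {A L : ℝ} (hL : 0 < L)
    (hvu : UpperSemicontinuousOn v D) (hv1 : ∀ z ∈ D, -1 ≤ v z) (hv0 : ∀ z ∈ D, v z ≤ 0)
    (hvm : ∀ z ∈ D, ∃ r0 > 0, ∀ s, 0 < s → s < r0 → v z ≤ Real.circleAverage v z s) :
    SubharmonicOn (fun z => if z = p then (⊥ : EReal)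
      else ((Real.log ‖z - p‖ - A + L * (1 + v z) : ℝ) : EReal)) D := by
  classical
  set Q : ℂ → ℝ := fun z => Real.log ‖z - p‖ - A + L * (1 + v z) with hQ
  set u : ℂ → EReal := fun z => if z = p then (⊥ : EReal) else (Q z : EReal) with hu
  have hup : u p = ⊥ := by simp [hu]
  have hun : ∀ z, z ≠ p → u z = (Q z : EReal) := fun z hz => by simp [hu, hz]
  have hule : ∀ z, u z ≤ (Q z : EReal) := by
    intro z
    by_cases hz : z = p
    · rw [hz, hup]; exact bot_le
    · rw [hun z hz]
  have hut : ∀ z, u z < ⊤ := fun z => (hule z).trans_lt (EReal.coe_lt_top _)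
  have husc : UpperSemicontinuousOn u D := by
    intro z hz y hy
    obtain ⟨q, hq1, hq2⟩ := EReal.lt_iff_exists_real_btwn.1 hy
    by_cases hzp : z = p
    · subst hzp
      have h1 : ∀ᶠ x in 𝓝[D] z, x ∈ ball z (Real.exp (q + A - L)) :=
        nhdsWithin_le_nhds (ball_mem_nhds _ (Real.exp_pos _))
      filter_upwards [h1, self_mem_nhdsWithin] with x hx hxD
      by_cases hxz : x = z
      · rw [hxz, hup]; exact (EReal.bot_lt_coe q).trans hq2
      · rw [hun x hxz]
        refine lt_of_le_of_lt ?_ hq2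
        rw [EReal.coe_le_coe_iff]
        have hpos : 0 < ‖x - z‖ := norm_pos_iff.2 (sub_ne_zero.2 hxz)
        rw [mem_ball, dist_eq_norm] at hx
        have h2 := (Real.log_lt_iff_lt_exp hpos).2 hx
        have h3 : L * (1 + v x) ≤ L * 1 := by
          apply mul_le_mul_of_nonneg_left _ hL.le
          linarith [hv0 x hxD]
        simp only [hQ]; linarith
    · rw [hun z hzp, EReal.coe_lt_coe_iff] at hq1
      have hδ : 0 < q - Q z := by linarith
      have hc : ContinuousAt (fun x : ℂ => Real.log ‖x - p‖) z := by
        apply ContinuousAt.log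
        · fun_prop
        · exact norm_ne_zero_iff.2 (sub_ne_zero.2 hzp)
      have h1 : ∀ᶠ x in 𝓝[D] z, Real.log ‖x - p‖ < Real.log ‖z - p‖ + (q - Q z) / 2 :=
        nhdsWithin_le_nhds (hc.eventually_lt_const (by linarith))
      have h2 := hvu z hz (v z + (q - Q z) / (2 * L)) (by
        have : 0 < (q - Q z) / (2 * L) := by positivity
        linarith)
      filter_upwards [h1, h2] with x hx1 hx2
      refine lt_of_le_of_lt (hule x) (lt_trans ?_ hq2)
      rw [EReal.coe_lt_coe_iff]
      have h3 : L * v x < L * (v z + (q - Q z) / (2 * L)) := mul_lt_mul_of_pos_left hx2 hL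
      have h4 : L * (v z + (q - Q z) / (2 * L)) = L * v z + (q - Q z) / 2 := by
        field_simp
      have h5 : Q z = Real.log ‖z - p‖ - A + L * (1 + v z) := rfl
      change Real.log ‖x - p‖ - A + L * (1 + v x) < q
      nlinarith
  refine ⟨husc, fun z _ => hut z, ?_⟩
  intro c hc R hR hcR
  refine le_iInf fun n => ?_
  by_cases hcp : c = p
  · change u c ≤ _
    rw [hcp, hup]; exact bot_le
  change u c ≤ _
  rw [hun c hcp, EReal.coe_le_coe_iff]
  have hsp : sphere c |R| ⊆ D := by
    rw [abs_of_pos hR]; exact sphere_subset_closedBall.trans hcR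
  have hvi : CircleIntegrable v c R :=
    az_circInt (B := -1) (hvu.mono hsp) (fun z hz => hv1 z (hsp hz))
  have hli : CircleIntegrable (fun x => Real.log ‖x - p‖) c R := circleIntegrable_log_norm_sub_const R
  have hQi1 : CircleIntegrable (fun x => Real.log ‖x - p‖ - A) c R :=
    hli.sub (circleIntegrable_const A c R)
  have hQi2 : CircleIntegrable (fun x => L * (1 + v x)) c R := by
    have := ((circleIntegrable_const (1:ℝ) c R).add hvi).const_fun_smul (a := L)
    simpa using this
  have hQi : CircleIntegrable Q c R := hQi1.add hQi2
  have hvg : v c ≤ Real.circleAverage v c R :=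
    az_glob (B := -1) hR (hvu.mono hcR) (fun x hx => hv1 x (hcR hx))
      (fun z hz => hvm z (hcR (ball_subset_closedBall hz)))
  have hlg : Real.log ‖c - p‖ ≤ Real.circleAverage (fun x => Real.log ‖x - p‖) c R := by
    rw [circleAverage_log_norm_sub_const_eq_log_radius_add_posLog hR.ne']
    have h1 : Real.log (R⁻¹ * ‖c - p‖) ≤ Real.posLog (R⁻¹ * ‖c - p‖) := le_max_right _ _
    rw [Real.log_mul (inv_ne_zero hR.ne') (norm_ne_zero_iff.2 (sub_ne_zero.2 hcp)),
      Real.log_inv] at h1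
    linarith
  have hQa : Real.circleAverage Q c R =
      Real.circleAverage (fun x => Real.log ‖x - p‖) c R - A + L * (1 + Real.circleAverage v c R) := by
    have e1 : Real.circleAverage Q c R = Real.circleAverage (fun x => Real.log ‖x - p‖ - A) c R
        + Real.circleAverage (fun x => L * (1 + v x)) c R := Real.circleAverage_add hQi1 hQi2
    have e2 : Real.circleAverage (fun x => Real.log ‖x - p‖ - A) c R =
        Real.circleAverage (fun x => Real.log ‖x - p‖) c R - Real.circleAverage (fun _ => A) c R :=
      Real.circleAverage_sub hli (circleIntegrable_const A c R)
    have e3 : Real.circleAverage (fun x => L * (1 + v x)) c R =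
        L * Real.circleAverage (fun x => 1 + v x) c R :=
      Real.circleAverage_smul (a := L) (f := fun x => 1 + v x)
    have e4 : Real.circleAverage (fun x => 1 + v x) c R =
        Real.circleAverage (fun _ => (1:ℝ)) c R + Real.circleAverage v c R :=
      Real.circleAverage_add (circleIntegrable_const (1:ℝ) c R) hvi
    rw [e1, e2, e3, e4, Real.circleAverage_const, Real.circleAverage_const]
  have hQc : Q c ≤ Real.circleAverage Q c R := by
    rw [hQa]
    have : L * (1 + v c) ≤ L * (1 + Real.circleAverage v c R) := by gcongr
    change Real.log ‖c - p‖ - A + L * (1 + v c) ≤ _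
    linarith
  refine hQc.trans ?_
  set T : ℂ → ℝ := fun x => (max (u x) ((-(n:ℝ) : ℝ) : EReal)).toReal with hT
  have hTi : CircleIntegrable T c R :=
    az_circInt (B := -(n:ℝ)) ((az_trunc_usc _ husc fun z _ => hut z).mono hsp)
      (fun z _ => az_trunc_le _ (hut z))
  have hTe : circleAvgTrunc u c R n = Real.circleAverage T c R := by
    simp [circleAvgTrunc, Real.circleAverage, circleMap, hT]
  change _ ≤ circleAvgTrunc u c R n
  rw [hTe, Real.circleAverage, Real.circleAverage]
  apply smul_le_smul_of_nonneg_left _ (by positivity)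
  apply intervalIntegral.integral_mono_ae (by positivity) hQi hTi
  have hnull : volume (circleMap c R ⁻¹' {p}) = 0 :=
    ((countable_singleton p).preimage_circleMap c hR.ne').measure_zero _
  filter_upwards [compl_mem_ae_iff.2 hnull] with θ hθ
  have hθ' : circleMap c R θ ≠ p := fun h => hθ h
  change Q (circleMap c R θ) ≤ T (circleMap c R θ)
  rw [← EReal.coe_le_coe_iff, az_trunc_coe _ (hut _), hun _ hθ']
  exact le_max_left _ _

lemma az_lower {D : Set ℂ} (hD : IsOpen D) {v : ℂ → ℝ} {p w : ℂ} {R0 L r : ℝ} (hL : 0 < L)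
    (hR0 : 0 < R0) (hp : p ∈ D) (hpw : p ∈ ball w r) (hr : 2 * r ≤ R0 * Real.exp (-L))
    (hdist : ∀ z ∈ D, ‖z - p‖ < R0)
    (hvu : UpperSemicontinuousOn v D) (hv1 : ∀ z ∈ D, -1 ≤ v z) (hv0 : ∀ z ∈ D, v z ≤ 0)
    (hvo : ∀ z, z ∉ ball w r → v z = -1)
    (hvm : ∀ z ∈ D, ∃ r0 > 0, ∀ s, 0 < s → s < r0 → v z ≤ Real.circleAverage v z s)
    (hvp : ∀ᶠ z in 𝓝[D] p, -1 / 2 < v z) :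
    ENNReal.ofReal (Real.exp (L / 2) / R0) ≤ azukawaOne D p := by
  have hsub := az_comp (p := p) (A := Real.log R0) hL hvu hv1 hv0 hvm
  set u : ℂ → EReal := fun z => if z = p then (⊥ : EReal)
      else ((Real.log ‖z - p‖ - Real.log R0 + L * (1 + v z) : ℝ) : EReal) with hu
  have hneg : ∀ x ∈ D, u x < 0 := by
    intro x hx
    by_cases hxp : x = p
    · simp [hu, hxp]
    · have hpos : 0 < ‖x - p‖ := norm_pos_iff.2 (sub_ne_zero.2 hxp)
      simp only [hu, if_neg hxp]
      rw [← EReal.coe_zero, EReal.coe_lt_coe_iff]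
      by_cases hxw : x ∈ ball w r
      · have h1 : ‖x - p‖ < R0 * Real.exp (-L) := by
          rw [← dist_eq_norm]
          have := dist_triangle_right x p w
          rw [mem_ball] at hxw hpw
          linarith
        have h2 := Real.log_lt_log hpos h1
        rw [Real.log_mul hR0.ne' (Real.exp_ne_zero _), Real.log_exp] at h2
        have h3 : L * (1 + v x) ≤ L * 1 := by
          apply mul_le_mul_of_nonneg_left _ hL.le
          linarith [hv0 x hx]
        linarith
      · have h2 := Real.log_lt_log hpos (hdist x hx)
        rw [hvo x hxw]; linarith
  have hpole : ∃ C : ℝ, ∀ᶠ x in 𝓝 p, u x ≤ ((Real.log ‖x - p‖ + C : ℝ) : EReal) := by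
    refine ⟨L - Real.log R0, ?_⟩
    filter_upwards [hD.mem_nhds hp] with x hx
    by_cases hxp : x = p
    · simp [hu, hxp]
    · simp only [hu, if_neg hxp]
      rw [EReal.coe_le_coe_iff]
      have h3 : L * (1 + v x) ≤ L * 1 := by
        apply mul_le_mul_of_nonneg_left _ hL.le
        linarith [hv0 x hx]
      linarith
  have hg : ∀ z, u z ≤ greenFn D p z := fun z => le_sSup ⟨u, hsub, hneg, hpole, rfl⟩
  rw [hD.nhdsWithin_eq hp] at hvp
  have hmap : Tendsto (fun lam : ℂ => p + lam) (𝓝[≠] 0) (𝓝 p) := by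
    have : Tendsto (fun lam : ℂ => p + lam) (𝓝 0) (𝓝 (p + 0)) := by
      apply Continuous.tendsto; fun_prop
    rw [add_zero] at this
    exact this.mono_left nhdsWithin_le_nhds
  have hev := hmap.eventually hvp
  refine le_limsup_of_frequently_le ?_ (by isBoundedDefault)
  apply Eventually.frequently
  filter_upwards [hev, self_mem_nhdsWithin] with lam hlam hne
  have hne' : lam ≠ 0 := hne
  have hpos : 0 < ‖lam‖ := norm_pos_iff.2 hne'
  rw [ENNReal.le_div_iff_mul_le (Or.inl (by simpa using hne')) (Or.inl ENNReal.ofReal_ne_top),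
    ← ENNReal.ofReal_mul (by positivity)]
  have h1 : ((Real.log ‖lam‖ - Real.log R0 + L / 2 : ℝ) : EReal) ≤ greenFn D p (p + lam) := by
    refine le_trans ?_ (hg _)
    have : p + lam ≠ p := by simpa using hne'
    simp only [hu, if_neg this, add_sub_cancel_left]
    rw [EReal.coe_le_coe_iff]
    nlinarith
  have h2 := EReal.exp_monotone h1
  refine le_trans (le_of_eq ?_) h2
  rw [EReal.exp_coe, Real.exp_add, Real.exp_sub, Real.exp_log hpos, Real.exp_log hR0]
  congr 1; field_simp

/-- If `D ⊆ ℂ` is a bounded domain and `w ∈ ∂D` is a regular boundary point, then the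
Azukawa metric blows up at `w`: `A_D(p;1) → ∞` as `D ∋ p → w`. -/
theorem azukawa_tendsto_top_of_regular (D : Set ℂ)
    (hopen : IsOpen D) (hconn : IsConnected D) (hbd : Bornology.IsBounded D)
    (w : ℂ) (hw : w ∈ frontier D) (hreg : RegularBoundaryPt D w) :
    Tendsto (fun p => azukawaOne D p) (𝓝[D] w) (𝓝 (⊤ : ℝ≥0∞)) := by
  rw [ENNReal.tendsto_nhds_top_iff_nnreal]
  intro x
  obtain ⟨R1, hR1⟩ := hbd.exists_norm_le
  set R0 : ℝ := 2 * |R1| + 1 with hR0d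
  have hR0 : 0 < R0 := by positivity
  have hdist : ∀ p ∈ D, ∀ z ∈ D, ‖z - p‖ < R0 := by
    intro p hp z hz
    have h1 := norm_sub_le z p
    have h2 := hR1 z hz
    have h3 := hR1 p hp
    have h4 := le_abs_self R1
    linarith
  set L : ℝ := max 1 (2 * Real.log (R0 * (x + 1))) with hLd
  have hL : 0 < L := lt_of_lt_of_le one_pos (le_max_left _ _)
  have hbig : (x : ℝ) + 1 ≤ Real.exp (L / 2) / R0 := by
    rw [le_div_iff₀ hR0]
    have hx : 0 < R0 * ((x : ℝ) + 1) := by positivity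
    have h1 : Real.log (R0 * ((x : ℝ) + 1)) ≤ L / 2 := by
      have : 2 * Real.log (R0 * ((x : ℝ) + 1)) ≤ L := le_max_right _ _
      linarith
    have := (Real.log_le_iff_le_exp hx).1 h1
    linarith
  set r : ℝ := R0 * Real.exp (-L) / 2 with hrd
  have hr : 0 < r := by positivity
  obtain ⟨U, hU, hwU, β, hβu, hβ1, hβ0, hβm, hβl⟩ := az_reg hreg
  obtain ⟨v, hvu, hv1, hv0, hvo, hvm, hvl⟩ := az_boul hopen hU hwU hβu hβ1 hβ0 hβm hβl hr
  have hball : ∀ᶠ p in 𝓝[D] w, p ∈ ball w r := nhdsWithin_le_nhds (ball_mem_nhds _ hr)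
  filter_upwards [eventually_eventually_nhdsWithin.2 hvl, hball, self_mem_nhdsWithin]
    with p hp1 hp2 hp3
  have hlow := az_lower hopen hL hR0 hp3 hp2 (by rw [hrd]; linarith) (hdist p hp3) hvu hv1 hv0 hvo hvm hp1
  refine lt_of_lt_of_le ?_ hlow
  refine lt_of_lt_of_le ?_ (ENNReal.ofReal_le_ofReal hbig)
  rw [← ENNReal.ofReal_coe_nnreal]
  exact (ENNReal.ofReal_lt_ofReal_iff (by positivity)).2 (by linarith)
end

section
/- Let D̃ be a bounded domain in ℂ and let K ⊂ D̃ be a compact polar set. Then the restriction map L²_h(D̃) → L²_h(D̃ \ K) is a bijection, and consequently K_{D̃ \ K}(z) = K_{D̃}(z) for all z ∈ D̃ \ K. -/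
open MeasureTheory Filter Topology Metric Set
open scoped ENNReal NNReal

lemma aux_cauchy_diff (μ : Measure ℂ) (k : ℂ → ℂ) (hk : Integrable k μ) (p : ℂ) (ρ : ℝ)
    (h0 : ∀ w ∈ ball p ρ, k w = 0) :
    DifferentiableOn ℂ (fun z => ∫ w, k w / (w - z) ∂μ) (ball p ρ) := by
  intro z hz
  have hd : 0 < ρ - dist z p := by simpa using hz
  set d := (ρ - dist z p) / 2 with hdd
  have hd0 : 0 < d := by positivity
  have key : ∀ w, ∀ x ∈ ball z d, k w ≠ 0 → d ≤ ‖w - x‖ := by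
    intro w x hx hw
    have : w ∉ ball p ρ := fun h => hw (h0 w h)
    simp only [mem_ball, not_lt] at this hx
    have h1 := dist_triangle w x p
    have h2 := dist_triangle x z p
    rw [← dist_eq_norm]; linarith
  have hmeas : ∀ x, AEStronglyMeasurable (fun w => k w / (w - x)) μ := fun x =>
    hk.aestronglyMeasurable.div₀ (by fun_prop)
  have := hasDerivAt_integral_of_dominated_loc_of_deriv_le (μ := μ) (𝕜 := ℂ)
    (F := fun z w => k w / (w - z)) (F' := fun z w => k w / (w - z) ^ 2)
    (bound := fun w => ‖k w‖ / d ^ 2) (x₀ := z) (ball_mem_nhds z hd0)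
    (Eventually.of_forall hmeas) ?_ ?_ ?_ ?_ ?_
  · exact this.2.differentiableAt.differentiableWithinAt
  · refine (hk.norm.div_const d).mono' (hmeas z) (Eventually.of_forall fun w => ?_)
    by_cases hw : k w = 0
    · simp [hw]
    · rw [norm_div]
      have := key w z (mem_ball_self hd0) hw
      gcongr
  · exact hk.aestronglyMeasurable.div₀ (by fun_prop)
  · refine Eventually.of_forall fun w x hx => ?_
    by_cases hw : k w = 0
    · simp [hw]
    · rw [norm_div, norm_pow]
      have := key w x hx hw
      gcongr
  · exact hk.norm.div_const _
  · refine Eventually.of_forall fun w x hx => ?_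
    by_cases hw : k w = 0
    · simpa [hw] using hasDerivAt_const x (0:ℂ)
    · have h1 := key w x hx hw
      have h2 : w - x ≠ 0 := by
        intro h; rw [h, norm_zero] at h1; linarith
      have := (hasDerivAt_const x (k w)).div ((hasDerivAt_id x).const_sub w) h2
      exact this.congr_deriv (by simp)

/-- twice dbar of a real function -/
noncomputable def dbarR (φ : ℂ → ℝ) (x : ℂ) : ℂ :=
  (fderiv ℝ φ x 1 : ℂ) + Complex.I * (fderiv ℝ φ x Complex.I : ℂ)

lemma aux_int_fderiv_zero (g : ℂ → ℂ) (hg : ContDiff ℝ 1 g) (hc : HasCompactSupport g) (e : ℂ) :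
    ∫ x, fderiv ℝ g x e = 0 := by
  have hcont : Continuous fun x => fderiv ℝ g x e :=
    (hg.continuous_fderiv (by simp)).clm_apply continuous_const
  have hcs : HasCompactSupport fun x => fderiv ℝ g x e := hc.fderiv_apply ℝ e
  have := integral_mul_fderiv_eq_neg_fderiv_mul_of_integrable (μ := (volume : Measure ℂ))
    (f := fun _ : ℂ => (1:ℂ)) (g := g) (v := e) (by simp)
    (by simpa using hcont.integrable_of_hasCompactSupport hcs)
    (by simpa using hg.continuous.integrable_of_hasCompactSupport hc)
    (by intro x _; fun_prop) (fun x _ => (hg.differentiable (by simp)).differentiableAt)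
  simpa using this

lemma aux_dbar_zero (S : Set ℂ) (hS : IsOpen S) (q : ℂ → ℂ) (hq : DifferentiableOn ℂ q S)
    (φ : ℂ → ℝ) (hφ : ContDiff ℝ 1 φ) (hc : HasCompactSupport φ) (hsub : tsupport φ ⊆ S) :
    ∫ x, dbarR φ x * q x = 0 := by
  set g : ℂ → ℂ := fun x => φ x • q x with hg
  have hqa : ∀ x ∈ S, ContDiffAt ℝ 1 q x := fun x hx =>
    ((hq.analyticAt (hS.mem_nhds hx)).contDiffAt (n := 1)).restrict_scalars ℝ
  have hz : ∀ x, x ∉ tsupport φ → φ =ᶠ[𝓝 x] 0 := fun x hx => notMem_tsupport_iff_eventuallyEq.1 hx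
  have hgz : ∀ x, x ∉ tsupport φ → g =ᶠ[𝓝 x] fun _ => 0 := fun x hx => by
    filter_upwards [hz x hx] with y hy
    simp [hg, hy]
  have hgC : ContDiff ℝ 1 g := by
    rw [contDiff_iff_contDiffAt]
    intro x
    by_cases hx : x ∈ tsupport φ
    · exact hφ.contDiffAt.smul (hqa x (hsub hx))
    · exact contDiffAt_const.congr_of_eventuallyEq (hgz x hx)
  have hgc : HasCompactSupport g := hc.smul_right
  have e1 := aux_int_fderiv_zero g hgC hgc 1
  have e2 := aux_int_fderiv_zero g hgC hgc Complex.I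
  have hint : ∀ e, Integrable fun x => fderiv ℝ g x e := fun e =>
    ((hgC.continuous_fderiv (by simp)).clm_apply continuous_const).integrable_of_hasCompactSupport
      (hgc.fderiv_apply ℝ e)
  have : ∀ x, dbarR φ x * q x = fderiv ℝ g x 1 + Complex.I * fderiv ℝ g x Complex.I := by
    intro x
    by_cases hx : x ∈ tsupport φ
    · have hqd : DifferentiableAt ℂ q x := hq.differentiableAt (hS.mem_nhds (hsub hx))
      have hd : HasFDerivAt g _ x :=
        ((hφ.differentiable (by simp)).differentiableAt.hasFDerivAt (x := x)).smul
          (hqd.hasDerivAt.hasFDerivAt.restrictScalars ℝ)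
      rw [hd.fderiv]
      simp [dbarR]
      linear_combination (φ x : ℂ) * (deriv q x) * (-Complex.I_sq)
    · have h1 : fderiv ℝ g x = 0 := by
        rw [(hgz x hx).fderiv_eq]; simp
      have h2 : fderiv ℝ φ x = 0 := by
        rw [(hz x hx).fderiv_eq]; simp
      simp [h1, dbarR, h2]
  simp_rw [this]
  rw [integral_add (hint 1) ((hint _).const_mul _), e1, integral_const_mul, e2]
  simp


lemma continuous_dbarR (φ : ℂ → ℝ) (hφ : ContDiff ℝ 1 φ) : Continuous (dbarR φ) := by
  have h := hφ.continuous_fderiv (by simp)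
  unfold dbarR
  have h1 : Continuous fun x => fderiv ℝ φ x 1 := h.clm_apply continuous_const
  have h2 : Continuous fun x => fderiv ℝ φ x Complex.I := h.clm_apply continuous_const
  fun_prop

lemma aux_eta (p : ℂ) (r : ℝ) (hr : 0 < r) : ∃ η : ℂ → ℝ, ContDiff ℝ 1 η ∧ HasCompactSupport η ∧
    tsupport η ⊆ ball p r ∧ (∀ x, 0 ≤ η x ∧ η x ≤ 1) ∧ (∀ x ∈ ball p (r/2), dbarR η x = 0) ∧
    (∃ C, ∀ x, ‖dbarR η x‖ ≤ C) ∧ ∫ w, dbarR η w / (w - p) ≠ 0 := by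
  set S := Real.smoothTransition with hSdef
  have hS : ContDiff ℝ 1 S := Real.smoothTransition.contDiff (n := 1)
  set T : ℂ → ℝ := fun w => 2 - 4 / r ^ 2 * ‖w - p‖ ^ 2 with hT
  set η : ℂ → ℝ := fun w => S (T w) with hη
  have hTC : ContDiff ℝ 1 T := by
    have : ContDiff ℝ 1 fun w : ℂ => ‖w - p‖ ^ 2 := (contDiff_id.sub contDiff_const).norm_sq ℝ
    exact contDiff_const.sub (contDiff_const.mul this)
  have hC : ContDiff ℝ 1 η := hS.comp hTC
  have hsup : Function.support η ⊆ closedBall p (3 / 4 * r) := by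
    intro w hw
    by_contra h
    apply hw
    apply Real.smoothTransition.zero_of_nonpos
    simp only [mem_closedBall, not_le, dist_eq_norm] at h
    have : (3 / 4 * r) ^ 2 ≤ ‖w - p‖ ^ 2 := by gcongr
    have h2 : 4 / r ^ 2 * (3 / 4 * r) ^ 2 ≤ 4 / r ^ 2 * ‖w - p‖ ^ 2 := by gcongr
    have h3 : 4 / r ^ 2 * (3 / 4 * r) ^ 2 = 9 / 4 := by field_simp; norm_num
    simp only [hT]; linarith
  have hts : tsupport η ⊆ closedBall p (3 / 4 * r) := closure_minimal hsup isClosed_closedBall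
  have hcs : HasCompactSupport η := HasCompactSupport.of_support_subset_isCompact
    (isCompact_closedBall _ _) hsup
  have hform : ∀ w, dbarR η w = ((deriv S (T w) * (-8 / r ^ 2) : ℝ) : ℂ) * (w - p) := by
    intro w
    have h1 : HasFDerivAt (fun w : ℂ => ‖w - p‖ ^ 2) _ w := ((hasFDerivAt_id w).sub_const p).norm_sq
    have h2 : HasFDerivAt T _ w := (h1.const_mul (4 / r ^ 2)).const_sub 2
    have h3 : HasFDerivAt η _ w :=
      ((hS.differentiable (by simp)).differentiableAt (x := T w)).hasDerivAt.comp_hasFDerivAt w h2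
    have a1 : fderiv ℝ η w 1 = (deriv S (T w) * (-8 / r ^ 2)) * (w - p).re := by
      rw [h3.fderiv]; simp [Complex.inner]; ring
    have a2 : fderiv ℝ η w Complex.I = (deriv S (T w) * (-8 / r ^ 2)) * (w - p).im := by
      rw [h3.fderiv]; simp [Complex.inner]; ring
    rw [dbarR, a1, a2]
    generalize deriv S (T w) * (-8 / r ^ 2) = a
    generalize w - p = b
    apply Complex.ext <;> simp
  have hbd : ∃ C, ∀ x, ‖dbarR η x‖ ≤ C := by
    have hc2 : HasCompactSupport (dbarR η) := by
      apply HasCompactSupport.intro hcs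
      intro x hx
      have : fderiv ℝ η x = 0 := by
        rw [(notMem_tsupport_iff_eventuallyEq.1 hx).fderiv_eq]; simp
      simp [dbarR, this]
    exact (continuous_dbarR η hC).bounded_above_of_compact_support hc2
  refine ⟨η, hC, hcs, hts.trans (closedBall_subset_ball (by linarith)),
    fun x => ⟨Real.smoothTransition.nonneg _, Real.smoothTransition.le_one _⟩, ?_, hbd, ?_⟩
  · intro x hx
    have : η =ᶠ[𝓝 x] fun _ => 1 := by
      filter_upwards [isOpen_ball.mem_nhds hx] with y hy
      apply Real.smoothTransition.one_of_one_le
      rw [mem_ball, dist_eq_norm] at hy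
      have : ‖y - p‖ ^ 2 ≤ (r / 2) ^ 2 := by gcongr
      have h2 : 4 / r ^ 2 * ‖y - p‖ ^ 2 ≤ 4 / r ^ 2 * (r / 2) ^ 2 := by gcongr
      have h3 : 4 / r ^ 2 * (r / 2) ^ 2 = 1 := by field_simp; norm_num
      simp only [hT]; linarith
    have : fderiv ℝ η x = 0 := by rw [this.fderiv_eq]; simp
    simp [dbarR, this]
  · have hcont : Continuous fun w => deriv S (T w) :=
      (hS.continuous_deriv (by simp)).comp hTC.continuous
    have hcs' : HasCompactSupport fun w => deriv S (T w) := by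
      apply HasCompactSupport.intro (isCompact_closedBall p (3 / 4 * r))
      intro w h
      simp only [mem_closedBall, not_le, dist_eq_norm] at h
      have : (3 / 4 * r) ^ 2 ≤ ‖w - p‖ ^ 2 := by gcongr
      have h2 : 4 / r ^ 2 * (3 / 4 * r) ^ 2 ≤ 4 / r ^ 2 * ‖w - p‖ ^ 2 := by gcongr
      have h3 : 4 / r ^ 2 * (3 / 4 * r) ^ 2 = 9 / 4 := by field_simp; norm_num
      have hneg : T w < 0 := by simp only [hT]; linarith
      have : S =ᶠ[𝓝 (T w)] fun _ => 0 := by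
        filter_upwards [Iio_mem_nhds hneg] with y hy
        exact Real.smoothTransition.zero_of_nonpos (le_of_lt hy)
      rw [this.deriv_eq]; simp
    have hnn : ∀ w, 0 ≤ deriv S (T w) := fun w => Real.smoothTransition.monotone.deriv_nonneg
    have hex : ∃ w, deriv S (T w) ≠ 0 := by
      by_contra hcon
      push Not at hcon
      obtain ⟨t, ht, hd⟩ := exists_deriv_eq_slope S (zero_lt_one' ℝ)
        hS.continuous.continuousOn (hS.differentiable (by simp)).differentiableOn
      have hv : ∃ w, T w = t := by
        refine ⟨p + (r * Real.sqrt ((2 - t) / 4) : ℝ), ?_⟩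
        have : 0 ≤ (2 - t) / 4 := by have := ht.2; linarith
        simp only [hT, add_sub_cancel_left, Complex.norm_real, Real.norm_eq_abs, sq_abs, mul_pow,
          Real.sq_sqrt this]
        field_simp; ring
      obtain ⟨w, hw⟩ := hv
      have h0 := hcon w
      rw [hw, hd] at h0
      simp [S, Real.smoothTransition.one, Real.smoothTransition.zero] at h0
    have hpos : 0 < ∫ w, deriv S (T w) := by
      obtain ⟨w, hw⟩ := hex
      exact hcont.integral_pos_of_hasCompactSupport_nonneg_nonzero hcs' hnn hw
    have heq : ∀ᵐ w : ℂ, dbarR η w / (w - p) = ((deriv S (T w) * (-8 / r ^ 2) : ℝ) : ℂ) := by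
      have : ∀ᵐ w : ℂ, w ≠ p := by simp [ae_iff]
      filter_upwards [this] with w hw
      rw [hform, mul_div_cancel_right₀ _ (sub_ne_zero.2 hw)]
    rw [integral_congr_ae heq, integral_complex_ofReal, integral_mul_const]
    have : (∫ w, deriv S (T w)) * (-8 / r ^ 2) ≠ 0 := by
      have : r ≠ 0 := hr.ne'
      refine mul_ne_zero hpos.ne' (by positivity)
    exact_mod_cast this


def GoodCut (p : ℂ) (r : ℝ) (K' : Set ℂ) : Prop := ∀ ε > 0, ∃ χ : ℂ → ℝ, ContDiff ℝ 1 χ ∧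
  (∀ x, 0 ≤ χ x ∧ χ x ≤ 1) ∧ (∀ x ∈ K', χ =ᶠ[𝓝 x] fun _ => 1) ∧
  ∫ x in ball p r, χ x ^ 2 ≤ ε ∧ ∫ x in ball p r, (fderiv ℝ χ x 1) ^ 2 ≤ ε ∧
  ∫ x in ball p r, (fderiv ℝ χ x Complex.I) ^ 2 ≤ ε

lemma aux_L1 (S : Set ℂ) (hS : volume S < ⊤) (f : ℂ → ℂ)
    (hm : AEStronglyMeasurable f (volume.restrict S))
    (hf : IntegrableOn (fun z => ‖f z‖ ^ 2) S) : IntegrableOn f S := by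
  have h1 : IntegrableOn (fun _ : ℂ => (1:ℝ)) S := integrableOn_const hS.ne
  refine (h1.add hf).mono' hm (Eventually.of_forall fun x => ?_)
  simp only [Pi.add_apply]
  nlinarith [sq_nonneg (‖f x‖ - 1), norm_nonneg (f x)]

lemma aux_dslope_L2 (S : Set ℂ) (hSo : IsOpen S) (hS : volume S < ⊤) (f : ℂ → ℂ)
    (hd : DifferentiableOn ℂ f S) (hf : IntegrableOn (fun z => ‖f z‖ ^ 2) S) (z : ℂ) (hz : z ∈ S) :
    DifferentiableOn ℂ (dslope f z) S ∧ IntegrableOn (fun w => ‖dslope f z w‖ ^ 2) S := by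
  have hq : DifferentiableOn ℂ (dslope f z) S :=
    (Complex.differentiableOn_dslope (hSo.mem_nhds hz)).2 hd
  refine ⟨hq, ?_⟩
  obtain ⟨δ, hδ, hδS⟩ := Metric.nhds_basis_closedBall.mem_iff.1 (hSo.mem_nhds hz)
  obtain ⟨M, hM⟩ := (isCompact_closedBall z δ).exists_bound_of_continuousOn
    (hq.continuousOn.mono hδS)
  have h1 : IntegrableOn (fun _ : ℂ => (1:ℝ)) S := integrableOn_const hS.ne
  have hb : IntegrableOn (fun w => M ^ 2 * 1 + ((2 / δ ^ 2) * ‖f w‖ ^ 2 +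
    (2 / δ ^ 2 * ‖f z‖ ^ 2) * 1)) S := (h1.const_mul _).add ((hf.const_mul _).add (h1.const_mul _))
  refine hb.mono' ((hq.continuousOn.norm.pow 2).aestronglyMeasurable hSo.measurableSet)
    (Eventually.of_forall fun w => ?_)
  rw [Real.norm_of_nonneg (by positivity)]
  by_cases hw : w ∈ closedBall z δ
  · have := hM w hw
    have h2 : ‖dslope f z w‖ ^ 2 ≤ M ^ 2 := by gcongr
    have : 0 ≤ ((2 / δ ^ 2) * ‖f w‖ ^ 2 + (2 / δ ^ 2 * ‖f z‖ ^ 2) * 1) := by positivity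
    linarith
  · have hne : w ≠ z := by rintro rfl; exact hw (mem_closedBall_self hδ.le)
    rw [mem_closedBall, not_le, dist_eq_norm] at hw
    rw [dslope_of_ne _ hne, slope_def_field, norm_div, div_pow]
    have h3 : ‖f w - f z‖ ^ 2 ≤ 2 * ‖f w‖ ^ 2 + 2 * ‖f z‖ ^ 2 := by
      have := norm_sub_le (f w) (f z)
      nlinarith [sq_nonneg (‖f w‖ - ‖f z‖), norm_nonneg (f w - f z), norm_nonneg (f w),
        norm_nonneg (f z)]
    have h4 : ‖f w - f z‖ ^ 2 / ‖w - z‖ ^ 2 ≤ (2 * ‖f w‖ ^ 2 + 2 * ‖f z‖ ^ 2) / δ ^ 2 := by gcongr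
    have h5 : (2 * ‖f w‖ ^ 2 + 2 * ‖f z‖ ^ 2) / δ ^ 2 = ((2 / δ ^ 2) * ‖f w‖ ^ 2 +
      (2 / δ ^ 2 * ‖f z‖ ^ 2) * 1) := by ring
    nlinarith [sq_nonneg M]

lemma aux_amgm (a b τ : ℝ) (hτ : 0 < τ) : a * b ≤ a ^ 2 / τ + τ * b ^ 2 := by
  have : a ^ 2 / τ + τ * b ^ 2 - a * b = ((a - τ * b / 2) ^ 2 + 3 / 4 * (τ * b) ^ 2) / τ := by
    field_simp; ring
  have h2 : 0 ≤ ((a - τ * b / 2) ^ 2 + 3 / 4 * (τ * b) ^ 2) / τ := by positivity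
  linarith

lemma aux_pair_zero (K : Set ℂ) (hK : IsClosed K) (p : ℂ) (r : ℝ)
    (q : ℂ → ℂ) (hq : DifferentiableOn ℂ q (ball p r \ K))
    (hq2 : IntegrableOn (fun z => ‖q z‖ ^ 2) (ball p r \ K))
    (hcut : GoodCut p r (K ∩ closedBall p r))
    (η : ℂ → ℝ) (hη : ContDiff ℝ 1 η) (hηc : HasCompactSupport η) (hηs : tsupport η ⊆ ball p r)
    (hη1 : ∀ x, 0 ≤ η x ∧ η x ≤ 1) (C : ℝ) (hC : ∀ x, ‖dbarR η x‖ ≤ C) :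
    ∫ w in ball p r \ K, dbarR η w * q w = 0 := by
  set S := ball p r \ K with hSdef
  have hSo : IsOpen S := isOpen_ball.sdiff hK
  have hSb : S ⊆ ball p r := sdiff_subset
  have hSv : volume S < ⊤ := (measure_mono hSb).trans_lt measure_ball_lt_top
  have hqm : AEStronglyMeasurable q (volume.restrict S) :=
    hq.continuousOn.aestronglyMeasurable hSo.measurableSet
  have hq1 : IntegrableOn q S := aux_L1 S hSv q hqm hq2
  have hC0 : 0 ≤ C := (norm_nonneg _).trans (hC 0)
  set Q := ∫ w in S, ‖q w‖ ^ 2 with hQ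
  have hQ0 : 0 ≤ Q := by positivity
  have key : ∀ τ > 0, ‖∫ w in S, dbarR η w * q w‖ ≤ ((C + 2) * (1 + Q)) * τ := by
    intro τ hτ
    obtain ⟨χ, hχ, hχ01, hχK, h1, h2, h3⟩ := hcut (τ ^ 2) (by positivity)
    set φ : ℂ → ℝ := fun x => η x * (1 - χ x) with hφ
    have hφC : ContDiff ℝ 1 φ := hη.mul (contDiff_const.sub hχ)
    have hφc : HasCompactSupport φ := hηc.mul_right
    have hφs : tsupport φ ⊆ S := by
      intro x hx
      have hx1 : x ∈ tsupport η := tsupport_mul_subset_left hx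
      refine ⟨hηs hx1, fun hxK => ?_⟩
      have := hχK x ⟨hxK, ball_subset_closedBall (hηs hx1)⟩
      apply (notMem_tsupport_iff_eventuallyEq (f := φ) (x := x)).2 _ hx
      filter_upwards [this] with y hy
      simp [hφ, hy]
    have hz := aux_dbar_zero S hSo q hq φ hφC hφc hφs
    have hdz : ∀ x, x ∉ tsupport φ → dbarR φ x = 0 := by
      intro x hx
      have : fderiv ℝ φ x = 0 := by
        rw [(notMem_tsupport_iff_eventuallyEq.1 hx).fderiv_eq]; simp
      simp [dbarR, this]
    rw [← setIntegral_eq_integral_of_forall_compl_eq_zero (s := S)] at hz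
    swap
    · intro x hx
      rw [hdz x (fun h => hx (hφs h)), zero_mul]
    obtain ⟨C', hC'⟩ : ∃ C', ∀ x, ‖dbarR φ x‖ ≤ C' :=
      (continuous_dbarR φ hφC).bounded_above_of_compact_support
        (HasCompactSupport.intro hφc hdz)
    have i1 : IntegrableOn (fun w => dbarR η w * q w) S :=
      hq1.bdd_mul (c := C) (continuous_dbarR η hη).aestronglyMeasurable (Eventually.of_forall hC)
    have i2 : IntegrableOn (fun w => dbarR φ w * q w) S :=
      hq1.bdd_mul (c := C') (continuous_dbarR φ hφC).aestronglyMeasurable (Eventually.of_forall hC')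
    have hform : ∀ x, dbarR η x - dbarR φ x = χ x * dbarR η x + η x * dbarR χ x := by
      intro x
      have hd : HasFDerivAt φ _ x := ((hη.differentiable (by simp)).differentiableAt.hasFDerivAt).mul
        (((hχ.differentiable (by simp)).differentiableAt.hasFDerivAt (x := x)).const_sub 1)
      simp only [dbarR, hd.fderiv]
      simp
      ring
    have hcg : ∀ g : ℂ → ℝ, Continuous g → IntegrableOn g S := fun g hg =>
      (hg.continuousOn.integrableOn_compact (isCompact_closedBall p r)).mono_set
        (hSb.trans ball_subset_closedBall)
    have hcg' : ∀ g : ℂ → ℝ, Continuous g → IntegrableOn g (ball p r) := fun g hg =>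
      (hg.continuousOn.integrableOn_compact (isCompact_closedBall p r)).mono_set
        (ball_subset_closedBall)
    have hle : ∀ g : ℂ → ℝ, Continuous g → (∫ x in ball p r, g x ^ 2 ≤ τ ^ 2) →
        ∫ x in S, g x ^ 2 ≤ τ ^ 2 := fun g hg h =>
      (setIntegral_mono_set (hcg' _ (hg.pow 2)) (Eventually.of_forall fun x => sq_nonneg _)
        hSb.eventuallyLE).trans h
    have c1 : Continuous fun x => fderiv ℝ χ x 1 :=
      (hχ.continuous_fderiv (by simp)).clm_apply continuous_const
    have c2 : Continuous fun x => fderiv ℝ χ x Complex.I :=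
      (hχ.continuous_fderiv (by simp)).clm_apply continuous_const
    have hpart : ∀ g : ℂ → ℝ, Continuous g → (∫ x in ball p r, g x ^ 2 ≤ τ ^ 2) →
        IntegrableOn (fun x => g x ^ 2 / τ + τ * ‖q x‖ ^ 2) S ∧
        ∫ x in S, (g x ^ 2 / τ + τ * ‖q x‖ ^ 2) ≤ (1 + Q) * τ := by
      intro g hg h
      have a1 : IntegrableOn (fun x => g x ^ 2 / τ) S := (hcg _ (hg.pow 2)).div_const τ
      have a2 : IntegrableOn (fun x => τ * ‖q x‖ ^ 2) S := hq2.const_mul τ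
      refine ⟨a1.add a2, ?_⟩
      rw [integral_add a1 a2, integral_div, integral_const_mul]
      have : (∫ x in S, g x ^ 2) / τ ≤ τ ^ 2 / τ := by gcongr; exact hle g hg h
      have h5 : τ ^ 2 / τ = τ := by field_simp
      nlinarith
    obtain ⟨p1, b1⟩ := hpart χ hχ.continuous h1
    obtain ⟨p2, b2⟩ := hpart _ c1 h2
    obtain ⟨p3, b3⟩ := hpart _ c2 h3
    have hsub : ∫ w in S, dbarR η w * q w = ∫ w in S, (dbarR η w * q w - dbarR φ w * q w) := by
      rw [integral_sub i1 i2, hz, sub_zero]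
    rw [hsub]
    have hb := norm_integral_le_of_norm_le (μ := volume.restrict S)
      (f := fun w => dbarR η w * q w - dbarR φ w * q w)
      (((p1.const_mul C).add p2).add p3) (Eventually.of_forall fun x => by
        simp only [Pi.add_apply]
        rw [← sub_mul, hform, norm_mul]
        have n1 : ‖(χ x : ℂ) * dbarR η x + η x * dbarR χ x‖ ≤
            χ x * C + (|fderiv ℝ χ x 1| + |fderiv ℝ χ x Complex.I|) := by
          refine (norm_add_le _ _).trans ?_
          rw [norm_mul, norm_mul, Complex.norm_real, Complex.norm_real,
            Real.norm_of_nonneg (hχ01 x).1, Real.norm_of_nonneg (hη1 x).1]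
          have m1 : ‖dbarR χ x‖ ≤ |fderiv ℝ χ x 1| + |fderiv ℝ χ x Complex.I| := by
            unfold dbarR
            refine (norm_add_le _ _).trans ?_
            simp
          have m2 : η x * ‖dbarR χ x‖ ≤ 1 * ‖dbarR χ x‖ := by gcongr; exact (hη1 x).2
          have m3 : χ x * ‖dbarR η x‖ ≤ χ x * C := by gcongr; exact (hχ01 x).1; exact hC x
          linarith
        have n2 := mul_le_mul_of_nonneg_right n1 (norm_nonneg (q x))
        have d1 := mul_le_mul_of_nonneg_left (aux_amgm (χ x) ‖q x‖ τ hτ) hC0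
        have d2 := aux_amgm |fderiv ℝ χ x 1| ‖q x‖ τ hτ
        have d3 := aux_amgm |fderiv ℝ χ x Complex.I| ‖q x‖ τ hτ
        rw [sq_abs] at d2 d3
        nlinarith)
    refine hb.trans ?_
    simp only [Pi.add_apply]
    rw [integral_add, integral_add, integral_const_mul]
    · have := mul_le_mul_of_nonneg_left b1 hC0
      nlinarith
    · exact p1.const_mul C
    · exact p2
    · exact (p1.const_mul C).add p2
    · exact p3
  have hB : 0 < (C + 2) * (1 + Q) := by positivity
  by_contra hne
  have hpos := norm_pos_iff.2 hne
  have := key (‖∫ w in S, dbarR η w * q w‖ / (2 * ((C + 2) * (1 + Q)))) (by positivity)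
  have h2 : ((C + 2) * (1 + Q)) * (‖∫ w in S, dbarR η w * q w‖ / (2 * ((C + 2) * (1 + Q)))) =
    ‖∫ w in S, dbarR η w * q w‖ / 2 := by field_simp
  linarith

lemma aux_ext (D K : Set ℂ) (hK : IsClosed K) (hK0 : volume K = 0)
    (f : ℂ → ℂ) (hf : DifferentiableOn ℂ f (D \ K)) (p : ℂ) (r : ℝ) (hr : 0 < r)
    (hB : ball p r ⊆ D) (hint : IntegrableOn (fun z => ‖f z‖ ^ 2) (ball p r \ K))
    (hcut : GoodCut p r (K ∩ closedBall p r)) :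
    ∃ δ > 0, ∃ G : ℂ → ℂ, DifferentiableOn ℂ G (ball p δ) ∧ EqOn G f (ball p δ \ K) := by
  set S := ball p r \ K with hSdef
  have hSo : IsOpen S := isOpen_ball.sdiff hK
  have hSb : S ⊆ ball p r := sdiff_subset
  have hSv : volume S < ⊤ := (measure_mono hSb).trans_lt measure_ball_lt_top
  have hfS : DifferentiableOn ℂ f S := hf.mono (sdiff_subset_sdiff_left hB)
  obtain ⟨η, hη, hηc, hηs, hη1, hη0, ⟨C, hC⟩, hne⟩ := aux_eta p r hr
  have hf1 : IntegrableOn f S := aux_L1 S hSv f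
    (hfS.continuousOn.aestronglyMeasurable hSo.measurableSet) hint
  have hdc := continuous_dbarR η hη
  have h1 : IntegrableOn (fun _ : ℂ => (1:ℂ)) S := integrableOn_const hSv.ne
  have hI : ∀ h : ℂ → ℂ, IntegrableOn h S → IntegrableOn (fun w => dbarR η w * h w) S := fun h hh =>
    hh.bdd_mul (c := C) hdc.aestronglyMeasurable (Eventually.of_forall hC)
  set c : ℂ → ℂ := fun z => ∫ w in S, (dbarR η w * 1) / (w - z) with hcdef
  set Φ : ℂ → ℂ := fun z => ∫ w in S, (dbarR η w * f w) / (w - z) with hΦdef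
  have hcd : DifferentiableOn ℂ c (ball p (r/2)) :=
    aux_cauchy_diff _ _ (hI _ h1) p (r/2) fun w hw => by simp [hη0 w hw]
  have hΦd : DifferentiableOn ℂ Φ (ball p (r/2)) :=
    aux_cauchy_diff _ _ (hI _ hf1) p (r/2) fun w hw => by simp [hη0 w hw]
  have hcp : c p ≠ 0 := by
    convert hne using 1
    simp only [hcdef, mul_one]
    have hae : S =ᵐ[volume] ball p r := by
      rw [hSdef]; exact sdiff_null_ae_eq_self hK0
    rw [setIntegral_congr_set hae]
    apply setIntegral_eq_integral_of_forall_compl_eq_zero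
    intro x hx
    have : fderiv ℝ η x = 0 := by
      rw [(notMem_tsupport_iff_eventuallyEq.1 fun h => hx (hηs h)).fderiv_eq]; simp
    simp [dbarR, this]
  have hcc : ContinuousAt c p :=
    (hcd.differentiableAt (ball_mem_nhds p (by positivity))).continuousAt
  obtain ⟨δ₀, hδ₀, hδc⟩ := Metric.mem_nhds_iff.1 (hcc.eventually_ne hcp)
  refine ⟨min δ₀ (r/4), by positivity, fun z => Φ z / c z, ?_, ?_⟩
  · have hsub : ball p (min δ₀ (r/4)) ⊆ ball p (r/2) :=
      ball_subset_ball ((min_le_right _ _).trans (by linarith))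
    exact (hΦd.mono hsub).div (hcd.mono hsub) fun z hz =>
      hδc (ball_subset_ball (min_le_left _ _) hz)
  · rintro z ⟨hz, hzK⟩
    have hz4 : z ∈ ball p (r/4) := ball_subset_ball (min_le_right _ _) hz
    have hz2 : z ∈ ball p (r/2) := ball_subset_ball (by linarith) hz4
    have hzS : z ∈ S := ⟨ball_subset_ball (by linarith) hz4, hzK⟩
    have hcz : c z ≠ 0 := hδc (ball_subset_ball (min_le_left _ _) hz)
    obtain ⟨hq, hq2⟩ := aux_dslope_L2 S hSo hSv f hfS hint z hzS
    have hzero := aux_pair_zero K hK p r (dslope f z) hq hq2 hcut η hη hηc hηs hη1 C hC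
    have hkb : ∀ w, ‖dbarR η w / (w - z)‖ ≤ C / (r/4) := by
      intro w
      have hC0 : 0 ≤ C := (norm_nonneg _).trans (hC 0)
      by_cases hw : w ∈ ball p (r/2)
      · rw [hη0 w hw]; simp; positivity
      · rw [norm_div]
        have : r / 4 ≤ ‖w - z‖ := by
          rw [mem_ball, not_lt] at hw
          rw [mem_ball] at hz4
          have := dist_triangle w z p
          rw [← dist_eq_norm]; linarith
        have := hC w
        gcongr
    have hkm : AEStronglyMeasurable (fun w => dbarR η w / (w - z)) (volume.restrict S) :=
      hdc.aestronglyMeasurable.div₀ (by fun_prop)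
    have j1 : IntegrableOn (fun w => dbarR η w / (w - z) * f w) S :=
      hf1.bdd_mul (c := C / (r/4)) hkm (Eventually.of_forall hkb)
    have j2 : IntegrableOn (fun w => dbarR η w / (w - z) * 1) S :=
      h1.bdd_mul (c := C / (r/4)) hkm (Eventually.of_forall hkb)
    have hEq : ∀ w, dbarR η w * dslope f z w =
        dbarR η w / (w - z) * f w - f z * (dbarR η w / (w - z) * 1) := by
      intro w
      by_cases hw : w = z
      · rw [hw, hη0 z hz2]; simp
      · rw [dslope_of_ne _ hw, slope_def_field]; ring
    have : Φ z - f z * c z = 0 := by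
      rw [← hzero]
      simp_rw [hEq]
      rw [integral_sub j1 (j2.const_mul _), integral_const_mul]
      simp only [hΦdef, hcdef]
      congr 1
      · congr 1; ext w; ring
      · congr 2; ext w; ring
    show Φ z / c z = f z
    rw [div_eq_iff hcz]
    exact sub_eq_zero.1 this


lemma aux_taylor (F : ℂ → ℝ) (hF : ContDiff ℝ 2 F) (c : ℂ) (ε : ℝ) (hε : 0 < ε) :
    ∃ ρ > 0, ∀ y : ℂ, ‖y‖ < ρ →
      |F (c + y) - F c - fderiv ℝ F c y - (1/2) * fderiv ℝ (fderiv ℝ F) c y y| ≤ ε * ‖y‖ ^ 2 := by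
  have hF1 : ContDiff ℝ 1 (fderiv ℝ F) := hF.fderiv_right (by norm_num)
  have hd : HasFDerivAt (fderiv ℝ F) (fderiv ℝ (fderiv ℝ F) c) c :=
    (hF1.differentiable (by simp)).differentiableAt.hasFDerivAt
  have hlo := (hasFDerivAt_iff_isLittleO_nhds_zero.1 hd).def hε
  obtain ⟨ρ, hρ, hb⟩ := Metric.eventually_nhds_iff_ball.1 hlo
  refine ⟨ρ, hρ, fun y hy => ?_⟩
  set L := fderiv ℝ (fderiv ℝ F) c with hL
  set h : ℝ → ℝ := fun t => F (c + t • y) - t * fderiv ℝ F c y - t ^ 2 / 2 * L y y with hh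
  have hder : ∀ t : ℝ, HasDerivAt h (fderiv ℝ F (c + t • y) y - fderiv ℝ F c y - t * L y y) t := by
    intro t
    have e1 : HasDerivAt (fun t : ℝ => c + t • y) y t := by
      simpa using ((hasDerivAt_id t).smul_const y).const_add c
    have e2 : HasDerivAt (fun t : ℝ => F (c + t • y)) (fderiv ℝ F (c + t • y) y) t :=
      ((hF.differentiable (by simp)).differentiableAt.hasFDerivAt).comp_hasDerivAt t e1
    have e3 := (hasDerivAt_id t).mul_const (fderiv ℝ F c y)
    have e4 := (((hasDerivAt_id t).pow 2).div_const 2).mul_const (L y y)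
    refine ((e2.sub e3).sub e4).congr_deriv ?_
    simp
  have := norm_image_sub_le_of_norm_deriv_le_segment_01' (f := h) (C := ε * ‖y‖ ^ 2)
    (fun t _ => (hder t).hasDerivWithinAt) (fun t ht => by
      have hty : t • y ∈ ball (0:ℂ) ρ := by
        rw [mem_ball_zero_iff, norm_smul, Real.norm_of_nonneg ht.1]
        nlinarith [norm_nonneg y, ht.2, ht.1]
      have h1 := hb _ hty
      have h2 : fderiv ℝ F (c + t • y) y - fderiv ℝ F c y - t * L y y =
        (fderiv ℝ F (c + t • y) - fderiv ℝ F c - L (t • y)) y := by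
        rw [map_smul]; simp only [sub_apply, smul_apply, smul_eq_mul]
      rw [h2]
      refine (ContinuousLinearMap.le_opNorm _ _).trans ?_
      have h3 : ‖t • y‖ ≤ ‖y‖ := by
        rw [norm_smul, Real.norm_of_nonneg ht.1]
        nlinarith [norm_nonneg y, ht.2, ht.1]
      calc _ ≤ (ε * ‖t • y‖) * ‖y‖ := by gcongr
        _ ≤ (ε * ‖y‖) * ‖y‖ := by gcongr
        _ = _ := by ring)
  simp only [hh, Real.norm_eq_abs] at this
  convert this using 2
  simp
  ring

lemma aux_lap (F : ℂ → ℝ) (hF : ContDiff ℝ 2 F) (c : ℂ) (r₀ : ℝ) (hr₀ : 0 < r₀)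
    (h : ∀ R, 0 < R → R < r₀ →
      ∫ θ in (0:ℝ)..(2 * Real.pi), F (c + R * Complex.exp (θ * Complex.I)) ≤ 2 * Real.pi * F c) :
    fderiv ℝ (fderiv ℝ F) c 1 1 + fderiv ℝ (fderiv ℝ F) c Complex.I Complex.I ≤ 0 := by
  set L := fderiv ℝ (fderiv ℝ F) c with hL
  set l := fderiv ℝ F c with hl
  apply le_of_forall_pos_le_add
  intro ε' hε'
  set ε := ε' / 4 with hε
  have hε0 : 0 < ε := by positivity
  obtain ⟨ρ, hρ, hT⟩ := aux_taylor F hF c ε hε0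
  set R := min r₀ ρ / 2 with hR
  have hR0 : 0 < R := by positivity
  have hRr : R < r₀ := by have := min_le_left r₀ ρ; rw [hR]; linarith
  have hRρ : R < ρ := by have := min_le_right r₀ ρ; rw [hR]; linarith
  have h1 := h R hR0 hRr
  have hpt : ∀ θ : ℝ, F c + (R * l 1) * Real.cos θ + (R * l Complex.I) * Real.sin θ
      + (R ^ 2 / 2 * L 1 1) * Real.cos θ ^ 2
      + (R ^ 2 / 2 * (L 1 Complex.I + L Complex.I 1)) * (Real.sin θ * Real.cos θ)
      + (R ^ 2 / 2 * L Complex.I Complex.I) * Real.sin θ ^ 2 - ε * R ^ 2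
      ≤ F (c + R * Complex.exp (θ * Complex.I)) := by
    intro θ
    set y : ℂ := R * Complex.exp (θ * Complex.I) with hy
    have hyn : ‖y‖ = R := by
      rw [hy, norm_mul, Complex.norm_exp_ofReal_mul_I, Complex.norm_real, Real.norm_of_nonneg hR0.le,
        mul_one]
    have hye : y = (R * Real.cos θ) • (1:ℂ) + (R * Real.sin θ) • Complex.I := by
      rw [hy, Complex.exp_mul_I]; simp; ring
    have h2 := hT y (by rw [hyn]; exact hRρ)
    rw [hyn] at h2
    have h3 := (abs_le.1 h2).1
    have e1 : l y = R * Real.cos θ * l 1 + R * Real.sin θ * l Complex.I := by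
      rw [hye, map_add, map_smul, map_smul]; simp
    have e2 : L y y = R ^ 2 * (Real.cos θ ^ 2 * L 1 1 +
        Real.sin θ * Real.cos θ * (L 1 Complex.I + L Complex.I 1) +
        Real.sin θ ^ 2 * L Complex.I Complex.I) := by
      rw [hye]; simp only [map_add, map_smul, add_apply, smul_apply, smul_eq_mul]
      ring
    rw [e1, e2] at h3
    linarith
  have hint : ∫ θ in (0:ℝ)..(2 * Real.pi), (F c + (R * l 1) * Real.cos θ
      + (R * l Complex.I) * Real.sin θ
      + (R ^ 2 / 2 * L 1 1) * Real.cos θ ^ 2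
      + (R ^ 2 / 2 * (L 1 Complex.I + L Complex.I 1)) * (Real.sin θ * Real.cos θ)
      + (R ^ 2 / 2 * L Complex.I Complex.I) * Real.sin θ ^ 2 - ε * R ^ 2)
      ≤ ∫ θ in (0:ℝ)..(2 * Real.pi), F (c + R * Complex.exp (θ * Complex.I)) := by
    apply intervalIntegral.integral_mono (by positivity)
    · apply Continuous.intervalIntegrable; fun_prop
    · apply Continuous.intervalIntegrable
      have := hF.continuous
      fun_prop
    · exact hpt
  rw [intervalIntegral.integral_sub (by apply Continuous.intervalIntegrable; fun_prop)
      (by apply Continuous.intervalIntegrable; fun_prop),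
    intervalIntegral.integral_add (by apply Continuous.intervalIntegrable; fun_prop)
      (by apply Continuous.intervalIntegrable; fun_prop),
    intervalIntegral.integral_add (by apply Continuous.intervalIntegrable; fun_prop)
      (by apply Continuous.intervalIntegrable; fun_prop),
    intervalIntegral.integral_add (by apply Continuous.intervalIntegrable; fun_prop)
      (by apply Continuous.intervalIntegrable; fun_prop),
    intervalIntegral.integral_add (by apply Continuous.intervalIntegrable; fun_prop)
      (by apply Continuous.intervalIntegrable; fun_prop),
    intervalIntegral.integral_add (by apply Continuous.intervalIntegrable; fun_prop)
      (by apply Continuous.intervalIntegrable; fun_prop)] at hint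
  simp only [intervalIntegral.integral_const_mul, integral_cos, integral_sin, integral_cos_sq,
    integral_sin_sq, integral_sin_mul_cos₁, intervalIntegral.integral_const] at hint
  simp at hint
  have h4 := hint.trans (add_le_add_left h1 _)
  have hpi := Real.pi_pos
  have h5 : (Real.pi * R ^ 2 / 2) * (L 1 1 + L Complex.I Complex.I) ≤
      (Real.pi * R ^ 2 / 2) * (0 + ε') := by
    rw [hε] at h4
    nlinarith
  exact le_of_mul_le_mul_left h5 (by positivity)

lemma aux_fderiv2 (F : ℂ → ℝ) (hF : ContDiff ℝ 2 F) (c e : ℂ) :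
    fderiv ℝ (fun y => fderiv ℝ F y e) c e = fderiv ℝ (fderiv ℝ F) c e e := by
  have hF1 : ContDiff ℝ 1 (fderiv ℝ F) := hF.fderiv_right (by norm_num)
  have hd : HasFDerivAt (fderiv ℝ F) (fderiv ℝ (fderiv ℝ F) c) c :=
    (hF1.differentiable (by simp)).differentiableAt.hasFDerivAt
  have := hd.clm_apply (hasFDerivAt_const e c)
  rw [this.fderiv]; simp

lemma aux_ibp (w η : ℂ → ℝ) (hw : ContDiff ℝ 2 w) (hw1 : ∀ x, 1 ≤ w x) (hη : ContDiff ℝ 1 η)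
    (hηc : HasCompactSupport η) (e : ℂ) :
    Integrable (fun x => η x ^ 2 / w x * fderiv ℝ (fderiv ℝ w) x e e) ∧
    Integrable (fun x => η x ^ 2 * (fderiv ℝ w x e / w x) ^ 2) ∧
    Integrable (fun x => fderiv ℝ η x e ^ 2) ∧
    (1/2) * ∫ x, η x ^ 2 * (fderiv ℝ w x e / w x) ^ 2 ≤
      (∫ x, η x ^ 2 / w x * fderiv ℝ (fderiv ℝ w) x e e) + 2 * ∫ x, fderiv ℝ η x e ^ 2 := by
  have hw0 : ∀ x, w x ≠ 0 := fun x => (zero_lt_one.trans_le (hw1 x)).ne'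
  have hF1 : ContDiff ℝ 1 (fderiv ℝ w) := hw.fderiv_right (by norm_num)
  set φ : ℂ → ℝ := fun x => η x ^ 2 / w x with hφ
  have hφC : ContDiff ℝ 1 φ := (hη.pow 2).div (hw.of_le (by norm_num)) hw0
  have hz : ∀ x, x ∉ tsupport η → η x = 0 := fun x hx => image_eq_zero_of_notMem_tsupport hx
  have hφc : HasCompactSupport φ := HasCompactSupport.intro hηc fun x hx => by simp [hφ, hz x hx]
  have cdw : Continuous fun x => fderiv ℝ w x e :=
    hF1.continuous.clm_apply continuous_const
  have cddw : Continuous fun x => fderiv ℝ (fderiv ℝ w) x e e :=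
    ((hF1.continuous_fderiv (by simp)).clm_apply continuous_const).clm_apply continuous_const
  have cdφ : Continuous fun x => fderiv ℝ φ x e :=
    (hφC.continuous_fderiv (by simp)).clm_apply continuous_const
  have cdη : Continuous fun x => fderiv ℝ η x e :=
    (hη.continuous_fderiv (by simp)).clm_apply continuous_const
  have cw := hw.continuous
  have cη := hη.continuous
  have i1 : Integrable (fun x => φ x * fderiv ℝ (fderiv ℝ w) x e e) :=
    (hφC.continuous.mul cddw).integrable_of_hasCompactSupport hφc.mul_right
  have i2 : Integrable (fun x => η x ^ 2 * (fderiv ℝ w x e / w x) ^ 2) :=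
    ((cη.pow 2).mul ((cdw.div cw hw0).pow 2)).integrable_of_hasCompactSupport
      (HasCompactSupport.intro hηc fun x hx => by simp [hz x hx])
  have i3 : Integrable (fun x => fderiv ℝ η x e ^ 2) :=
    (cdη.pow 2).integrable_of_hasCompactSupport
      (HasCompactSupport.intro (hηc.fderiv_apply ℝ e) fun x hx => by
        simp [image_eq_zero_of_notMem_tsupport hx])
  refine ⟨i1, i2, i3, ?_⟩
  have ibp := integral_mul_fderiv_eq_neg_fderiv_mul_of_integrable (μ := (volume : Measure ℂ))
    (f := φ) (g := fun x => fderiv ℝ w x e) (v := e)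
    ((cdφ.mul cdw).integrable_of_hasCompactSupport (hφc.fderiv_apply ℝ e).mul_right)
    (by simp_rw [aux_fderiv2 w hw]; exact i1)
    ((hφC.continuous.mul cdw).integrable_of_hasCompactSupport hφc.mul_right)
    (fun x _ => (hφC.differentiable (by simp)).differentiableAt)
    (fun x _ => (hF1.differentiable (by simp)).differentiableAt.clm_apply (by fun_prop))
  simp_rw [aux_fderiv2 w hw] at ibp
  have i4 : Integrable (fun x => fderiv ℝ φ x e * fderiv ℝ w x e) :=
    (cdφ.mul cdw).integrable_of_hasCompactSupport (hφc.fderiv_apply ℝ e).mul_right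
  have hform : ∀ x, fderiv ℝ φ x e = 2 * η x * fderiv ℝ η x e / w x
      - η x ^ 2 * fderiv ℝ w x e / w x ^ 2 := by
    intro x
    have a1 : HasFDerivAt η _ x := (hη.differentiable (by simp)).differentiableAt.hasFDerivAt
    have a2 : HasFDerivAt w _ x := (hw.differentiable (by simp)).differentiableAt.hasFDerivAt
    have a2' : HasFDerivAt (fun x => (w x)⁻¹) _ x := (hasDerivAt_inv (hw0 x)).comp_hasFDerivAt x a2
    have a3 : HasFDerivAt (fun x => η x ^ 2 * (w x)⁻¹) _ x := (a1.pow 2).mul a2'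
    simp only [hφ, div_eq_mul_inv (η _ ^ 2)]
    rw [a3.fderiv]
    have := hw0 x
    simp
    field_simp
    ring
  have i5 : Integrable (fun x => -(fderiv ℝ φ x e * fderiv ℝ w x e)) := i4.neg
  change _ ≤ (∫ x, φ x * fderiv ℝ (fderiv ℝ w) x e e) + _
  rw [ibp, ← integral_neg, ← integral_const_mul, ← integral_const_mul, ← integral_add i5 (i3.const_mul 2)]
  apply integral_mono (i2.const_mul _) (i5.add (i3.const_mul 2))
  intro x
  simp only [Pi.add_apply, Pi.neg_apply]
  rw [hform]
  have : -((2 * η x * fderiv ℝ η x e / w x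
      - η x ^ 2 * fderiv ℝ w x e / w x ^ 2) * fderiv ℝ w x e) + 2 * fderiv ℝ η x e ^ 2 -
      1 / 2 * (η x ^ 2 * (fderiv ℝ w x e / w x) ^ 2) =
      2 * (fderiv ℝ η x e - η x * (fderiv ℝ w x e / w x) / 2) ^ 2 := by
    have := hw0 x
    field_simp; ring
  nlinarith [sq_nonneg (fderiv ℝ η x e - η x * (fderiv ℝ w x e / w x) / 2)]

/-- energy bound for the logarithm of a positive superharmonic function -/
lemma aux_energy (p : ℂ) (r r' : ℝ) (hr : 0 < r) (hrr : r < r') : ∃ E : ℝ, ∀ w : ℂ → ℝ,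
    ContDiff ℝ 2 w → (∀ x, 1 ≤ w x) →
    (∀ x ∈ ball p r', fderiv ℝ (fderiv ℝ w) x 1 1 +
      fderiv ℝ (fderiv ℝ w) x Complex.I Complex.I ≤ 0) →
    ∫ x in ball p r, (fderiv ℝ w x 1 / w x) ^ 2 ≤ E ∧
    ∫ x in ball p r, (fderiv ℝ w x Complex.I / w x) ^ 2 ≤ E := by
  let b : ContDiffBump p := ⟨r, (r + r') / 2, hr, by linarith⟩
  have hη : ContDiff ℝ 1 (b : ℂ → ℝ) := b.contDiff
  have hηc : HasCompactSupport (b : ℂ → ℝ) := b.hasCompactSupport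
  refine ⟨4 * ((∫ x, fderiv ℝ b x 1 ^ 2) + ∫ x, fderiv ℝ b x Complex.I ^ 2), fun w hw hw1 hlap => ?_⟩
  obtain ⟨a1, a2, a3, a4⟩ := aux_ibp w b hw hw1 hη hηc 1
  obtain ⟨b1, b2, b3, b4⟩ := aux_ibp w b hw hw1 hη hηc Complex.I
  have hneg : (∫ x, b x ^ 2 / w x * fderiv ℝ (fderiv ℝ w) x 1 1) +
      ∫ x, b x ^ 2 / w x * fderiv ℝ (fderiv ℝ w) x Complex.I Complex.I ≤ 0 := by
    rw [← integral_add a1 b1]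
    apply integral_nonpos
    intro x
    simp only [Pi.zero_apply]
    rw [← mul_add]
    by_cases hx : x ∈ ball p r'
    · have : 0 ≤ b x ^ 2 / w x := div_nonneg (sq_nonneg _) (zero_le_one.trans (hw1 x))
      exact mul_nonpos_of_nonneg_of_nonpos this (hlap x hx)
    · rw [b.zero_of_le_dist]
      · simp
      · simp only [mem_ball, not_lt] at hx
        show (r + r') / 2 ≤ _
        linarith
  have hset : ∀ e, Integrable (fun x => b x ^ 2 * (fderiv ℝ w x e / w x) ^ 2) →
      ∫ x in ball p r, (fderiv ℝ w x e / w x) ^ 2 ≤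
      ∫ x, b x ^ 2 * (fderiv ℝ w x e / w x) ^ 2 := by
    intro e hi
    have : ∫ x in ball p r, (fderiv ℝ w x e / w x) ^ 2 =
        ∫ x in ball p r, b x ^ 2 * (fderiv ℝ w x e / w x) ^ 2 := by
      apply setIntegral_congr_fun measurableSet_ball
      intro x hx
      simp [b.one_of_mem_closedBall (ball_subset_closedBall hx)]
    rw [this]
    exact setIntegral_le_integral hi (Eventually.of_forall fun x => by positivity)
  have n1 : 0 ≤ ∫ x, b x ^ 2 * (fderiv ℝ w x 1 / w x) ^ 2 := integral_nonneg fun x => by positivity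
  have n2 : 0 ≤ ∫ x, b x ^ 2 * (fderiv ℝ w x Complex.I / w x) ^ 2 :=
    integral_nonneg fun x => by positivity
  have s1 := hset 1 a2
  have s2 := hset Complex.I b2
  constructor <;> linarith


lemma aux_mollify (w0 : ℂ → ℝ) (hm : Measurable w0) (L : ℝ) (h1 : ∀ x, 1 ≤ w0 x)
    (hL : ∀ x, w0 x ≤ L) (p : ℂ) (r' R' ε : ℝ) (hε : 0 < ε) (hrR : r' + ε ≤ R')
    (hsup : ∀ c R, 0 < R → closedBall c R ⊆ ball p R' →
      ∫ θ in (0:ℝ)..(2 * Real.pi), w0 (c + R * Complex.exp (θ * Complex.I)) ≤ 2 * Real.pi * w0 c) :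
    ∃ w : ℂ → ℝ, ContDiff ℝ 2 w ∧
      (∀ x T, (∀ y ∈ ball x ε, T ≤ w0 y) → T ≤ w x) ∧
      (∀ x ∈ ball p r', fderiv ℝ (fderiv ℝ w) x 1 1 +
        fderiv ℝ (fderiv ℝ w) x Complex.I Complex.I ≤ 0) ∧
      ∫ x in ball p r', w x ≤ ∫ x in ball p R', w0 x := by
  let b : ContDiffBump (0:ℂ) := ⟨ε / 2, ε, by positivity, by linarith⟩
  set ρ : ℂ → ℝ := b.normed volume with hρ
  have hρC : ContDiff ℝ 2 ρ := b.contDiff_normed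
  have hρc : HasCompactSupport ρ := b.hasCompactSupport_normed
  have hρ0 : ∀ y, 0 ≤ ρ y := b.nonneg_normed
  have hρ1 : ∫ y, ρ y = 1 := b.integral_normed
  have hρi : Integrable ρ := b.integrable_normed
  have hρs : ∀ y, y ∉ ball (0:ℂ) ε → ρ y = 0 := by
    intro y hy
    have : Function.support ρ = ball (0:ℂ) ε := b.support_normed_eq
    by_contra h
    exact hy (this ▸ h)
  have hL0 : 0 ≤ L := zero_le_one.trans ((h1 0).trans (hL 0))
  have hbd : ∀ x, ‖w0 x‖ ≤ L := fun x => by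
    rw [Real.norm_of_nonneg (zero_le_one.trans (h1 x))]; exact hL x
  have hloc : LocallyIntegrable w0 := by
    have : LocallyIntegrable (fun _ : ℂ => L) := locallyIntegrable_const L
    exact this.mono hm.aestronglyMeasurable (Eventually.of_forall fun x => by
      rw [Real.norm_of_nonneg hL0]; exact hbd x)
  set w : ℂ → ℝ := fun x => ∫ y, ρ y * w0 (x - y) with hw
  have hwC : ContDiff ℝ 2 w :=
    hρc.contDiff_convolution_left (ContinuousLinearMap.mul ℝ ℝ) hρC hloc
  have hi : ∀ x, Integrable fun y => ρ y * w0 (x - y) := fun x =>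
    hρi.mul_bdd (c := L)
      (hm.comp (measurable_const.sub measurable_id)).aestronglyMeasurable (Eventually.of_forall fun y => hbd _)
  refine ⟨w, hwC, ?_, ?_, ?_⟩
  · intro x T hT
    have : T = ∫ y, ρ y * T := by rw [integral_mul_const, hρ1, one_mul]
    rw [this]
    apply integral_mono (hρi.mul_const T) (hi x)
    intro y
    by_cases hy : y ∈ ball (0:ℂ) ε
    · apply mul_le_mul_of_nonneg_left _ (hρ0 y)
      apply hT
      simpa [dist_eq_norm] using hy
    · simp [hρs y hy]
  · intro x hx
    rw [mem_ball] at hx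
    apply aux_lap w hwC x (r' - dist x p) (by linarith)
    intro R hR hR2
    simp only [hw]
    rw [intervalIntegral.integral_of_le (by positivity)]
    have hμ : IsFiniteMeasure (volume.restrict (Ioc 0 (2 * Real.pi))) := inferInstance
    rw [integral_integral_swap]
    · rw [← integral_const_mul]
      have hint : Integrable fun y => 2 * Real.pi * (ρ y * w0 (x - y)) := (hi x).const_mul _
      by_cases hI : Integrable fun y => ∫ θ in Ioc 0 (2 * Real.pi),
          ρ y * w0 (x + R * Complex.exp (θ * Complex.I) - y)
      · apply integral_mono hI hint
        intro y
        simp only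
        rw [integral_const_mul]
        by_cases hy : y ∈ ball (0:ℂ) ε
        · have h3 := hsup (x - y) R hR (by
            intro z hz
            rw [mem_closedBall] at hz
            rw [mem_ball]
            have t1 := dist_triangle z (x - y) p
            have t2 := dist_triangle (x - y) x p
            have t3 : dist (x - y) x < ε := by simpa [dist_eq_norm] using hy
            linarith)
          rw [intervalIntegral.integral_of_le (by positivity)] at h3
          have h4 := mul_le_mul_of_nonneg_left h3 (hρ0 y)
          have h5 : ∀ θ : ℝ, x + R * Complex.exp (θ * Complex.I) - y =
            x - y + R * Complex.exp (θ * Complex.I) := fun θ => by ring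
          simp_rw [h5]
          linarith
        · simp [hρs y hy]
      · rw [integral_undef hI]
        apply integral_nonneg
        intro y
        have := h1 (x - y)
        have := hρ0 y
        positivity
    · have hd : Integrable (fun z : ℝ × ℂ => L * ρ z.2)
          ((volume.restrict (Ioc 0 (2 * Real.pi))).prod volume) :=
        (hρi.const_mul L).comp_snd _
      refine hd.mono' ?_ (Eventually.of_forall fun z => ?_)
      · apply Measurable.aestronglyMeasurable
        have := hρC.continuous.measurable
        unfold Function.uncurry
        fun_prop
      · simp only [Function.uncurry, norm_mul]
        rw [Real.norm_of_nonneg (hρ0 _), mul_comm]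
        exact mul_le_mul_of_nonneg_right (hbd _) (hρ0 _)
  · simp only [hw]
    rw [integral_integral_swap]
    · have hJ : ∀ y ∈ ball (0:ℂ) ε, ∫ x in ball p r', w0 (x - y) ≤ ∫ x in ball p R', w0 x := by
        intro y hy
        rw [← integral_indicator measurableSet_ball, ← integral_indicator measurableSet_ball,
          ← integral_add_right_eq_self _ y]
        have hio : IntegrableOn w0 (ball p R') :=
          (hloc.integrableOn_isCompact (isCompact_closedBall p R')).mono_set ball_subset_closedBall
        apply integral_mono_of_nonneg
        · refine Eventually.of_forall fun x => indicator_nonneg (fun z _ => ?_) _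
          exact zero_le_one.trans (h1 _)
        · exact hio.integrable_indicator measurableSet_ball
        · refine Eventually.of_forall fun x => ?_
          by_cases hx : x + y ∈ ball p r'
          · have hx' : x ∈ ball p R' := by
              rw [mem_ball] at hx ⊢
              have t1 := dist_triangle x (x + y) p
              have t3 : dist x (x + y) < ε := by simpa [dist_eq_norm] using hy
              linarith
            simp [hx, hx']
          · simp only [indicator_of_notMem hx]
            exact indicator_nonneg (fun z _ => zero_le_one.trans (h1 z)) _
      have hJ0 : 0 ≤ ∫ x in ball p R', w0 x := integral_nonneg fun x => zero_le_one.trans (h1 x)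
      calc _ ≤ ∫ y, ρ y * ∫ x in ball p R', w0 x := by
            apply integral_mono_of_nonneg
            · refine Eventually.of_forall fun y => integral_nonneg fun x => ?_
              exact mul_nonneg (hρ0 y) (zero_le_one.trans (h1 _))
            · exact hρi.mul_const _
            · refine Eventually.of_forall fun y => ?_
              simp only
              rw [integral_const_mul]
              by_cases hy : y ∈ ball (0:ℂ) ε
              · exact mul_le_mul_of_nonneg_left (hJ y hy) (hρ0 y)
              · simp [hρs y hy]
        _ = _ := by rw [integral_mul_const, hρ1, one_mul]
    · have hfin : IsFiniteMeasure (volume.restrict (ball p r')) :=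
        ⟨by rw [Measure.restrict_apply_univ]; exact measure_ball_lt_top⟩
      have hd : Integrable (fun z : ℂ × ℂ => L * ρ z.2)
          ((volume.restrict (ball p r')).prod volume) :=
        (hρi.const_mul L).comp_snd _
      refine hd.mono' ?_ (Eventually.of_forall fun z => ?_)
      · apply Measurable.aestronglyMeasurable
        have := hρC.continuous.measurable
        unfold Function.uncurry
        fun_prop
      · simp only [Function.uncurry, norm_mul]
        rw [Real.norm_of_nonneg (hρ0 _), mul_comm]
        exact mul_le_mul_of_nonneg_right (hbd _) (hρ0 _)

lemma aux_S_bound : ∃ C > 0, (∀ t, |deriv Real.smoothTransition t| ≤ C) ∧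
    ∀ t, 0 ≤ t → Real.smoothTransition t ≤ C * t := by
  have hS : ContDiff ℝ 1 Real.smoothTransition := Real.smoothTransition.contDiff (n := 1)
  have hc : HasCompactSupport (deriv Real.smoothTransition) := by
    apply HasCompactSupport.intro (isCompact_Icc (a := (0:ℝ)) (b := 1))
    intro t ht
    rw [mem_Icc, not_and_or, not_le, not_le] at ht
    rcases ht with ht | ht
    · have : Real.smoothTransition =ᶠ[𝓝 t] fun _ => 0 := by
        filter_upwards [Iio_mem_nhds ht] with y hy
        exact Real.smoothTransition.zero_of_nonpos (le_of_lt hy)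
      rw [this.deriv_eq]; simp
    · have : Real.smoothTransition =ᶠ[𝓝 t] fun _ => 1 := by
        filter_upwards [Ioi_mem_nhds ht] with y hy
        exact Real.smoothTransition.one_of_one_le (le_of_lt hy)
      rw [this.deriv_eq]; simp
  obtain ⟨C, hC⟩ := (hS.continuous_deriv (by simp)).bounded_above_of_compact_support hc
  have hC0 : 0 ≤ C := (norm_nonneg _).trans (hC 0)
  have hb : ∀ t, |deriv Real.smoothTransition t| ≤ C + 1 := fun t => (hC t).trans (by linarith)
  refine ⟨C + 1, by positivity, hb, fun t ht => ?_⟩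
  have := Convex.norm_image_sub_le_of_norm_deriv_le (f := Real.smoothTransition) (C := C + 1)
    (s := univ) (x := 0) (y := t) (fun x _ => (hS.differentiable (by simp)).differentiableAt)
    (fun x _ => hb x) convex_univ (mem_univ _) (mem_univ _)
  rw [Real.smoothTransition.zero, sub_zero, sub_zero, Real.norm_of_nonneg ht] at this
  exact (le_abs_self _).trans this

lemma aux_goodcut (p : ℂ) (r R' : ℝ) (hr : 0 < r) (hrR : r < R') (K' : Set ℂ) (hK : IsCompact K')
    (J : ℝ)
    (H : ∀ T : ℝ, ∃ (w0 : ℂ → ℝ) (L : ℝ), Measurable w0 ∧ (∀ x, 1 ≤ w0 x) ∧ (∀ x, w0 x ≤ L) ∧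
      (∀ c R, 0 < R → closedBall c R ⊆ ball p R' →
        ∫ θ in (0:ℝ)..(2 * Real.pi), w0 (c + R * Complex.exp (θ * Complex.I)) ≤
          2 * Real.pi * w0 c) ∧
      (∫ x in ball p R', w0 x ≤ J) ∧ ∃ O, IsOpen O ∧ K' ⊆ O ∧ ∀ x ∈ O, T ≤ w0 x) :
    GoodCut p r K' := by
  intro ε hε
  obtain ⟨C, hC0, hC, hC'⟩ := aux_S_bound
  set r' := (r + R') / 2 with hr'
  have hrr' : r < r' := by rw [hr']; linarith
  have hr'R : r' < R' := by rw [hr']; linarith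
  obtain ⟨E, hE⟩ := aux_energy p r r' hr hrr'
  set M := max 1 (max (C * J / ε) (C ^ 2 * E / ε)) with hM
  have hM1 : 1 ≤ M := le_max_left _ _
  have hMJ : C * J ≤ M * ε := by
    rw [← div_le_iff₀ hε]; exact (le_max_left _ _).trans (le_max_right _ _)
  have hME : C ^ 2 * E ≤ M * ε := by
    rw [← div_le_iff₀ hε]; exact (le_max_right _ _).trans (le_max_right _ _)
  have hM0 : 0 < M := by linarith
  obtain ⟨w0, L, hm, h1, hL, hsup, hJ, O, hO, hKO, hOT⟩ := H (Real.exp M)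
  obtain ⟨δ, hδ, hδO⟩ := hK.exists_thickening_subset_open hO hKO
  obtain ⟨w, hwC, hwT, hlap, hwJ⟩ := aux_mollify w0 hm L h1 hL p r' R' (min (δ/2) (R' - r'))
    (lt_min (by positivity) (by linarith)) (by have := min_le_right (δ/2) (R' - r'); linarith) hsup
  have hw1 : ∀ x, 1 ≤ w x := fun x => hwT x 1 fun y _ => h1 y
  have hw0 : ∀ x, w x ≠ 0 := fun x => (zero_lt_one.trans_le (hw1 x)).ne'
  obtain ⟨e1, e2⟩ := hE w hwC hw1 hlap
  set S := Real.smoothTransition with hSdef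
  have hS : ContDiff ℝ 1 S := Real.smoothTransition.contDiff (n := 1)
  set χ : ℂ → ℝ := fun x => S (Real.log (w x) / M) with hχ
  have hwC1 : ContDiff ℝ 1 w := hwC.of_le (by norm_num)
  have hχC : ContDiff ℝ 1 χ := hS.comp ((hwC1.log hw0).div_const M)
  have hlog0 : ∀ x, 0 ≤ Real.log (w x) := fun x => Real.log_nonneg (hw1 x)
  have h01 : ∀ x, 0 ≤ χ x ∧ χ x ≤ 1 := fun x =>
    ⟨Real.smoothTransition.nonneg _, Real.smoothTransition.le_one _⟩
  have hcg' : ∀ g : ℂ → ℝ, Continuous g → ∀ s, IntegrableOn g (ball p s) := fun g hg s =>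
      (hg.continuousOn.integrableOn_compact (isCompact_closedBall p s)).mono_set
        (ball_subset_closedBall)
  have hder : ∀ x e, fderiv ℝ χ x e = deriv S (Real.log (w x) / M) * (1 / M) *
      (fderiv ℝ w x e / w x) := by
    intro x e
    have a2 : HasFDerivAt w _ x := (hwC.differentiable (by simp)).differentiableAt.hasFDerivAt
    have a3 : HasDerivAt (fun t => S (Real.log t / M)) _ (w x) :=
      HasDerivAt.comp (w x) (h₂ := S) ((hS.differentiable (by simp)).differentiableAt.hasDerivAt)
        ((Real.hasDerivAt_log (hw0 x)).div_const M)
    have a4 : HasFDerivAt χ _ x := a3.comp_hasFDerivAt x a2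
    rw [a4.fderiv]
    simp
    field_simp
  have hgrad : ∀ e, (∫ x in ball p r, (fderiv ℝ w x e / w x) ^ 2 ≤ E) →
      ∫ x in ball p r, (fderiv ℝ χ x e) ^ 2 ≤ ε := by
    intro e he
    have cdw : Continuous fun x => fderiv ℝ w x e :=
      (hwC1.continuous_fderiv (by simp)).clm_apply continuous_const
    have cdχ : Continuous fun x => fderiv ℝ χ x e :=
      (hχC.continuous_fderiv (by simp)).clm_apply continuous_const
    have : ∫ x in ball p r, (fderiv ℝ χ x e) ^ 2 ≤
        ∫ x in ball p r, C ^ 2 / M ^ 2 * (fderiv ℝ w x e / w x) ^ 2 := by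
      apply setIntegral_mono (hcg' _ (cdχ.pow 2) r)
        ((hcg' _ ((cdw.div hwC.continuous hw0).pow 2) r).const_mul _)
      intro x
      show (fderiv ℝ χ x e)^2 ≤ C^2/M^2 * (fderiv ℝ w x e / w x)^2
      rw [hder, mul_pow, mul_pow, one_div, inv_pow, ← div_eq_mul_inv]
      have := sq_le_sq' (abs_le.1 (hC (Real.log (w x) / M))).1 (abs_le.1 (hC (Real.log (w x) / M))).2
      gcongr
    refine this.trans ?_
    rw [integral_const_mul]
    have hE0 : 0 ≤ ∫ x in ball p r, (fderiv ℝ w x e / w x) ^ 2 := integral_nonneg fun x => sq_nonneg _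
    calc _ ≤ C ^ 2 / M ^ 2 * E := by gcongr
      _ = (C ^ 2 * E) / M ^ 2 := by ring
      _ ≤ (M * ε) / M ^ 2 := by gcongr
      _ = ε / M := by field_simp
      _ ≤ ε := div_le_self hε.le hM1
  refine ⟨χ, hχC, h01, ?_, ?_, hgrad _ e1, hgrad _ e2⟩
  · intro x hx
    filter_upwards [ball_mem_nhds x (half_pos hδ)] with y hy
    apply Real.smoothTransition.one_of_one_le
    rw [le_div_iff₀ hM0, one_mul, Real.le_log_iff_exp_le (by linarith [hw1 y])]
    apply hwT
    intro z hz
    apply hOT z (hδO _)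
    rw [mem_thickening_iff]
    refine ⟨x, hx, ?_⟩
    have t := dist_triangle z y x
    rw [mem_ball] at hy hz
    have := min_le_left (δ/2) (R' - r')
    linarith
  · have : ∫ x in ball p r, χ x ^ 2 ≤ ∫ x in ball p r, C / M * w x := by
      apply setIntegral_mono (hcg' _ (hχC.continuous.pow 2) r)
        ((hcg' _ hwC.continuous r).const_mul _)
      intro x
      show χ x ^ 2 ≤ C / M * w x
      have q1 : χ x ^ 2 ≤ χ x := by nlinarith [h01 x]
      have q2 : χ x ≤ C * (Real.log (w x) / M) := hC' _ (div_nonneg (hlog0 x) hM0.le)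
      have q3 : Real.log (w x) ≤ w x := (Real.log_le_sub_one_of_pos (by linarith [hw1 x])).trans
        (by linarith)
      calc _ ≤ C * (Real.log (w x) / M) := q1.trans q2
        _ ≤ C * (w x / M) := by gcongr
        _ = _ := by ring
    refine this.trans ?_
    rw [integral_const_mul]
    have hmono : ∫ x in ball p r, w x ≤ ∫ x in ball p r', w x :=
      setIntegral_mono_set (hcg' _ hwC.continuous r')
        (Eventually.of_forall fun x => zero_le_one.trans (hw1 x))
        (ball_subset_ball hrr'.le).eventuallyLE
    calc _ ≤ C / M * J := by gcongr; exact hmono.trans (hwJ.trans hJ)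
      _ = C * J / M := by ring
      _ ≤ M * ε / M := by gcongr
      _ = ε := by field_simp


lemma aux_disc (f : ℂ → ℝ) (hm : Measurable f) (L : ℝ) (h0 : ∀ x, 0 ≤ f x) (hL : ∀ x, f x ≤ L)
    (c : ℂ) (R M : ℝ)
    (h : ∀ s, 0 < s → s < R →
      ∫ θ in (0:ℝ)..(2 * Real.pi), f (c + s * Complex.exp (θ * Complex.I)) ≤ 2 * Real.pi * M) :
    ∫⁻ x in ball c R, ENNReal.ofReal (f x) ≤
      ENNReal.ofReal R * (ENNReal.ofReal (2 * Real.pi * M) * ENNReal.ofReal R) := by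
  have hbd : ∀ x, ‖f x‖ ≤ L := fun x => by rw [Real.norm_of_nonneg (h0 x)]; exact hL x
  rw [← lintegral_indicator measurableSet_ball, ← lintegral_add_left_eq_self _ c,
    ← Complex.lintegral_comp_polarCoord_symm, polarCoord_target, Measure.volume_eq_prod,
    ← Measure.prod_restrict]
  have hmeas : Measurable fun z : ℝ × ℝ => ENNReal.ofReal z.1 • (ball c R).indicator
      (fun x => ENNReal.ofReal (f x)) (c + Complex.polarCoord.symm z) := by
    have h1 : Measurable fun z : ℝ × ℝ => c + Complex.polarCoord.symm z := by
      simp only [Complex.polarCoord_symm_apply]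
      fun_prop
    have h2 : Measurable ((ball c R).indicator (fun x => ENNReal.ofReal (f x))) :=
      (hm.ennreal_ofReal).indicator measurableSet_ball
    exact (measurable_fst.ennreal_ofReal).mul (h2.comp h1)
  rw [lintegral_prod _ hmeas.aemeasurable]
  calc _ ≤ ∫⁻ s in Ioi (0:ℝ), (Ioo 0 R).indicator
        (fun _ => ENNReal.ofReal R * ENNReal.ofReal (2 * Real.pi * M)) s := by
        apply setLIntegral_mono' measurableSet_Ioi
        intro s hs
        rw [mem_Ioi] at hs
        have hexp : ∀ θ : ℝ, Complex.polarCoord.symm (s, θ) = s * Complex.exp (θ * Complex.I) := by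
          intro θ
          rw [Complex.polarCoord_symm_apply, Complex.exp_mul_I]
          simp
        have hdist : ∀ θ : ℝ, dist (c + s * Complex.exp (θ * Complex.I)) c = s := by
          intro θ
          simp [dist_eq_norm, Complex.norm_exp_ofReal_mul_I, abs_of_pos hs]
        by_cases hsR : s < R
        · rw [indicator_of_mem (show s ∈ Ioo 0 R from ⟨hs, hsR⟩)]
          have : ∀ θ : ℝ, ENNReal.ofReal s • (ball c R).indicator
              (fun x => ENNReal.ofReal (f x)) (c + Complex.polarCoord.symm (s, θ)) =
              ENNReal.ofReal s * ENNReal.ofReal (f (c + s * Complex.exp (θ * Complex.I))) := by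
            intro θ
            rw [hexp, indicator_of_mem (by rw [mem_ball, hdist]; exact hsR), smul_eq_mul]
          simp_rw [this]
          have hmθ : Measurable fun θ : ℝ => f (c + s * Complex.exp (θ * Complex.I)) := by fun_prop
          rw [lintegral_const_mul _ hmθ.ennreal_ofReal]
          gcongr
          have hi : IntegrableOn (fun θ : ℝ => f (c + s * Complex.exp (θ * Complex.I)))
              (Ioo (-Real.pi) Real.pi) := by
            refine Measure.integrableOn_of_bounded (M := L) (by simp) hmθ.aestronglyMeasurable
              (Eventually.of_forall fun θ => hbd _)
          rw [← ofReal_integral_eq_lintegral_ofReal hi (Eventually.of_forall fun θ => h0 _)]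
          apply ENNReal.ofReal_le_ofReal
          refine le_trans (le_of_eq ?_) (h s hs hsR)
          rw [← integral_Ioc_eq_integral_Ioo,
            ← intervalIntegral.integral_of_le (by linarith [Real.pi_pos])]
          have hper : Function.Periodic (fun θ : ℝ => f (c + s * Complex.exp (θ * Complex.I)))
              (2 * Real.pi) := by
            intro θ
            simp only
            congr 3
            push_cast
            rw [add_mul, Complex.exp_add, Complex.exp_two_pi_mul_I, mul_one]
          have := hper.intervalIntegral_add_eq (-Real.pi) 0
          rw [zero_add, show -Real.pi + 2 * Real.pi = Real.pi by ring] at this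
          exact this
        · have : ∀ θ : ℝ, ENNReal.ofReal s • (ball c R).indicator
              (fun x => ENNReal.ofReal (f x)) (c + Complex.polarCoord.symm (s, θ)) = 0 := by
            intro θ
            rw [hexp, indicator_of_notMem (by rw [mem_ball, hdist]; exact hsR), smul_zero]
          simp_rw [this]
          simp
    _ ≤ ∫⁻ s, (Ioo 0 R).indicator
        (fun _ => ENNReal.ofReal R * ENNReal.ofReal (2 * Real.pi * M)) s := setLIntegral_le_lintegral _ _
    _ = _ := by
        rw [lintegral_indicator measurableSet_Ioo, lintegral_const, Measure.restrict_apply_univ,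
          Real.volume_Ioo, sub_zero, mul_assoc]

lemma aux_trunc (u : ℂ → EReal) (U : Set ℂ) (hu : SubharmonicOn u U) (q : ℂ) (ρ : ℝ) (hρ : 0 < ρ)
    (hU : closedBall q ρ ⊆ U) :
    ∃ (C : ℝ) (b : ℕ → ℂ → ℝ), (∀ n, Measurable (b n)) ∧ (∀ n x, 1 ≤ b n x) ∧
      (∀ n x, b n x ≤ C + n) ∧
      (∀ n c R, 0 < R → closedBall c R ⊆ closedBall q ρ →
        ∫ θ in (0:ℝ)..(2 * Real.pi), b n (c + R * Complex.exp (θ * Complex.I)) ≤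
          2 * Real.pi * b n c) ∧
      (∀ (n : ℕ) x (T : ℝ), x ∈ closedBall q ρ → u x ≤ ((-T : ℝ) : EReal) → T ≤ n → T ≤ b n x) ∧
      (∀ x ∈ closedBall q ρ, u x ≠ ⊥ → ∃ B, ∀ n, b n x ≤ B) := by
  classical
  obtain ⟨husc, htop, hmean⟩ := hu
  have husc' := husc.mono hU
  obtain ⟨x0, hx0, hmax⟩ := husc'.exists_isMaxOn ⟨q, mem_closedBall_self hρ.le⟩
    (isCompact_closedBall q ρ)
  obtain ⟨A, hA0, hA⟩ : ∃ A : ℝ, 0 ≤ A ∧ ∀ x ∈ closedBall q ρ, u x ≤ A := by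
    refine ⟨max 0 (u x0).toReal, le_max_left _ _, fun x hx => (hmax hx).trans ?_⟩
    refine (EReal.le_coe_toReal (htop x0 (hU hx0)).ne).trans ?_
    exact_mod_cast le_max_right _ _
  set t : ℕ → ℂ → ℝ := fun n x => (max (u x) (-(n : ℝ) : EReal)).toReal with ht
  have hcoe : ∀ n, ∀ x ∈ closedBall q ρ, ((t n x : ℝ) : EReal) = max (u x) (-(n : ℝ) : EReal) := by
    intro n x hx
    apply EReal.coe_toReal
    · have := htop x (hU hx)
      rw [Ne, max_eq_top]
      push Not
      refine ⟨this.ne, ?_⟩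
      rw [← EReal.coe_neg]; exact EReal.coe_ne_top _
    · intro h
      rw [max_eq_bot, ← EReal.coe_neg] at h
      exact EReal.coe_ne_bot _ h.2
  have htA : ∀ n, ∀ x ∈ closedBall q ρ, t n x ≤ A := by
    intro n x hx
    rw [← EReal.coe_le_coe_iff, hcoe n x hx]
    refine max_le (hA x hx) ?_
    rw [← EReal.coe_neg, EReal.coe_le_coe_iff]
    have : (0:ℝ) ≤ n := Nat.cast_nonneg n
    linarith
  have htn : ∀ n : ℕ, ∀ x ∈ closedBall q ρ, -(n:ℝ) ≤ t n x := by
    intro n x hx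
    rw [← EReal.coe_le_coe_iff, hcoe n x hx, EReal.coe_neg]
    exact le_max_right _ _
  have htu : ∀ n, ∀ x ∈ closedBall q ρ, u x ≤ t n x := by
    intro n x hx
    rw [hcoe n x hx]
    exact le_max_left _ _
  have hmt : ∀ n, Measurable ((closedBall q ρ).domRestrict (t n)) := by
    intro n
    have h1 : UpperSemicontinuous ((closedBall q ρ).domRestrict u) :=
      upperSemicontinuousOn_iff_restrict.2 husc'
    exact (h1.measurable.max measurable_const).ereal_toReal
  refine ⟨A + 1, fun n x => if x ∈ closedBall q ρ then A + 1 - t n x else 1, ?_, ?_, ?_, ?_, ?_, ?_⟩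
  · intro n
    apply measurable_of_restrict_of_restrict_compl (s := closedBall q ρ) measurableSet_closedBall
    · have : (closedBall q ρ).domRestrict ((fun (n : ℕ) x => if x ∈ closedBall q ρ then A + 1 - t n x else 1) n) =
          fun x => A + 1 - (closedBall q ρ).domRestrict (t n) x := by
        ext ⟨x, hx⟩
        simp only [domRestrict_apply, if_pos hx]
      rw [this]
      exact measurable_const.sub (hmt n)
    · have : (closedBall q ρ)ᶜ.domRestrict ((fun (n : ℕ) x => if x ∈ closedBall q ρ then A + 1 - t n x else 1) n) =
          fun x => 1 := by
        ext ⟨x, hx⟩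
        simp only [domRestrict_apply, if_neg hx]
      rw [this]
      exact measurable_const
  · intro n x
    simp only
    split_ifs with hx
    · linarith [htA n x hx]
    · exact le_rfl
  · intro n x
    simp only
    split_ifs with hx
    · linarith [htn n x hx]
    · have : (0:ℝ) ≤ n := Nat.cast_nonneg n
      linarith
  · intro n c R hR hcR
    have hc : c ∈ closedBall q ρ := hcR (mem_closedBall_self hR.le)
    have hcirc : ∀ θ : ℝ, c + R * Complex.exp (θ * Complex.I) ∈ closedBall q ρ := by
      intro θ
      apply hcR
      simp [dist_eq_norm, Complex.norm_exp_ofReal_mul_I, abs_of_pos hR]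
    simp only [hcirc, hc, if_true]
    have hmθ : Measurable fun θ : ℝ => t n (c + R * Complex.exp (θ * Complex.I)) := by
      have h2 : Measurable fun θ : ℝ => (⟨c + R * Complex.exp (θ * Complex.I), hcirc θ⟩ :
        closedBall q ρ) := Measurable.subtype_mk (by fun_prop)
      exact (hmt n).comp h2
    have hi : IntervalIntegrable (fun θ : ℝ => t n (c + R * Complex.exp (θ * Complex.I))) volume
        0 (2 * Real.pi) := by
      rw [intervalIntegrable_iff]
      refine Measure.integrableOn_of_bounded (M := A + n) (by simp [ENNReal.mul_eq_top]) hmθ.aestronglyMeasurable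
        (Eventually.of_forall fun θ => ?_)
      rw [Real.norm_eq_abs, abs_le]
      have : (0:ℝ) ≤ n := Nat.cast_nonneg n
      constructor
      · linarith [htn n _ (hcirc θ)]
      · linarith [htA n _ (hcirc θ)]
    rw [intervalIntegral.integral_sub (by simp) hi, intervalIntegral.integral_const]
    have hpi := Real.pi_pos
    have e1 : circleAvgTrunc u c R n = (2 * Real.pi)⁻¹ * ∫ θ in (0:ℝ)..(2 * Real.pi),
      t n (c + R * Complex.exp (θ * Complex.I)) := rfl
    have e2 : t n c ≤ circleAvgTrunc u c R n := by
      rw [← EReal.coe_le_coe_iff, hcoe n c hc]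
      apply max_le
      · exact (hmean c (hU hc) R hR (hcR.trans hU)).trans (iInf_le _ n)
      · rw [← EReal.coe_neg, EReal.coe_le_coe_iff, e1, ← div_eq_inv_mul, le_div_iff₀ (by positivity)]
        have := intervalIntegral.integral_mono_on (a := 0) (b := 2 * Real.pi) (μ := volume)
          (f := fun _ => -(n:ℝ)) (by positivity) (by simp) hi (fun θ _ => htn n _ (hcirc θ))
        rw [intervalIntegral.integral_const, smul_eq_mul] at this
        linarith
    rw [e1, ← div_eq_inv_mul, le_div_iff₀ (by positivity)] at e2
    rw [smul_eq_mul]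
    linarith
  · intro n x T hx hT hTn
    simp only [hx, if_true]
    have : t n x ≤ -T := by
      rw [← EReal.coe_le_coe_iff, hcoe n x hx]
      refine max_le hT ?_
      rw [← EReal.coe_neg, EReal.coe_le_coe_iff]
      linarith
    linarith
  · intro x hx hxb
    refine ⟨A + 1 - (u x).toReal, fun n => ?_⟩
    simp only [hx, if_true]
    have : (u x).toReal ≤ t n x := by
      rw [← EReal.coe_le_coe_iff, EReal.coe_toReal (htop x (hU hx)).ne hxb]
      exact htu n x hx
    linarith


lemma aux_null (u : ℂ → EReal) (U : Set ℂ) (hu : SubharmonicOn u U) (c : ℂ) (R : ℝ) (hR : 0 < R)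
    (hU : closedBall c R ⊆ U) (hc : u c ≠ ⊥) : volume ({x | u x = ⊥} ∩ ball c R) = 0 := by
  obtain ⟨C, b, hm, h1, hL, hsup, hT, hB⟩ := aux_trunc u U hu c R hR hU
  obtain ⟨B, hB⟩ := hB c (mem_closedBall_self hR.le) hc
  by_contra hne
  set X := ENNReal.ofReal R * (ENNReal.ofReal (2 * Real.pi * B) * ENNReal.ofReal R) with hX
  have hXt : X ≠ ⊤ := by
    rw [hX]; exact ENNReal.mul_ne_top ENNReal.ofReal_ne_top
      (ENNReal.mul_ne_top ENNReal.ofReal_ne_top ENNReal.ofReal_ne_top)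
  obtain ⟨n, hn⟩ := ENNReal.exists_nat_mul_gt hne hXt
  have hd := aux_disc (b n) (hm n) (C + n) (fun x => zero_le_one.trans (h1 n x)) (hL n) c R B (by
    intro s hs hsR
    refine (hsup n c s hs (closedBall_subset_closedBall hsR.le)).trans ?_
    have := hB n
    have := Real.pi_pos
    gcongr)
  have hk := mul_meas_ge_le_lintegral (μ := volume.restrict (ball c R))
    (hm n).ennreal_ofReal (n : ℝ≥0∞)
  have hsub : volume ({x | u x = ⊥} ∩ ball c R) ≤
      (volume.restrict (ball c R)) {x | (n : ℝ≥0∞) ≤ ENNReal.ofReal (b n x)} := by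
    rw [Measure.restrict_apply' measurableSet_ball]
    apply measure_mono
    rintro x ⟨hx, hxb⟩
    refine ⟨?_, hxb⟩
    show (n : ℝ≥0∞) ≤ ENNReal.ofReal (b n x)
    rw [← ENNReal.ofReal_natCast]
    apply ENNReal.ofReal_le_ofReal
    apply hT n x n (ball_subset_closedBall hxb) _ le_rfl
    rw [show u x = ⊥ from hx]; exact bot_le
  have := (mul_le_mul_right hsub (n : ℝ≥0∞)).trans (hk.trans hd)
  exact absurd hn (not_lt.2 this)

lemma aux_ball_not (S : Set ℂ) (z : ℂ) (s : ℝ) (hs : 0 < s) (h : volume (S ∩ ball z s) = 0) :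
    ∃ x ∈ ball z s, x ∉ S := by
  by_contra! hcon
  have : S ∩ ball z s = ball z s := inter_eq_right.2 hcon
  rw [this] at h
  exact (measure_ball_pos volume z hs).ne' h

lemma aux_cover (u : ℂ → EReal) (U : Set ℂ) (hu : SubharmonicOn u U) (hUo : IsOpen U)
    (hUc : IsConnected U) (hx : ∃ x ∈ U, u x ≠ ⊥) (p : ℂ) (hp : p ∈ U) :
    ∃ c R, 0 < R ∧ closedBall c R ⊆ U ∧ u c ≠ ⊥ ∧ p ∈ ball c R := by
  set V : Set ℂ := {z | ∃ c R, 0 < R ∧ closedBall c R ⊆ U ∧ u c ≠ ⊥ ∧ z ∈ ball c R} with hV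
  have hVo : IsOpen V := by
    rw [isOpen_iff_mem_nhds]
    rintro z ⟨c, R, h1, h2, h3, h4⟩
    filter_upwards [isOpen_ball.mem_nhds h4] with y hy
    exact ⟨c, R, h1, h2, h3, hy⟩
  suffices h : U ⊆ V from h hp
  apply hUc.isPreconnected.subset_of_closure_inter_subset hVo
  · obtain ⟨x, hxU, hx⟩ := hx
    obtain ⟨R, hR, hb⟩ := nhds_basis_closedBall.mem_iff.1 (hUo.mem_nhds hxU)
    exact ⟨x, hxU, x, R, hR, hb, hx, mem_ball_self hR⟩
  · rintro z ⟨hz, hzU⟩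
    obtain ⟨R, hR, hb⟩ := nhds_basis_closedBall.mem_iff.1 (hUo.mem_nhds hzU)
    rw [Metric.mem_closure_iff] at hz
    obtain ⟨y, ⟨c, ρ, h1, h2, h3, h4⟩, hy⟩ := hz (R / 4) (by positivity)
    obtain ⟨s, hs, hsb⟩ := Metric.mem_nhds_iff.1 (isOpen_ball.mem_nhds h4)
    have hn := aux_null u U hu c ρ h1 h2 h3
    obtain ⟨x, hxb, hxS⟩ := aux_ball_not {x | u x = ⊥} y (min s (R / 4))
      (lt_min hs (by positivity)) (measure_mono_null (inter_subset_inter_right _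
        ((ball_subset_ball (min_le_left _ _)).trans hsb)) hn)
    have hxy : dist x y < R / 4 := (mem_ball.1 hxb).trans_le (min_le_right _ _)
    have t := dist_triangle x y z
    rw [dist_comm y z] at t
    refine ⟨x, R / 2, by positivity, ?_, hxS, ?_⟩
    · refine (closedBall_subset_closedBall' ?_).trans hb
      linarith
    · rw [mem_ball, dist_comm]; linarith

lemma aux_local (u : ℂ → EReal) (U : Set ℂ) (hu : SubharmonicOn u U) (hUo : IsOpen U)
    (hUc : IsConnected U) (hx : ∃ x ∈ U, u x ≠ ⊥) (p : ℂ) (hp : p ∈ U) :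
    ∃ R' > 0, ball p R' ⊆ U ∧ volume ({x | u x = ⊥} ∩ ball p R') = 0 ∧ ∀ r, 0 < r → r < R' →
      ∀ K', IsCompact K' → K' ⊆ closedBall p r → (∀ x ∈ K', u x = ⊥) → GoodCut p r K' := by
  obtain ⟨c, R, hR, hU, hc, hpc⟩ := aux_cover u U hu hUo hUc hx p hp
  obtain ⟨R', hR', hb⟩ := Metric.mem_nhds_iff.1 (isOpen_ball.mem_nhds hpc)
  have hb' := hb.trans ball_subset_closedBall
  refine ⟨R', hR', hb'.trans hU, measure_mono_null (inter_subset_inter_right _ hb)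
    (aux_null u U hu c R hR hU hc), ?_⟩
  intro r hr hrR K' hK hKr hKu
  obtain ⟨C, b, hm, h1, hL, hsup, hT, hB⟩ := aux_trunc u U hu c R hR hU
  obtain ⟨B, hB⟩ := hB c (mem_closedBall_self hR.le) hc
  set X := ENNReal.ofReal R * (ENNReal.ofReal (2 * Real.pi * B) * ENNReal.ofReal R) with hX
  have hXt : X ≠ ⊤ := by
    rw [hX]; exact ENNReal.mul_ne_top ENNReal.ofReal_ne_top
      (ENNReal.mul_ne_top ENNReal.ofReal_ne_top ENNReal.ofReal_ne_top)
  apply aux_goodcut p r R' hr hrR K' hK X.toReal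
  intro T
  obtain ⟨n, hn⟩ := exists_nat_ge T
  refine ⟨b n, C + n, hm n, h1 n, hL n, ?_, ?_, ?_⟩
  · intro c' s hs hcs
    exact hsup n c' s hs (hcs.trans hb')
  · have hd := aux_disc (b n) (hm n) (C + n) (fun x => zero_le_one.trans (h1 n x)) (hL n) c R B (by
      intro s hs hsR
      refine (hsup n c s hs (closedBall_subset_closedBall hsR.le)).trans ?_
      have := hB n
      have := Real.pi_pos
      gcongr)
    rw [integral_eq_lintegral_of_nonneg_ae (Eventually.of_forall fun x => zero_le_one.trans (h1 n x))
      (hm n).aestronglyMeasurable]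
    exact ENNReal.toReal_mono hXt ((lintegral_mono_set hb).trans hd)
  · have key : ∀ x ∈ K', ∃ O, IsOpen O ∧ x ∈ O ∧ ∀ y ∈ O, T ≤ b n y := by
      intro x hx
      have hxp : x ∈ ball p R' := closedBall_subset_ball hrR (hKr hx)
      have h2 := upperSemicontinuousOn_iff.1 hu.1 x (hU (hb' hxp))
      rw [upperSemicontinuousWithinAt_iff] at h2
      have h3 := h2 ((-T : ℝ) : EReal) (by rw [hKu x hx]; exact EReal.bot_lt_coe _)
      rw [hUo.nhdsWithin_eq (hU (hb' hxp))] at h3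
      obtain ⟨O, hO, hOo, hxO⟩ := _root_.eventually_nhds_iff.1 h3
      refine ⟨O ∩ ball p R', hOo.inter isOpen_ball, ⟨hxO, hxp⟩, fun y hy => ?_⟩
      exact hT n y T (hb' hy.2) (hO y hy.1).le hn
    choose! O hO1 hO2 hO3 using key
    refine ⟨⋃ x ∈ K', O x, isOpen_biUnion hO1, fun x hx => mem_biUnion hx (hO2 x hx), ?_⟩
    intro y hy
    obtain ⟨x, hx, hy⟩ := mem_iUnion₂.1 hy
    exact hO3 x hx y hy


lemma aux_polar_null (K : Set ℂ) (hK : PolarSet K) : volume K = 0 := by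
  apply measure_null_of_locally_null
  intro p hp
  obtain ⟨U, hUo, hUc, hpU, u, hu, hx, hKu⟩ := hK p hp
  obtain ⟨R', hR', hbU, hnull, -⟩ := aux_local u U hu hUo hUc hx p hpU
  refine ⟨K ∩ ball p R', inter_mem_nhdsWithin K (ball_mem_nhds p hR'), measure_mono_null ?_ hnull⟩
  rintro x ⟨hx1, hx2⟩
  exact ⟨hKu x ⟨hx1, hbU hx2⟩, hx2⟩

lemma aux_neBot (K : Set ℂ) (hK : volume K = 0) (z : ℂ) : (𝓝[Kᶜ] z).NeBot := by
  rw [← mem_closure_iff_nhdsWithin_neBot, Metric.mem_closure_iff]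
  intro ε hε
  obtain ⟨x, hx, hxK⟩ := aux_ball_not K z ε hε (measure_mono_null inter_subset_left hK)
  exact ⟨x, hxK, by rw [dist_comm]; exact hx⟩

lemma aux_uniq (K : Set ℂ) (hK : volume K = 0) (z : ℂ) (F G : ℂ → ℂ) (hF : ContinuousAt F z)
    (hG : ContinuousAt G z) (h : ∀ᶠ x in 𝓝 z, x ∉ K → F x = G x) : F z = G z := by
  have := aux_neBot K hK z
  have h1 : Tendsto F (𝓝[Kᶜ] z) (𝓝 (F z)) := hF.tendsto.mono_left nhdsWithin_le_nhds
  have h2 : Tendsto G (𝓝[Kᶜ] z) (𝓝 (G z)) := hG.tendsto.mono_left nhdsWithin_le_nhds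
  refine tendsto_nhds_unique (h1.congr' ?_) h2
  rw [EventuallyEq, eventually_nhdsWithin_iff]
  exact h

lemma aux_extend (D : Set ℂ) (hopen : IsOpen D) (K : Set ℂ) (hKD : K ⊆ D)
    (hKc : IsCompact K) (hKp : PolarSet K) (f : ℂ → ℂ) (hf : f ∈ L2h (D \ K)) :
    ∃ F, DifferentiableOn ℂ F D ∧ EqOn F f (D \ K) := by
  classical
  have hK0 := aux_polar_null K hKp
  have hKcl := hKc.isClosed
  have hDK : IsOpen (D \ K) := hopen.sdiff hKcl
  have hint : IntegrableOn (fun z => ‖f z‖ ^ 2) (D \ K) := by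
    refine ⟨((hf.1.continuousOn.norm).pow 2).aestronglyMeasurable hDK.measurableSet, ?_⟩
    rw [HasFiniteIntegral]
    convert hf.2 using 3 with z
    rw [← ofReal_norm_eq_enorm, Real.norm_of_nonneg (by positivity),
      ENNReal.ofReal_pow (norm_nonneg _), ofReal_norm_eq_enorm]
    rfl
  have key : ∀ p ∈ K, ∃ δ > 0, ∃ G : ℂ → ℂ, ball p δ ⊆ D ∧ DifferentiableOn ℂ G (ball p δ) ∧
      EqOn G f (ball p δ \ K) := by
    intro p hp
    obtain ⟨U, hUo, hUc, hpU, u, hu, hx, hKu⟩ := hKp p hp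
    obtain ⟨R', hR', hbU, hnull, hcut⟩ := aux_local u U hu hUo hUc hx p hpU
    obtain ⟨R1, hR1, hb1⟩ := Metric.mem_nhds_iff.1 (hopen.mem_nhds (hKD hp))
    have hm : 0 < min R' R1 := lt_min hR' hR1
    set r := min R' R1 / 2 with hr
    have hr0 : 0 < r := by positivity
    have hrR' : r < R' := by have := min_le_left R' R1; linarith
    have hrR1 : r < R1 := by have := min_le_right R' R1; linarith
    have hbD : ball p r ⊆ D := (ball_subset_ball hrR1.le).trans hb1
    obtain ⟨δ, hδ, G, hG, hGf⟩ := aux_ext D K hKcl hK0 f hf.1 p r hr0 hbD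
      (hint.mono_set (diff_subset_diff_left hbD))
      (hcut r hr0 hrR' (K ∩ closedBall p r) (hKc.inter_right isClosed_closedBall)
        inter_subset_right (fun x hx => hKu x ⟨hx.1, hbU (closedBall_subset_ball hrR' hx.2)⟩))
    refine ⟨min δ r, lt_min hδ hr0, G, (ball_subset_ball (min_le_right _ _)).trans hbD,
      hG.mono (ball_subset_ball (min_le_left _ _)),
      hGf.mono (diff_subset_diff_left (ball_subset_ball (min_le_left _ _)))⟩
  choose! δ hδ G hGD hG hGf using key
  set F : ℂ → ℂ := fun z => if z ∈ K then G z z else f z with hF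
  have hFG : ∀ p ∈ K, EqOn F (G p) (ball p (δ p)) := by
    intro p hp z hz
    by_cases hzK : z ∈ K
    · simp only [hF, hzK, if_true]
      have n1 := isOpen_ball.mem_nhds hz
      have n2 := ball_mem_nhds z (hδ z hzK)
      apply aux_uniq K hK0 z _ _ ((hG z hzK).continuousOn.continuousAt n2)
        ((hG p hp).continuousOn.continuousAt n1)
      filter_upwards [n1, n2] with x h1 h2 hxK
      rw [hGf z hzK ⟨h2, hxK⟩, hGf p hp ⟨h1, hxK⟩]
    · simp only [hF, hzK, if_false]
      exact (hGf p hp ⟨hz, hzK⟩).symm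
  refine ⟨F, ?_, fun z hz => by simp only [hF, hz.2, if_false]⟩
  intro z hz
  apply DifferentiableAt.differentiableWithinAt
  by_cases hzK : z ∈ K
  · have n2 := ball_mem_nhds z (hδ z hzK)
    exact ((hG z hzK).differentiableAt n2).congr_of_eventuallyEq
      ((hFG z hzK).eventuallyEq_of_mem n2)
  · have n1 := hDK.mem_nhds ⟨hz, hzK⟩
    refine (hf.1.differentiableAt n1).congr_of_eventuallyEq ?_
    filter_upwards [n1] with x hx
    simp only [hF, hx.2, if_false]

/-- If `D̃ ⊆ ℂ` is a bounded domain and `K ⊆ D̃` is a compact polar set, then the restriction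
map `L²ₕ(D̃) → L²ₕ(D̃ \ K)` is a bijection (it is well defined, injective and surjective),
and consequently the Bergman kernels of `D̃` and `D̃ \ K` coincide on `D̃ \ K`. -/
theorem restriction_bijective_of_compact_polar (D : Set ℂ)
    (hopen : IsOpen D) (hconn : IsConnected D) (hbd : Bornology.IsBounded D)
    (K : Set ℂ) (hKD : K ⊆ D) (hKcompact : IsCompact K) (hKpolar : PolarSet K) :
    (∀ F ∈ L2h D, F ∈ L2h (D \ K)) ∧
    (∀ F ∈ L2h D, ∀ G ∈ L2h D, Set.EqOn F G (D \ K) → Set.EqOn F G D) ∧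
    (∀ f ∈ L2h (D \ K), ∃ F ∈ L2h D, Set.EqOn F f (D \ K)) ∧
    (∀ z ∈ D \ K, bergmanKernel (D \ K) z = bergmanKernel D z) := by
  have hK0 := aux_polar_null K hKpolar
  have hDK : IsOpen (D \ K) := hopen.sdiff hKcompact.isClosed
  have hres : volume.restrict (D \ K) = volume.restrict D :=
    Measure.restrict_congr_set (diff_null_ae_eq_self hK0)
  have h1 : ∀ F ∈ L2h D, F ∈ L2h (D \ K) := by
    rintro F ⟨hF, hF2⟩
    refine ⟨hF.mono diff_subset, ?_⟩
    rw [hres]; exact hF2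
  have h2 : ∀ F ∈ L2h D, ∀ G ∈ L2h D, Set.EqOn F G (D \ K) → Set.EqOn F G D := by
    intro F hF G hG h z hz
    have n := hopen.mem_nhds hz
    apply aux_uniq K hK0 z _ _ (hF.1.continuousOn.continuousAt n) (hG.1.continuousOn.continuousAt n)
    filter_upwards [n] with x hx hxK
    exact h ⟨hx, hxK⟩
  have hcong : ∀ F f : ℂ → ℂ, EqOn F f (D \ K) →
      ∫⁻ z in D, (‖F z‖₊ : ℝ≥0∞) ^ 2 = ∫⁻ z in D \ K, (‖f z‖₊ : ℝ≥0∞) ^ 2 := by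
    intro F f h
    rw [← hres]
    apply setLIntegral_congr_fun hDK.measurableSet
    intro x hx
    simp only [h hx]
  have h3 : ∀ f ∈ L2h (D \ K), ∃ F ∈ L2h D, Set.EqOn F f (D \ K) := by
    intro f hf
    obtain ⟨F, hF, hFf⟩ := aux_extend D hopen K hKD hKcompact hKpolar f hf
    refine ⟨F, ⟨hF, ?_⟩, hFf⟩
    rw [hcong F f hFf]; exact hf.2
  refine ⟨h1, h2, h3, ?_⟩
  intro z hz
  unfold bergmanKernel
  apply le_antisymm
  · refine iSup_le fun f => iSup_le fun hf => iSup_le fun ⟨w, hw, hfw⟩ => ?_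
    obtain ⟨F, hF, hFf⟩ := h3 f hf
    rw [← hcong F f hFf, ← hFf hz]
    exact le_iSup₂_of_le F hF (le_iSup_of_le ⟨w, hw.1, by rw [hFf hw]; exact hfw⟩ le_rfl)
  · refine iSup_le fun f => iSup_le fun hf => iSup_le fun ⟨w, hw, hfw⟩ => ?_
    rw [hcong f f (fun _ _ => rfl)]
    refine le_iSup₂_of_le f (h1 f hf) (le_iSup_of_le ?_ le_rfl)
    by_contra! hcon
    have h0 : (fun _ => 0 : ℂ → ℂ) ∈ L2h D := ⟨differentiableOn_const _, by simp⟩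
    exact hfw (h2 f hf _ h0 hcon hw)
end

section
/- Let D be a bounded domain in ℂ^n, let P̃ be a polydisc such that D ∩ P̃ is connected and nonempty, and assume that for every f ∈ L²_h(D) there exists a bounded holomorphic function f̂ on P̃ with f̂ = f on D ∩ P̃. Then there is a constant C > 0 such that ‖f̂‖_{H^∞(P̃)} ≤ C ‖f‖_{L²(D)} for every f ∈ L²_h(D); in particular sup_{z ∈ P̃ ∩ D} K_D(z) ≤ C² < ∞. -/
open MeasureTheory Filter Topology Metric Set
open scoped ENNReal NNReal

lemma aux_lim_diff {E : Type*} [NormedAddCommGroup E] [NormedSpace ℂ E]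
    {U : Set E} (hU : IsOpen U) {g : ℕ → E → ℂ} {f : E → ℂ}
    (hg : ∀ k, DifferentiableOn ℂ (g k) U) (hl : TendstoUniformlyOn g f atTop U) :
    DifferentiableOn ℂ f U := by
  intro z hz
  obtain ⟨ε, hε, hsub⟩ := Metric.isOpen_iff.1 hU z hz
  set R := ε / 2 with hR
  have hR0 : 0 < R := by positivity
  have hball : ∀ x ∈ ball z R, ball x R ⊆ U := fun x hx y hy => hsub (by
    simp only [mem_ball] at *
    linarith [dist_triangle y x z])
  have hcau : UniformCauchySeqOn (fun k => fderiv ℂ (g k)) atTop (ball z R) := by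
    rw [Metric.uniformCauchySeqOn_iff]
    intro δ hδ
    obtain ⟨N, hN⟩ := (Metric.uniformCauchySeqOn_iff.1 hl.uniformCauchySeqOn) (δ * R / 4) (by positivity)
    refine ⟨N, fun m hm n hn x hx => ?_⟩
    have hxU : x ∈ U := hball x hx (mem_ball_self hR0)
    have hd : ∀ k, DifferentiableAt ℂ (g k) x := fun k => (hg k).differentiableAt (hU.mem_nhds hxU)
    rw [dist_eq_norm, ← fderiv_sub (hd m) (hd n)]
    have := Complex.norm_fderiv_le_div_of_mapsTo_ball (f := g m - g n) (c := x) (R₁ := R) (R₂ := δ * R / 2)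
      (((hg m).sub (hg n)).mono (hball x hx)) (by
        intro y hy
        have h1 := hN m hm n hn y (hball x hx hy)
        have h2 := hN m hm n hn x hxU
        rw [dist_eq_norm] at h1 h2
        rw [mem_closedBall, dist_eq_norm]
        have := norm_sub_le ((g m - g n) y) ((g m - g n) x)
        simp only [Pi.sub_apply] at *
        linarith) hR0
    refine this.trans_lt ?_
    rw [div_lt_iff₀ hR0]
    nlinarith [mul_pos hδ hR0]
  have hlim : ∀ x ∈ ball z R, ∃ L, Tendsto (fun k => fderiv ℂ (g k) x) atTop (𝓝 L) := fun x hx =>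
    cauchySeq_tendsto_of_complete (hcau.cauchySeq hx)
  choose! L hL using hlim
  have hu := hcau.tendstoUniformlyOn_of_tendsto hL
  have := hasFDerivAt_of_tendstoUniformlyOn (g := f) isOpen_ball hu (fun k x hx =>
    ((hg k).differentiableAt (hU.mem_nhds (hball x hx (mem_ball_self hR0)))).hasFDerivAt)
    (fun x hx => hl.tendsto_at (hball x hx (mem_ball_self hR0))) (mem_ball_self hR0)
  exact this.differentiableAt.differentiableWithinAt

lemma aux_rot {n : ℕ} (a : ℂ) (ha : ‖a‖ = 1) (z : Fin n → ℂ) :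
    MeasurePreserving (fun v : Fin n → ℂ => z + a • v) := by
  have h1 : MeasurePreserving (fun v : Fin n → ℂ => a • v) := by
    have : ∀ i : Fin n, MeasurePreserving (fun w : ℂ => a * w) := fun i => by
      have := (rotation ⟨a, mem_sphere_zero_iff_norm.2 ha⟩).measurePreserving
      exact this
    exact volume_preserving_pi this
  exact (measurePreserving_add_left volume z).comp h1

lemma aux_bergman {n : ℕ} {D : Set (Fin n → ℂ)} (hD : IsOpen D) {f : (Fin n → ℂ) → ℂ}
    (hf : DifferentiableOn ℂ f D) {z : Fin n → ℂ} {r : ℝ} (hsub : ball z r ⊆ D) :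
    ‖f z‖ₑ * volume (ball (0 : Fin n → ℂ) r) ≤ ∫⁻ w in D, ‖f w‖ₑ := by
  classical
  set G : (Fin n → ℂ) → ℂ := D.piecewise f 0 with hG
  have hGm : Measurable G := hf.continuousOn.measurable_piecewise continuousOn_const hD.measurableSet
  have hGi : ∫⁻ w, ‖G w‖ₑ = ∫⁻ w in D, ‖f w‖ₑ := by
    rw [← lintegral_indicator hD.measurableSet]
    congr 1; ext w
    by_cases hw : w ∈ D <;> simp [hG, hw]
  have hpt : ∀ v ∈ ball (0 : Fin n → ℂ) r, ‖f z‖ₑ * ENNReal.ofReal (2 * Real.pi) ≤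
      ∫⁻ θ in Ioc 0 (2 * Real.pi), ‖G (z + circleMap 0 1 θ • v)‖ₑ := by
    intro v hv
    have hmem : ∀ l ∈ closedBall (0:ℂ) 1, z + l • v ∈ D := fun l hl => hsub (by
      simp only [mem_ball, dist_eq_norm, mem_closedBall, sub_zero, add_sub_cancel_left, norm_smul] at *
      nlinarith [norm_nonneg v])
    have hdc : DiffContOnCl ℂ (fun l : ℂ => f (z + l • v)) (ball 0 |1|) := by
      apply DifferentiableOn.diffContOnCl
      rw [abs_one, closure_ball _ one_ne_zero]
      exact hf.comp (by fun_prop) hmem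
    have := hdc.circleAverage
    rw [Real.circleAverage_def, intervalIntegral.integral_of_le (by positivity)] at this
    simp only [zero_smul, add_zero] at this
    have h2 : (2 * Real.pi) • f z = ∫ θ in Ioc 0 (2 * Real.pi), G (z + circleMap 0 1 θ • v) := by
      rw [← this, smul_smul, mul_inv_cancel₀ (by positivity), one_smul]
      congr 1; ext θ
      have : z + circleMap 0 1 θ • v ∈ D := hmem _ (by simp [circleMap])
      simp [hG, this]
    have h3 := enorm_integral_le_lintegral_enorm (μ := volume.restrict (Ioc 0 (2 * Real.pi)))
      (fun θ => G (z + circleMap 0 1 θ • v))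
    rw [← h2, enorm_smul, Real.enorm_of_nonneg (by positivity), mul_comm] at h3
    exact h3
  have hpi0 : ENNReal.ofReal (2 * Real.pi) ≠ 0 := by
    simp [Real.pi_pos]
  have hmain : (‖f z‖ₑ * volume (ball (0 : Fin n → ℂ) r)) * ENNReal.ofReal (2 * Real.pi) ≤
      (∫⁻ w in D, ‖f w‖ₑ) * ENNReal.ofReal (2 * Real.pi) := by
    calc _ = ∫⁻ v in ball (0 : Fin n → ℂ) r, ‖f z‖ₑ * ENNReal.ofReal (2 * Real.pi) := by
          rw [setLIntegral_const]; ring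
      _ ≤ ∫⁻ v in ball (0 : Fin n → ℂ) r, ∫⁻ θ in Ioc 0 (2 * Real.pi), ‖G (z + circleMap 0 1 θ • v)‖ₑ :=
          setLIntegral_mono' measurableSet_ball hpt
      _ ≤ ∫⁻ v, ∫⁻ θ in Ioc 0 (2 * Real.pi), ‖G (z + circleMap 0 1 θ • v)‖ₑ :=
          setLIntegral_le_lintegral _ _
      _ = ∫⁻ θ in Ioc 0 (2 * Real.pi), ∫⁻ v, ‖G (z + circleMap 0 1 θ • v)‖ₑ := by
          apply lintegral_lintegral_swap
          apply Measurable.aemeasurable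
          apply Measurable.enorm
          apply hGm.comp
          apply Continuous.measurable
          have := (continuous_circleMap 0 1)
          change Continuous (fun p : (Fin n → ℂ) × ℝ => z + circleMap 0 1 p.2 • p.1)
          fun_prop
      _ = ∫⁻ θ in Ioc 0 (2 * Real.pi), ∫⁻ v, ‖G v‖ₑ := by
          congr 1; ext θ
          exact (aux_rot (circleMap 0 1 θ) (by simp [circleMap]) z).lintegral_comp hGm.enorm
      _ = _ := by
          rw [setLIntegral_const, hGi]; simp
  exact (ENNReal.mul_le_mul_iff_left hpi0 ENNReal.ofReal_ne_top).1 hmain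

lemma aux_ident {E : Type*} [NormedAddCommGroup E] [NormedSpace ℂ E]
    {U V : Set E} (hU : IsOpen U) (hc : Convex ℝ U) (hV : IsOpen V) (hne : (V ∩ U).Nonempty)
    {g h : E → ℂ} (hg : DifferentiableOn ℂ g U) (hh : DifferentiableOn ℂ h U)
    (he : EqOn g h (V ∩ U)) : EqOn g h U := by
  intro z hz
  obtain ⟨w, hw⟩ := hne
  set A : ℂ → E := fun l => w + l • (z - w) with hA
  have hAd : Differentiable ℂ A := by fun_prop
  have hop : IsOpen (A ⁻¹' U) := hU.preimage hAd.continuous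
  have hconv : Convex ℝ (A ⁻¹' U) := by
    intro x hx y hy a b ha hb hab
    have : A (a • x + b • y) = a • A x + b • A y := by
      have hw' : w = a • w + b • w := by rw [← add_smul, hab, one_smul]
      simp only [hA, add_smul, smul_add, smul_assoc]
      nth_rw 1 [hw']
      abel
    rw [mem_preimage, this]
    exact hc hx hy ha hb hab
  have key := AnalyticOnNhd.eqOn_of_preconnected_of_eventuallyEq
    ((hg.comp hAd.differentiableOn (fun x hx => hx)).analyticOnNhd hop)
    ((hh.comp hAd.differentiableOn (fun x hx => hx)).analyticOnNhd hop)
    hconv.isPreconnected (z₀ := 0) (by change A 0 ∈ U; simpa [hA] using hw.2) (by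
      have : A ⁻¹' (V ∩ U) ∈ 𝓝 (0:ℂ) :=
        ((hV.inter hU).preimage hAd.continuous).mem_nhds (by rw [mem_preimage]; simpa [hA] using hw)
      filter_upwards [this] with l hl using he hl)
  have := key (x := 1) (by change A 1 ∈ U; simpa [hA] using hz)
  simpa [hA] using this

lemma aux_bound {n : ℕ} {D : Set (Fin n → ℂ)} (hD : IsOpen D) (hbd : Bornology.IsBounded D)
    {r : ℝ} (hr : 0 < r) : ∃ C > (0:ℝ), ∀ (z : Fin n → ℂ), ball z r ⊆ D → ∀ f : (Fin n → ℂ) → ℂ,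
      DifferentiableOn ℂ f D → ∀ F : Lp ℂ 2 (volume.restrict D), F =ᵐ[volume.restrict D] f →
      ‖f z‖ ≤ C * ‖F‖ := by
  have hfin : IsFiniteMeasure (volume.restrict D) := ⟨by
    rw [Measure.restrict_apply_univ]; exact hbd.measure_lt_top⟩
  set K : ℝ≥0∞ := (volume.restrict D) univ ^ (1 / (1:ℝ≥0∞).toReal - 1 / (2:ℝ≥0∞).toReal) with hK
  have hKt : K ≠ ⊤ := ENNReal.rpow_ne_top_of_nonneg (by norm_num) (measure_ne_top _ _)
  set B : ℝ≥0∞ := volume (ball (0 : Fin n → ℂ) r)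
  have hB0 : B ≠ 0 := (measure_ball_pos _ _ hr).ne'
  have hBt : B ≠ ⊤ := measure_ball_lt_top.ne
  refine ⟨(K / B).toReal + 1, by positivity, fun z hz f hf F hF => ?_⟩
  have h1 := aux_bergman hD hf hz
  have h2 : ∫⁻ w in D, ‖f w‖ₑ ≤ eLpNorm F 2 (volume.restrict D) * K := by
    rw [← eLpNorm_one_eq_lintegral_enorm, ← eLpNorm_congr_ae hF]
    exact eLpNorm_le_eLpNorm_mul_rpow_measure_univ (by norm_num) (Lp.aestronglyMeasurable F)
  have h3 : ‖f z‖ₑ ≤ K / B * ‖F‖ₑ := by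
    rw [Lp.enorm_def]
    calc ‖f z‖ₑ ≤ (eLpNorm F 2 (volume.restrict D) * K) / B :=
          (ENNReal.le_div_iff_mul_le (Or.inl hB0) (Or.inl hBt)).2 (h1.trans h2)
      _ = _ := by rw [div_eq_mul_inv, div_eq_mul_inv]; ring
  have h4 := ENNReal.toReal_mono (ENNReal.mul_ne_top (ENNReal.div_ne_top hKt hB0) (by simp)) h3
  rw [ENNReal.toReal_mul, toReal_enorm, toReal_enorm] at h4
  nlinarith [norm_nonneg F]

lemma aux_closed {n : ℕ} {D : Set (Fin n → ℂ)} (hD : IsOpen D) (hbd : Bornology.IsBounded D)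
    {F : ℕ → Lp ℂ 2 (volume.restrict D)} {F0 : Lp ℂ 2 (volume.restrict D)}
    (hF : Tendsto F atTop (𝓝 F0)) {f : ℕ → (Fin n → ℂ) → ℂ}
    (hf : ∀ k, DifferentiableOn ℂ (f k) D) (hFf : ∀ k, F k =ᵐ[volume.restrict D] f k) :
    ∃ f0 : (Fin n → ℂ) → ℂ, DifferentiableOn ℂ f0 D ∧ F0 =ᵐ[volume.restrict D] f0 ∧
      ∀ z ∈ D, Tendsto (fun k => f k z) atTop (𝓝 (f0 z)) := by
  have hcau : ∀ z ∈ D, ∃ s > 0, ball z s ⊆ D ∧ UniformCauchySeqOn f atTop (ball z s) := by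
    intro z hz
    obtain ⟨ε, hε, hsub⟩ := Metric.isOpen_iff.1 hD z hz
    have hball : ∀ x ∈ ball z (ε/2), ball x (ε/2) ⊆ D := fun x hx y hy => hsub (by
      simp only [mem_ball] at *
      linarith [dist_triangle y x z])
    obtain ⟨C, hC, hb⟩ := aux_bound hD hbd (half_pos hε)
    refine ⟨ε/2, half_pos hε, (ball_subset_ball (by linarith)).trans hsub, ?_⟩
    rw [Metric.uniformCauchySeqOn_iff]
    intro δ hδ
    obtain ⟨N, hN⟩ := Metric.cauchySeq_iff.1 hF.cauchySeq (δ / C) (by positivity)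
    refine ⟨N, fun k hk l hl x hx => ?_⟩
    have h1 := hN k hk l hl
    have h2 := hb x (hball x hx) (f k - f l) ((hf k).sub (hf l)) (F k - F l)
      ((Lp.coeFn_sub _ _).trans ((hFf k).sub (hFf l)))
    rw [dist_eq_norm] at h1 ⊢
    rw [lt_div_iff₀ hC] at h1
    simp only [Pi.sub_apply] at h2
    linarith
  have hlim : ∀ z ∈ D, ∃ L, Tendsto (fun k => f k z) atTop (𝓝 L) := fun z hz => by
    obtain ⟨s, hs, -, h⟩ := hcau z hz
    exact cauchySeq_tendsto_of_complete (h.cauchySeq (mem_ball_self hs))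
  choose! f0 hf0 using hlim
  refine ⟨f0, fun z hz => ?_, ?_, hf0⟩
  · obtain ⟨s, hs, hsD, h⟩ := hcau z hz
    have hu := h.tendstoUniformlyOn_of_tendsto (fun x hx => hf0 x (hsD hx))
    exact ((aux_lim_diff isOpen_ball (fun k => (hf k).mono hsD) hu).differentiableAt
      (ball_mem_nhds z hs)).differentiableWithinAt
  · obtain ⟨ns, hns, hae⟩ := (tendstoInMeasure_of_tendsto_Lp hF).exists_seq_tendsto_ae
    filter_upwards [hae, ae_all_iff.2 hFf, ae_restrict_mem hD.measurableSet] with x hx hx2 hxD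
    refine tendsto_nhds_unique hx ?_
    simp only [hx2]
    exact (hf0 x hxD).comp hns.tendsto_atTop

/-- square-integrable holomorphic functions inside `L²` -/
def auxX {n : ℕ} (D : Set (Fin n → ℂ)) : Submodule ℂ (Lp ℂ 2 (volume.restrict D)) where
  carrier := {F | ∃ f, DifferentiableOn ℂ f D ∧ F =ᵐ[volume.restrict D] f}
  zero_mem' := ⟨0, differentiableOn_const 0, Lp.coeFn_zero _ _ _⟩
  add_mem' := by
    rintro F G ⟨f, hf, hF⟩ ⟨g, hg, hG⟩
    exact ⟨f + g, hf.add hg, (Lp.coeFn_add _ _).trans (hF.add hG)⟩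
  smul_mem' := by
    rintro c F ⟨f, hf, hF⟩
    exact ⟨c • f, hf.const_smul c, (Lp.coeFn_smul _ _).trans (hF.const_smul c)⟩

/-- graph of the extension operator -/
def auxG {n : ℕ} (D P : Set (Fin n → ℂ)) :
    Submodule ℂ (Lp ℂ 2 (volume.restrict D) × BoundedContinuousFunction P ℂ) where
  carrier := {p | ∃ f g, DifferentiableOn ℂ f D ∧ p.1 =ᵐ[volume.restrict D] f ∧
    DifferentiableOn ℂ g P ∧ (∀ z : P, p.2 z = g z) ∧ EqOn g f (D ∩ P)}
  zero_mem' := ⟨0, 0, differentiableOn_const 0, Lp.coeFn_zero _ _ _, differentiableOn_const 0,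
    fun _ => rfl, fun _ _ => rfl⟩
  add_mem' := by
    rintro p q ⟨f, g, hf, hF, hg, hG, he⟩ ⟨f', g', hf', hF', hg', hG', he'⟩
    exact ⟨f + f', g + g', hf.add hf', (Lp.coeFn_add _ _).trans (hF.add hF'), hg.add hg',
      fun z => by simp [hG z, hG' z], fun z hz => by simp [he hz, he' hz]⟩
  smul_mem' := by
    rintro c p ⟨f, g, hf, hF, hg, hG, he⟩
    exact ⟨c • f, c • g, hf.const_smul c, (Lp.coeFn_smul _ _).trans (hF.const_smul c),
      hg.const_smul c, fun z => by simp [hG z], fun z hz => by simp [he hz]⟩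

lemma auxX_closed {n : ℕ} {D : Set (Fin n → ℂ)} (hD : IsOpen D) (hbd : Bornology.IsBounded D) :
    IsClosed (auxX D : Set (Lp ℂ 2 (volume.restrict D))) := by
  rw [← isSeqClosed_iff_isClosed]
  intro F F0 hF hl
  choose f hf hFf using hF
  obtain ⟨f0, h1, h2, -⟩ := aux_closed hD hbd hl hf hFf
  exact ⟨f0, h1, h2⟩

lemma auxG_closed {n : ℕ} {D P : Set (Fin n → ℂ)} (hD : IsOpen D) (hbd : Bornology.IsBounded D)
    (hP : IsOpen P) : IsClosed (auxG D P : Set (Lp ℂ 2 (volume.restrict D) × BoundedContinuousFunction P ℂ)) := by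
  classical
  rw [← isSeqClosed_iff_isClosed]
  intro p p0 hp hl
  choose f g hf hFf hg hG he using hp
  obtain ⟨f0, h1, h2, h3⟩ := aux_closed hD hbd ((continuous_fst.tendsto _).comp hl) hf hFf
  have hu := BoundedContinuousFunction.tendsto_iff_tendstoUniformly.1
    ((continuous_snd.tendsto _).comp hl)
  set g0 : (Fin n → ℂ) → ℂ := fun z => if hz : z ∈ P then p0.2 ⟨z, hz⟩ else 0 with hg0
  have hu' : TendstoUniformlyOn g g0 atTop P := by
    rw [Metric.tendstoUniformlyOn_iff]
    intro ε hε
    filter_upwards [Metric.tendstoUniformly_iff.1 hu ε hε] with k hk z hz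
    have := hk ⟨z, hz⟩
    simp only [Function.comp] at this
    rw [hG k ⟨z, hz⟩] at this
    simpa [hg0, hz] using this
  refine ⟨f0, g0, h1, h2, aux_lim_diff hP hg hu', fun z => by simp [hg0], fun z hz => ?_⟩
  refine tendsto_nhds_unique (hu'.tendsto_at hz.2) ?_
  refine (h3 z hz.1).congr fun k => (he k hz).symm

lemma aux_sq {n : ℕ} (D : Set (Fin n → ℂ)) (f : (Fin n → ℂ) → ℂ) :
    ∫⁻ w in D, (‖f w‖₊ : ℝ≥0∞) ^ 2 = eLpNorm f 2 (volume.restrict D) ^ 2 := by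
  have := eLpNorm_nnreal_pow_eq_lintegral (f := f) (μ := volume.restrict D) (p := 2) (by norm_num)
  simp only [NNReal.coe_ofNat, ENNReal.rpow_ofNat, ENNReal.coe_ofNat] at this
  rw [this]; rfl

/-- If every `f ∈ L²ₕ(D)` extends to a bounded holomorphic function on a polydisc `P̃` (with
`D ∩ P̃` connected and nonempty, so the extension is uniquely determined), then the extension
operator is bounded: there is `C > 0` with `‖f̂‖_{H^∞(P̃)} ≤ C ‖f‖_{L²(D)}`; in particular
`K_D ≤ C²` on `P̃ ∩ D`. -/
theorem bounded_extension_operator {n : ℕ} (D : Set (Fin n → ℂ))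
    (hopen : IsOpen D) (hconn : IsConnected D) (hbd : Bornology.IsBounded D)
    (c' : Fin n → ℂ) (r' : Fin n → ℝ) (hr' : ∀ i, 0 < r' i)
    (hDP : IsConnected (D ∩ polydisc c' r'))
    (hext : ∀ f ∈ L2h D, ∃ g : (Fin n → ℂ) → ℂ, DifferentiableOn ℂ g (polydisc c' r') ∧
      (∃ M : ℝ, ∀ z ∈ polydisc c' r', ‖g z‖ ≤ M) ∧ Set.EqOn g f (D ∩ polydisc c' r')) :
    ∃ C > (0 : ℝ),
      (∀ f ∈ L2h D, ∀ g : (Fin n → ℂ) → ℂ, DifferentiableOn ℂ g (polydisc c' r') →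
        Set.EqOn g f (D ∩ polydisc c' r') →
        ∀ z ∈ polydisc c' r',
          ‖g z‖ ≤ C * Real.sqrt ((∫⁻ w in D, (‖f w‖₊ : ℝ≥0∞) ^ 2).toReal)) ∧
      ∀ z ∈ polydisc c' r' ∩ D, bergmanKernel D z ≤ ENNReal.ofReal (C ^ 2) := by
  have hPeq : polydisc c' r' = univ.pi fun i => ball (c' i) (r' i) := by
    ext z; simp [polydisc, dist_eq_norm]
  have hPo : IsOpen (polydisc c' r') := by
    rw [hPeq]; exact isOpen_set_pi finite_univ fun i _ => isOpen_ball
  have hPc : Convex ℝ (polydisc c' r') := by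
    rw [hPeq]; exact convex_pi fun i _ => convex_ball _ _
  set P := polydisc c' r' with hPdef
  have : CompleteSpace (auxX D) := (auxX_closed hopen hbd).completeSpace_coe
  have : CompleteSpace (auxG D P) := (auxG_closed hopen hbd hPo).completeSpace_coe
  let L : auxG D P →L[ℂ] auxX D :=
    ((ContinuousLinearMap.fst ℂ _ _).comp (auxG D P).subtypeL).codRestrict (auxX D) (by
      rintro ⟨p, f, g, hf, hF, -⟩
      exact ⟨f, hf, hF⟩)
  have hL : Function.Surjective L := by
    rintro ⟨F, f, hf, hF⟩
    have hfm : f ∈ L2h D := ⟨hf, by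
      rw [aux_sq, ← eLpNorm_congr_ae hF]
      exact ENNReal.pow_lt_top (Lp.eLpNorm_lt_top F)⟩
    obtain ⟨g, hg, ⟨M, hM⟩, he⟩ := hext f hfm
    let h : BoundedContinuousFunction P ℂ := BoundedContinuousFunction.ofNormedAddCommGroup
      (fun z : P => g z) (continuousOn_iff_continuous_restrict.1 hg.continuousOn) M
      (fun z => hM z z.2)
    exact ⟨⟨(F, h), f, g, hf, hF, hg, fun z => rfl, he⟩, rfl⟩
  obtain ⟨C, hC, hb⟩ := L.exists_preimage_norm_le hL
  have main : ∀ f ∈ L2h D, ∀ g : (Fin n → ℂ) → ℂ, DifferentiableOn ℂ g P →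
        Set.EqOn g f (D ∩ P) → ∀ z ∈ P,
          ‖g z‖ ≤ C * Real.sqrt ((∫⁻ w in D, (‖f w‖₊ : ℝ≥0∞) ^ 2).toReal) := by
    intro f hf g hg he z hz
    have hmem : MemLp f 2 (volume.restrict D) := ⟨
      hf.1.continuousOn.aestronglyMeasurable hopen.measurableSet, by
        have h := hf.2
        rw [aux_sq] at h
        exact lt_of_not_ge fun h' => by simp [top_le_iff.1 h'] at h⟩
    obtain ⟨⟨p, f', g', hf', hF', hg', hG', he'⟩, hp, hn⟩ :=
      hb ⟨hmem.toLp f, f, hf.1, hmem.coeFn_toLp⟩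
    have hp1 : p.1 = hmem.toLp f := congrArg Subtype.val hp
    have hff : EqOn f' f D := by
      refine Measure.eqOn_open_of_ae_eq (μ := volume) ?_ hopen hf'.continuousOn hf.1.continuousOn
      exact hF'.symm.trans (hp1 ▸ hmem.coeFn_toLp)
    have hgg : EqOn g g' P := aux_ident hPo hPc hopen hDP.nonempty hg hg' fun w hw => by
      rw [he hw, he' hw, hff hw.1]
    have hnorm : ‖hmem.toLp f‖ = Real.sqrt ((∫⁻ w in D, (‖f w‖₊ : ℝ≥0∞) ^ 2).toReal) := by
      rw [Lp.norm_toLp, aux_sq, ENNReal.toReal_pow, Real.sqrt_sq ENNReal.toReal_nonneg]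
    rw [hgg hz, ← hG' ⟨z, hz⟩, ← hnorm]
    exact ((p.2.norm_coe_le_norm _).trans (norm_snd_le p)).trans hn
  refine ⟨C, hC, main, fun z hz => ?_⟩
  refine iSup_le fun f => iSup_le fun hf => iSup_le fun _ => ENNReal.div_le_of_le_mul ?_
  obtain ⟨g, hg, -, he⟩ := hext f hf
  have h1 := main f hf g hg he z hz.1
  rw [he ⟨hz.2, hz.1⟩] at h1
  set I := ∫⁻ w in D, (‖f w‖₊ : ℝ≥0∞) ^ 2 with hI
  have hIt : I ≠ ⊤ := hf.2.ne
  have h2 : ‖f z‖ ^ 2 ≤ C ^ 2 * I.toReal := by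
    calc ‖f z‖ ^ 2 ≤ (C * Real.sqrt I.toReal) ^ 2 := by gcongr
      _ = _ := by rw [mul_pow, Real.sq_sqrt ENNReal.toReal_nonneg]
  have h3 := ENNReal.ofReal_le_ofReal h2
  rw [ENNReal.ofReal_mul (by positivity), ENNReal.ofReal_toReal hIt,
    ENNReal.ofReal_pow (norm_nonneg _), ofReal_norm] at h3
  exact h3
end
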